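/- arXiv:1511.09056 — 2 statements merged into one kernel-verified Lean document; each statement's English description precedes it below -/
import Mathlib

section
/- Let f be a multicritical circle map with irrational rotation number. There exists a constant C > 1 depending only on f such that for all n ≥ 0 and for each pair of adjacent atoms I, J of the n-th dynamical partition P_n(c_k) associated to a critical point c_k of f, one has C^{−1}|J| ≤ |I| ≤ C|J|. -/
open Set Filter MeasureTheory

noncomputable section

/-- The Schwarzian derivative `Sf = (f''/f')' - (1/2) (f''/f')^2`. -/
def schwarzianDeriv (f : ℝ → ℝ) (x : ℝ) : ℝ :=
  deriv (fun y => deriv (deriv f) y / deriv f y) x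
    - (1 / 2) * (deriv (deriv f) x / deriv f x) ^ 2

/-- A multicritical circle map, described through its lift `F : ℝ → ℝ` to the real line.
It is an orientation-preserving `C^3` circle homeomorphism with finitely many critical
points `c 0, …, c (N-1)`, each of non-flat power-law type: near `c i` the derivative is
pinched between two multiples of `|x - c i| ^ (s i - 1)` with `s i > 1`, the Schwarzian
derivative is negative on a punctured neighborhood of each critical point, and
`log (F')` has bounded variation (bounded by `v`) off the critical neighborhoods. -/
structure MCM where
  /-- the lift of the circle map -/
  F : ℝ → ℝ
  smooth : ContDiff ℝ 3 F
  mono : StrictMono F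
  deg1 : ∀ x, F (x + 1) = F x + 1
  /-- number of critical points -/
  N : ℕ
  N_pos : 0 < N
  /-- the critical points (one representative in `[0,1)` for each) -/
  c : Fin N → ℝ
  c_mem : ∀ i, c i ∈ Set.Ico (0 : ℝ) 1
  c_inj : Function.Injective c
  isCrit : ∀ i, deriv F (c i) = 0
  critOnly : ∀ x, deriv F x = 0 → ∃ (i : Fin N) (k : ℤ), x = c i + (k : ℝ)
  /-- neighborhoods of the critical points -/
  W : Fin N → Set ℝ
  W_open : ∀ i, IsOpen (W i)
  c_mem_W : ∀ i, c i ∈ W i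
  /-- the criticalities (power-law exponents) -/
  s : Fin N → ℝ
  s_gt_one : ∀ i, 1 < s i
  al : Fin N → ℝ
  be : Fin N → ℝ
  al_pos : ∀ i, 0 < al i
  al_lt_be : ∀ i, al i < be i
  powerLaw : ∀ i, ∀ x ∈ W i, x ≠ c i →
    al i * |x - c i| ^ (s i - 1) < deriv F x ∧
      deriv F x < be i * |x - c i| ^ (s i - 1)
  negSchwarzian : ∀ i, ∀ x ∈ W i, x ≠ c i → schwarzianDeriv F x < 0
  /-- bound for the variation of `log DF` off the critical neighborhoods -/
  v : ℝ
  v_pos : 0 < v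
  logDF_var : eVariationOn (fun x => Real.log (deriv F x))
      (Set.Icc 0 1 \ ⋃ (i) (k : ℤ), (fun y => y + (k : ℝ)) '' W i) ≤ ENNReal.ofReal v

/-- The circle map with lift `F` has rotation number `ρ`. -/
def HasRotationNumber (F : ℝ → ℝ) (ρ : ℝ) : Prop :=
  Tendsto (fun n : ℕ => F^[n] 0 / n) atTop (nhds ρ)

/-- The Gauss map `x ↦ {1/x}`. -/
def gaussMap (x : ℝ) : ℝ := Int.fract x⁻¹

/-- Partial quotients `a_n` of the continued fraction expansion of `ρ ∈ (0,1)`. -/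
def cfDigit (ρ : ℝ) (n : ℕ) : ℕ := (⌊(gaussMap^[n] ρ)⁻¹⌋).toNat

/-- Return times: the denominators `q_n` of the convergents of `ρ`,
`q_0 = 1`, `q_1 = a_0`, `q_{n+1} = a_n q_n + q_{n-1}`. -/
def qDen (ρ : ℝ) : ℕ → ℕ
  | 0 => 1
  | 1 => cfDigit ρ 0
  | n + 2 => cfDigit ρ (n + 1) * qDen ρ (n + 1) + qDen ρ n

/-- Numerators `p_n` of the convergents of `ρ`:
`p_0 = 0`, `p_1 = 1`, `p_{n+1} = a_n p_n + p_{n-1}`. -/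
def pNum (ρ : ℝ) : ℕ → ℕ
  | 0 => 0
  | 1 => 1
  | n + 2 => cfDigit ρ (n + 1) * pNum ρ (n + 1) + pNum ρ n

/-- The lift of the atom `I_ℓ^j(x) = f^j(I_ℓ(x))`, where `I_ℓ(x)` is the interval with
endpoints `x` and `f^{q_ℓ}(x)`; the lift of `f^{q_ℓ}(x)` adjacent to `x` is
`F^[q_ℓ] x - p_ℓ`. -/
def atomSet (F : ℝ → ℝ) (ρ x : ℝ) (ℓ j : ℕ) : Set ℝ :=
  Set.uIcc (F^[j] x) (F^[j + qDen ρ ℓ] x - (pNum ρ ℓ : ℝ))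

/-- The length of the atom `I_ℓ^j(x)`. -/
def atomLen (F : ℝ → ℝ) (ρ x : ℝ) (ℓ j : ℕ) : ℝ :=
  |F^[j + qDen ρ ℓ] x - (pNum ρ ℓ : ℝ) - F^[j] x|

/-- The two endpoints (as lifts) of the atom `I_ℓ^j(x)`. -/
def atomEnds (F : ℝ → ℝ) (ρ x : ℝ) (ℓ j : ℕ) : Set ℝ :=
  {F^[j] x, F^[j + qDen ρ ℓ] x - (pNum ρ ℓ : ℝ)}

/-- `(ℓ, j)` indexes an atom of the `n`-th dynamical partition
`P_n(x) = {I_n^i(x) : i < q_{n+1}} ∪ {I_{n+1}^j(x) : j < q_n}`. -/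
def IsAtomIdx (ρ : ℝ) (n ℓ j : ℕ) : Prop :=
  (ℓ = n ∧ j < qDen ρ (n + 1)) ∨ (ℓ = n + 1 ∧ j < qDen ρ n)

/-- Two distinct atoms are adjacent when they share an endpoint on the circle,
i.e. when some endpoints of their lifts differ by an integer. -/
def AdjacentAtoms (F : ℝ → ℝ) (ρ x : ℝ) (ℓ₁ j₁ ℓ₂ j₂ : ℕ) : Prop :=
  (ℓ₁, j₁) ≠ (ℓ₂, j₂) ∧
    ∃ u ∈ atomEnds F ρ x ℓ₁ j₁, ∃ w ∈ atomEnds F ρ x ℓ₂ j₂, ∃ k : ℤ, w = u + (k : ℝ)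


/-! ### Continued fractions -/

/-- The displacement `q_n ρ - p_n`. -/
def thetaN (ρ : ℝ) (n : ℕ) : ℝ := (qDen ρ n : ℝ) * ρ - (pNum ρ n : ℝ)

lemma gauss_iter_irr {ρ : ℝ} (hirr : Irrational ρ) (hmem : ρ ∈ Ioo (0:ℝ) 1) (n : ℕ) :
    Irrational (gaussMap^[n] ρ) ∧ gaussMap^[n] ρ ∈ Ioo (0:ℝ) 1 := by
  induction n with
  | zero => exact ⟨hirr, hmem⟩
  | succ n ih =>
    obtain ⟨h1, h2⟩ := ih
    rw [Function.iterate_succ_apply']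
    set x := gaussMap^[n] ρ
    have hi : Irrational (gaussMap x) := by
      unfold gaussMap
      rw [Int.fract]
      exact (irrational_inv_iff.mpr h1).sub_intCast _
    refine ⟨hi, ?_, ?_⟩
    · have : 0 ≤ gaussMap x := Int.fract_nonneg _
      exact lt_of_le_of_ne this (fun h => hi.ne_zero h.symm)
    · exact Int.fract_lt_one _

lemma cfDigit_eq {ρ : ℝ} (hirr : Irrational ρ) (hmem : ρ ∈ Ioo (0:ℝ) 1) (n : ℕ) :
    (cfDigit ρ n : ℝ) = (gaussMap^[n] ρ)⁻¹ - gaussMap^[n+1] ρ := by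
  obtain ⟨h1, h2⟩ := gauss_iter_irr hirr hmem n
  rw [Function.iterate_succ_apply']
  unfold cfDigit gaussMap
  set x := (fun x : ℝ => Int.fract x⁻¹)^[n] ρ with hx
  change _ = x⁻¹ - Int.fract x⁻¹
  have h2' : x ∈ Ioo (0:ℝ) 1 := h2
  have h0 : 0 ≤ ⌊x⁻¹⌋ := Int.floor_nonneg.mpr (inv_nonneg.mpr h2'.1.le)
  have h3 : ((⌊x⁻¹⌋.toNat : ℤ) : ℝ) = (⌊x⁻¹⌋ : ℝ) := by
    rw [Int.toNat_of_nonneg h0]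
  have h4 : ((⌊x⁻¹⌋.toNat : ℕ) : ℝ) = (⌊x⁻¹⌋ : ℝ) := by
    rw [← h3]; norm_cast
  rw [Int.self_sub_fract]
  exact h4

lemma cfDigit_pos {ρ : ℝ} (hirr : Irrational ρ) (hmem : ρ ∈ Ioo (0:ℝ) 1) (n : ℕ) :
    1 ≤ cfDigit ρ n := by
  have h := cfDigit_eq hirr hmem n
  obtain ⟨h1, h2⟩ := gauss_iter_irr hirr hmem n
  obtain ⟨h3, h4⟩ := gauss_iter_irr hirr hmem (n+1)
  have : 1 < (gaussMap^[n] ρ)⁻¹ := (one_lt_inv₀ h2.1).mpr h2.2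
  have h5 : (0:ℝ) < cfDigit ρ n := by rw [h]; linarith [h4.2]
  exact_mod_cast h5

lemma qDen_pos {ρ : ℝ} (hirr : Irrational ρ) (hmem : ρ ∈ Ioo (0:ℝ) 1) (n : ℕ) :
    1 ≤ qDen ρ n ∧ qDen ρ n ≤ qDen ρ (n+1) := by
  induction n with
  | zero => exact ⟨le_rfl, by simpa [qDen] using cfDigit_pos hirr hmem 0⟩
  | succ n ih =>
    refine ⟨le_trans ih.1 ih.2, ?_⟩
    have h := cfDigit_pos hirr hmem (n+1)
    change _ ≤ cfDigit ρ (n + 1) * qDen ρ (n + 1) + qDen ρ n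
    nlinarith

lemma theta_succ {ρ : ℝ} (hirr : Irrational ρ) (hmem : ρ ∈ Ioo (0:ℝ) 1) (n : ℕ) :
    thetaN ρ (n+1) = - gaussMap^[n+1] ρ * thetaN ρ n := by
  induction n with
  | zero =>
    have h := cfDigit_eq hirr hmem 0
    have h0 : ρ ≠ 0 := hmem.1.ne'
    simp only [thetaN, qDen, pNum, zero_add] at *
    rw [h]
    simp
    field_simp
    ring
  | succ n ih =>
    have h := cfDigit_eq hirr hmem (n+1)
    have h0 := (gauss_iter_irr hirr hmem (n+1)).2.1.ne'
    have e : thetaN ρ (n+2) = cfDigit ρ (n+1) * thetaN ρ (n+1) + thetaN ρ n := by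
      simp only [thetaN, qDen, pNum]; push_cast; ring
    rw [e, h]
    have h2 : (gaussMap^[n+1] ρ)⁻¹ * thetaN ρ (n+1) = - thetaN ρ n := by
      rw [ih]; field_simp
    linear_combination h2

lemma theta_zero (ρ : ℝ) : thetaN ρ 0 = ρ := by simp [thetaN, qDen, pNum]

lemma theta_ne {ρ : ℝ} (hirr : Irrational ρ) (hmem : ρ ∈ Ioo (0:ℝ) 1) (n : ℕ) :
    thetaN ρ n ≠ 0 := by
  induction n with
  | zero => rw [theta_zero]; exact hmem.1.ne'
  | succ n ih =>
    rw [theta_succ hirr hmem]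
    exact mul_ne_zero (neg_ne_zero.mpr (gauss_iter_irr hirr hmem (n+1)).2.1.ne') ih

lemma theta_abs_lt {ρ : ℝ} (hirr : Irrational ρ) (hmem : ρ ∈ Ioo (0:ℝ) 1) (n : ℕ) :
    |thetaN ρ (n+1)| < |thetaN ρ n| := by
  rw [theta_succ hirr hmem, abs_mul, abs_neg]
  have h := (gauss_iter_irr hirr hmem (n+1)).2
  rw [abs_of_pos h.1]
  have := abs_pos.mpr (theta_ne hirr hmem n)
  nlinarith [h.2]

lemma theta_sign {ρ : ℝ} (hirr : Irrational ρ) (hmem : ρ ∈ Ioo (0:ℝ) 1) (n : ℕ) :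
    thetaN ρ n * thetaN ρ (n+1) < 0 := by
  rw [theta_succ hirr hmem]
  have h := (gauss_iter_irr hirr hmem (n+1)).2
  have := sq_pos_of_ne_zero (theta_ne hirr hmem n)
  nlinarith [mul_pos h.1 this]

lemma theta_le_one {ρ : ℝ} (hirr : Irrational ρ) (hmem : ρ ∈ Ioo (0:ℝ) 1) (n : ℕ) :
    |thetaN ρ n| ≤ 1 := by
  induction n with
  | zero => rw [theta_zero, abs_of_pos hmem.1]; exact hmem.2.le
  | succ n ih => exact (theta_abs_lt hirr hmem n).le.trans ih

lemma cf_det (ρ : ℝ) (n : ℕ) :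
    (qDen ρ n : ℤ) * pNum ρ (n+1) - qDen ρ (n+1) * pNum ρ n = (-1)^n := by
  induction n with
  | zero => simp [qDen, pNum]
  | succ n ih =>
    simp only [qDen, pNum]
    push_cast
    rw [pow_succ, ← ih]
    ring

/-- Best approximation property. -/
lemma best_approx {ρ : ℝ} (hirr : Irrational ρ) (hmem : ρ ∈ Ioo (0:ℝ) 1) (n : ℕ)
    (m k : ℤ) (hm : |m| < qDen ρ (n+1)) (hne : m ≠ 0 ∨ k ≠ 0) :
    |thetaN ρ n| ≤ |(m:ℝ) * ρ - k| := by
  obtain ⟨e, he⟩ : ∃ e : ℤ, e = (-1)^n := ⟨_, rfl⟩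
  have he2 : e * e = 1 := by rw [he, ← mul_pow]; simp
  have hdet := cf_det ρ n
  rw [← he] at hdet
  set q : ℤ := (qDen ρ n : ℤ) with hq
  set q' : ℤ := (qDen ρ (n+1) : ℤ) with hq'
  set p : ℤ := (pNum ρ n : ℤ) with hp
  set p' : ℤ := (pNum ρ (n+1) : ℤ) with hp'
  have hqpos : 1 ≤ q := by have := (qDen_pos hirr hmem n).1; omega
  have hqpos' : 1 ≤ q' := by have := (qDen_pos hirr hmem (n+1)).1; omega
  obtain ⟨u, hu⟩ : ∃ u : ℤ, u = e * (m * p' - k * q') := ⟨_, rfl⟩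
  obtain ⟨v, hv⟩ : ∃ v : ℤ, v = e * (q * k - p * m) := ⟨_, rfl⟩
  have hm' : m = u * q + v * q' := by
    rw [hu, hv]; linear_combination (-m) * he2 - m * e * hdet
  have hk' : k = u * p + v * p' := by
    rw [hu, hv]; linear_combination (-k) * he2 - k * e * hdet
  have hval : (m:ℝ) * ρ - k = u * thetaN ρ n + v * thetaN ρ (n+1) := by
    rw [hm', hk']
    simp only [thetaN]
    have e1 : ((q:ℤ):ℝ) = (qDen ρ n : ℝ) := by rw [hq]; norm_cast
    have e2 : ((q':ℤ):ℝ) = (qDen ρ (n+1) : ℝ) := by rw [hq']; norm_cast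
    have e3 : ((p:ℤ):ℝ) = (pNum ρ n : ℝ) := by rw [hp]; norm_cast
    have e4 : ((p':ℤ):ℝ) = (pNum ρ (n+1) : ℝ) := by rw [hp']; norm_cast
    push_cast
    rw [e1, e2, e3, e4]
    ring
  have hsgn := theta_sign hirr hmem n
  rw [hval]
  set s := thetaN ρ n
  set t := thetaN ρ (n+1)
  rw [abs_lt] at hm
  -- signs of u and v
  have huv : (v = 0 ∧ u ≠ 0) ∨ (1 ≤ u ∧ v ≤ -1) ∨ (u ≤ -1 ∧ 1 ≤ v) := by
    rcases lt_trichotomy v 0 with h | h | h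
    · right; left
      refine ⟨?_, by omega⟩
      by_contra hc
      have : u ≤ 0 := by omega
      nlinarith
    · left
      refine ⟨h, ?_⟩
      rintro rfl
      rw [h] at hm' hk'
      simp at hm' hk'
      omega
    · right; right
      refine ⟨?_, by omega⟩
      by_contra hc
      have : 0 ≤ u := by omega
      nlinarith
  have hcast : ∀ a b : ℤ, a ≤ b → (a:ℝ) ≤ b := fun a b h => by exact_mod_cast h
  rcases huv with ⟨h, h'⟩ | ⟨h, h'⟩ | ⟨h, h'⟩
  · rw [h]; simp only [Int.cast_zero, zero_mul, add_zero]
    rw [abs_mul]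
    have : (1:ℝ) ≤ |(u:ℝ)| := by
      have := Int.one_le_abs h'
      exact_mod_cast this
    nlinarith [abs_nonneg s]
  · have h1 := hcast _ _ h
    have h2 := hcast _ _ h'
    push_cast at h1 h2
    rcases lt_or_gt_of_ne (theta_ne hirr hmem n) with hs | hs
    · have ht : 0 < t := by by_contra hc; nlinarith
      rw [abs_of_neg hs]
      refine le_trans ?_ (neg_le_abs _)
      nlinarith
    · have ht : t < 0 := by by_contra hc; nlinarith
      rw [abs_of_pos hs]
      refine le_trans ?_ (le_abs_self _)
      nlinarith
  · have h1 := hcast _ _ h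
    have h2 := hcast _ _ h'
    push_cast at h1 h2
    rcases lt_or_gt_of_ne (theta_ne hirr hmem n) with hs | hs
    · have ht : 0 < t := by by_contra hc; nlinarith
      rw [abs_of_neg hs]
      refine le_trans ?_ (le_abs_self _)
      nlinarith
    · have ht : t < 0 := by by_contra hc; nlinarith
      rw [abs_of_pos hs]
      refine le_trans ?_ (neg_le_abs _)
      nlinarith

lemma one_le_q_theta {ρ : ℝ} (hirr : Irrational ρ) (hmem : ρ ∈ Ioo (0:ℝ) 1) (n : ℕ) :
    1 ≤ 2 * (qDen ρ (n+1) : ℝ) * |thetaN ρ n| := by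
  have hdet := cf_det ρ n
  have h1 : (qDen ρ (n+1) : ℝ) * thetaN ρ n - qDen ρ n * thetaN ρ (n+1) = (-1)^n := by
    have : ((qDen ρ n : ℝ) * pNum ρ (n+1) - qDen ρ (n+1) * pNum ρ n) = (-1)^n := by
      exact_mod_cast hdet
    rw [← this]; simp only [thetaN]; ring
  have h2 : |(qDen ρ (n+1) : ℝ) * thetaN ρ n - qDen ρ n * thetaN ρ (n+1)| = 1 := by
    rw [h1]; simp
  have h3 := abs_sub ((qDen ρ (n+1) : ℝ) * thetaN ρ n) (qDen ρ n * thetaN ρ (n+1))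
  rw [h2, abs_mul, abs_mul, Nat.abs_cast, Nat.abs_cast] at h3
  have h4 : (qDen ρ n : ℝ) ≤ qDen ρ (n+1) := by exact_mod_cast (qDen_pos hirr hmem n).2
  have h5 := theta_abs_lt hirr hmem n
  have h6 : (qDen ρ n : ℝ) * |thetaN ρ (n+1)| ≤ qDen ρ (n+1) * |thetaN ρ n| :=
    mul_le_mul h4 h5.le (abs_nonneg _) (Nat.cast_nonneg _)
  linarith

/-- Coverage: the first `q_{n+1}` points of an orbit of the rotation are `4 δ_n`-dense. -/
lemma coverage {ρ : ℝ} (hirr : Irrational ρ) (hmem : ρ ∈ Ioo (0:ℝ) 1) (n : ℕ) (α : ℝ) :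
    ∃ i : ℕ, i ≤ qDen ρ (n+1) ∧ ∃ k : ℤ,
      0 ≤ α + i * ρ - k ∧ α + i * ρ - k ≤ 4 * |thetaN ρ n| := by
  have hdet := cf_det ρ n
  obtain ⟨e, he⟩ : ∃ e : ℤ, e = (-1)^n := ⟨_, rfl⟩
  have he2 : e * e = 1 := by rw [he, ← mul_pow]; simp
  rw [← he] at hdet
  have hqN := (qDen_pos hirr hmem (n+1)).1
  have hq1 : (1:ℝ) ≤ qDen ρ (n+1) := by exact_mod_cast hqN
  have h12 := one_le_q_theta hirr hmem n
  have hlt := theta_abs_lt hirr hmem n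
  have hq : (qDen ρ (n+1) : ℝ) * ρ = pNum ρ (n+1) + thetaN ρ (n+1) := by simp [thetaN]
  set q := qDen ρ (n+1) with hqdef
  set δ := |thetaN ρ n|
  set t := thetaN ρ (n+1)
  obtain ⟨r, hr⟩ : ∃ r : ℤ, r = ⌈-((α - δ) * q)⌉ := ⟨_, rfl⟩
  have hr1 : -((α - δ) * q) ≤ r := by rw [hr]; exact Int.le_ceil _
  have hr2 : (r:ℝ) < -((α - δ) * q) + 1 := by rw [hr]; exact Int.ceil_lt_add_one _
  -- i ≡ e * r * q_n  mod q
  obtain ⟨j, hj⟩ : ∃ j : ℤ, j = e * r * qDen ρ n := ⟨_, rfl⟩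
  have hqz : (0:ℤ) < q := by omega
  have hj0 := Int.emod_nonneg j hqz.ne'
  have hj1 := Int.emod_lt_of_pos j hqz
  have hj2 := Int.emod_add_mul_ediv j q
  obtain ⟨i, hi⟩ : ∃ i : ℕ, (i:ℤ) = j % q := ⟨(j % q).toNat, Int.toNat_of_nonneg hj0⟩
  obtain ⟨k, hk⟩ : ∃ k : ℤ, (i:ℤ) * pNum ρ (n+1) - k * q = r := by
    refine ⟨e * r * pNum ρ n - (j / q) * pNum ρ (n+1), ?_⟩
    rw [hi]
    have : j % q = j - q * (j / q) := by linarith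
    rw [this, hj]
    linear_combination r * he2 + e * r * hdet
  have hik : (i:ℝ) ≤ q := by
    have : (i:ℤ) ≤ q := by rw [hi]; exact hj1.le
    exact_mod_cast this
  have hk' : (i:ℝ) * pNum ρ (n+1) - k * q = r := by exact_mod_cast hk
  refine ⟨i, by exact_mod_cast hik, k, ?_⟩
  have hi0 : (0:ℝ) ≤ i := Nat.cast_nonneg _
  -- q * value = α q + r + i t
  have hval : q * (α + i * ρ - k) = α * q + r + i * t := by
    rw [← hk']; linear_combination (i:ℝ) * hq
  have ht : |(i:ℝ) * t| ≤ q * δ := by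
    rw [abs_mul, Nat.abs_cast]
    exact mul_le_mul hik hlt.le (abs_nonneg _) (by linarith)
  rw [abs_le] at ht
  have hqp : (0:ℝ) < q := by linarith
  constructor
  · have : 0 ≤ q * (α + i * ρ - k) := by rw [hval]; nlinarith
    exact nonneg_of_mul_nonneg_right this hqp
  · have : q * (α + i * ρ - k) ≤ q * (4 * δ) := by rw [hval]; nlinarith
    exact le_of_mul_le_mul_left this hqp



/-! ### Cross ratios and negative Schwarzian derivative -/

/-- The cross ratio `|L||R| / (|L ∪ M||M ∪ R|)`. -/
def cr (a b c d : ℝ) : ℝ := (|b - a| * |d - c|) / (|c - a| * |d - b|)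

lemma cr_of_lt {a b c d : ℝ} (h1 : a < b) (h2 : b < c) (h3 : c < d) :
    cr a b c d = ((b - a) * (d - c)) / ((c - a) * (d - b)) := by
  unfold cr
  rw [abs_of_pos (by linarith), abs_of_pos (by linarith), abs_of_pos (by linarith),
    abs_of_pos (by linarith)]

lemma cr_rev (a b c d : ℝ) : cr d c b a = cr a b c d := by
  unfold cr
  rw [abs_sub_comm c d, abs_sub_comm a b, abs_sub_comm b d, abs_sub_comm a c]
  ring

lemma cr_nonneg (a b c d : ℝ) : 0 ≤ cr a b c d := by unfold cr; positivity

lemma two_point {F : ℝ → ℝ} {D : Set ℝ} (hF : ∀ t ∈ D, HasDerivAt F (deriv F t) t)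
    (hpos : ∀ t ∈ D, 0 < deriv F t)
    (hconv : ConvexOn ℝ D (fun t => (√(deriv F t))⁻¹)) {x y : ℝ}
    (hx : x ∈ D) (hy : y ∈ D) (hxy : x < y) :
    deriv F x * deriv F y * (y - x)^2 ≤ (F y - F x)^2 := by
  set A := (√(deriv F x))⁻¹ with hA
  set B := (√(deriv F y))⁻¹ with hB
  have hsub : Icc x y ⊆ D := by
    rw [← segment_eq_Icc hxy.le]
    exact hconv.1.segment_subset hx hy
  have hA0 : 0 < A := inv_pos.mpr (Real.sqrt_pos.mpr (hpos x hx))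
  have hB0 : 0 < B := inv_pos.mpr (Real.sqrt_pos.mpr (hpos y hy))
  have hA2 : deriv F x = (A^2)⁻¹ := by
    rw [hA, inv_pow, Real.sq_sqrt (hpos x hx).le, inv_inv]
  have hB2 : deriv F y = (B^2)⁻¹ := by
    rw [hB, inv_pow, Real.sq_sqrt (hpos y hy).le, inv_inv]
  -- linear interpolation
  obtain ⟨l, hl⟩ : ∃ l : ℝ → ℝ, l = fun t => A + (B - A) / (y - x) * (t - x) := ⟨_, rfl⟩
  have hyx : 0 < y - x := by linarith
  have hlpos : ∀ t ∈ Icc x y, 0 < l t := by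
    intro t ht
    have : l t = (A * (y - t) + B * (t - x)) / (y - x) := by
      rw [hl]; field_simp; ring
    rw [this]
    apply div_pos _ hyx
    rcases eq_or_lt_of_le ht.1 with h | h
    · subst h; nlinarith
    · have := mul_pos hB0 (sub_pos.mpr h)
      have := mul_nonneg hA0.le (sub_nonneg.mpr ht.2)
      linarith
  have hvl : ∀ t ∈ Icc x y, (√(deriv F t))⁻¹ ≤ l t := by
    intro t ht
    have h := hconv.2 hx hy
      (show 0 ≤ (y - t)/(y - x) from div_nonneg (by linarith [ht.2]) hyx.le)
      (show 0 ≤ (t - x)/(y - x) from div_nonneg (by linarith [ht.1]) hyx.le)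
      (by field_simp; ring)
    have e1 : ((y - t)/(y - x)) • x + ((t - x)/(y - x)) • y = t := by
      simp only [smul_eq_mul]; field_simp; ring
    rw [e1] at h
    refine h.trans (le_of_eq ?_)
    simp only [smul_eq_mul]
    rw [hl]
    change (y - t) / (y - x) * A + (t - x) / (y - x) * B = _
    field_simp; ring
  have hderiv : ∀ t ∈ Icc x y, HasDerivAt (fun t => F t - (t - x) / (A * l t))
      (deriv F t - 1 / (l t)^2) t := by
    intro t ht
    have hlt := hlpos t ht
    have h1 : HasDerivAt l ((B - A) / (y - x)) t := by
      rw [hl]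
      have := (((hasDerivAt_id t).sub_const x).const_mul ((B - A) / (y - x))).const_add A
      simpa using this
    have h2 := ((hasDerivAt_id t).sub_const x).div (h1.const_mul A) (by positivity)
    have h3 := (hF t (hsub ht)).sub h2
    refine h3.congr_deriv ?_
    have : l t = A + (B - A) / (y - x) * (t - x) := by rw [hl]
    have e : (B - A) / (y - x) * (t - x) = l t - A := by linarith
    congr 1
    simp only [id]
    rw [div_eq_div_iff (by positivity) (by positivity)]
    linear_combination (-(l t)^2 * A) * e
  have hmono : MonotoneOn (fun t => F t - (t - x) / (A * l t)) (Icc x y) := by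
    apply monotoneOn_of_hasDerivWithinAt_nonneg (convex_Icc x y)
      (fun t ht => (hderiv t ht).continuousAt.continuousWithinAt)
      (fun t ht => (hderiv t (interior_subset ht)).hasDerivWithinAt)
    intro t ht
    have ht := interior_subset ht
    have h1 := hvl t ht
    have h2 := hpos t (hsub ht)
    have h3 := Real.sqrt_pos.mpr h2
    rw [sub_nonneg, div_le_iff₀ (pow_pos (hlpos t ht) 2)]
    have h4 : 1 ≤ l t * √(deriv F t) := by
      rwa [inv_le_iff_one_le_mul₀ h3] at h1
    have h5 := Real.sq_sqrt h2.le
    have : (l t * √(deriv F t))^2 = deriv F t * (l t)^2 := by rw [mul_pow, h5]; ring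
    rw [← this]
    nlinarith
  have hfin := hmono (left_mem_Icc.mpr hxy.le) (right_mem_Icc.mpr hxy.le) hxy.le
  have hly : l y = B := by rw [hl]; field_simp; ring
  simp only [sub_self, zero_div, sub_zero, hly] at hfin
  have h6 : (y - x) / (A * B) ≤ F y - F x := by linarith
  have h7 : 0 ≤ (y - x) / (A * B) := by positivity
  rw [hA2, hB2]
  calc (A^2)⁻¹ * (B^2)⁻¹ * (y - x)^2 = ((y - x) / (A * B))^2 := by field_simp
    _ ≤ (F y - F x)^2 := pow_le_pow_left₀ h7 h6 2

lemma cr_contract {F : ℝ → ℝ} {D : Set ℝ} (hF : ∀ t ∈ D, HasDerivAt F (deriv F t) t)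
    (hpos : ∀ t ∈ D, 0 < deriv F t) (hmonoF : StrictMono F)
    (hconv : ConvexOn ℝ D (fun t => (√(deriv F t))⁻¹)) {a b c d : ℝ}
    (ha : a ∈ D) (hd : d ∈ D) (h1 : a < b) (h2 : b < c) (h3 : c < d) :
    cr (F a) (F b) (F c) (F d) ≤ cr a b c d := by
  have hsub : Icc a d ⊆ D := by
    rw [← segment_eq_Icc (by linarith)]
    exact hconv.1.segment_subset ha hd
  have hκ : ∀ x ∈ Icc a b, deriv F x / (F c - F x) - 1 / (c - x)
      ≤ deriv F x / (F d - F x) - 1 / (d - x) := by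
    intro x hx
    have hxD : x ∈ D := hsub ⟨hx.1, by linarith [hx.2]⟩
    have hder : ∀ y ∈ Icc c d, HasDerivAt (fun y => deriv F x / (F y - F x) - 1 / (y - x))
        (- (deriv F x * deriv F y) / (F y - F x)^2 + 1 / (y - x)^2) y := by
      intro y hy
      have hxy : x < y := by linarith [hx.2, hy.1]
      have hyD : y ∈ D := hsub ⟨by linarith [hx.1], hy.2⟩
      have e1 : F y - F x ≠ 0 := (sub_pos.mpr (hmonoF hxy)).ne'
      have e2 : y - x ≠ 0 := (sub_pos.mpr hxy).ne'
      have g1 := (hasDerivAt_const y (deriv F x)).div ((hF y hyD).sub_const (F x)) e1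
      have g2 := (hasDerivAt_const y (1:ℝ)).div ((hasDerivAt_id y).sub_const x) e2
      refine (g1.sub g2).congr_deriv ?_
      simp only [id]
      ring
    have hm : MonotoneOn (fun y => deriv F x / (F y - F x) - 1 / (y - x)) (Icc c d) := by
      apply monotoneOn_of_hasDerivWithinAt_nonneg (convex_Icc c d)
        (fun t ht => (hder t ht).continuousAt.continuousWithinAt)
        (fun t ht => (hder t (interior_subset ht)).hasDerivWithinAt)
      intro y hy
      have hy := interior_subset hy
      have hxy : x < y := by linarith [hx.2, hy.1]
      have hyD : y ∈ D := hsub ⟨by linarith [hx.1], hy.2⟩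
      have ht := two_point hF hpos hconv hxD hyD hxy
      have e1 : 0 < F y - F x := (sub_pos.mpr (hmonoF hxy))
      have e2 : 0 < y - x := (sub_pos.mpr hxy)
      have : deriv F x * deriv F y / (F y - F x)^2 ≤ 1 / (y - x)^2 := by
        rw [div_le_div_iff₀ (by positivity) (by positivity)]
        linarith
      rw [neg_div]; linarith
    exact hm (left_mem_Icc.mpr h3.le) (right_mem_Icc.mpr h3.le) h3.le
  have hder : ∀ x ∈ Icc a b, HasDerivAt
      (fun x => Real.log (F c - F x) - Real.log (c - x)
        - (Real.log (F d - F x) - Real.log (d - x)))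
      (-(deriv F x / (F c - F x) - 1 / (c - x)) + (deriv F x / (F d - F x) - 1 / (d - x))) x := by
    intro x hx
    have hxD : x ∈ D := hsub ⟨hx.1, by linarith [hx.2]⟩
    have hxc : x < c := by linarith [hx.2]
    have hxd : x < d := by linarith [hx.2]
    have e1 : F c - F x ≠ 0 := (sub_pos.mpr (hmonoF hxc)).ne'
    have e2 : c - x ≠ 0 := (sub_pos.mpr hxc).ne'
    have e3 : F d - F x ≠ 0 := (sub_pos.mpr (hmonoF hxd)).ne'
    have e4 : d - x ≠ 0 := (sub_pos.mpr hxd).ne'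
    have g1 := ((hF x hxD).const_sub (F c)).log e1
    have g2 := ((hasDerivAt_id x).const_sub c).log e2
    have g3 := ((hF x hxD).const_sub (F d)).log e3
    have g4 := ((hasDerivAt_id x).const_sub d).log e4
    refine ((g1.sub g2).sub (g3.sub g4)).congr_deriv ?_
    simp only [id]
    ring
  have hm : MonotoneOn (fun x => Real.log (F c - F x) - Real.log (c - x)
        - (Real.log (F d - F x) - Real.log (d - x))) (Icc a b) := by
    apply monotoneOn_of_hasDerivWithinAt_nonneg (convex_Icc a b)
      (fun t ht => (hder t ht).continuousAt.continuousWithinAt)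
      (fun t ht => (hder t (interior_subset ht)).hasDerivWithinAt)
    intro x hx
    have := hκ x (interior_subset hx)
    linarith
  have hfin := hm (left_mem_Icc.mpr h1.le) (right_mem_Icc.mpr h1.le) h1.le
  simp only at hfin
  have hac : a < c := by linarith
  have had : a < d := by linarith
  have hbd : b < d := by linarith
  have p1 : 0 < F c - F a := sub_pos.mpr (hmonoF hac)
  have p2 : 0 < F d - F a := sub_pos.mpr (hmonoF had)
  have p3 : 0 < F c - F b := sub_pos.mpr (hmonoF h2)
  have p4 : 0 < F d - F b := sub_pos.mpr (hmonoF hbd)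
  have q1 : 0 < c - a := sub_pos.mpr hac
  have q2 : 0 < d - a := sub_pos.mpr had
  have q3 : 0 < c - b := sub_pos.mpr h2
  have q4 : 0 < d - b := sub_pos.mpr hbd
  have hlog : Real.log (((F c - F a) * (F d - F b)) * ((c - b) * (d - a)))
      ≤ Real.log (((c - a) * (d - b)) * ((F c - F b) * (F d - F a))) := by
    rw [Real.log_mul (by positivity) (by positivity), Real.log_mul (by positivity) (by positivity),
      Real.log_mul (by positivity) (by positivity), Real.log_mul (by positivity) (by positivity),
      Real.log_mul (by positivity) (by positivity), Real.log_mul (by positivity) (by positivity)]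
    linarith
  have hprod := (Real.log_le_log_iff (by positivity) (by positivity)).mp hlog
  rw [cr_of_lt (hmonoF h1) (hmonoF h2) (hmonoF h3), cr_of_lt h1 h2 h3,
    div_le_div_iff₀ (by positivity) (by positivity)]
  have e1 : (F b - F a) * (F d - F c) = (F c - F a) * (F d - F b) - (F c - F b) * (F d - F a) := by
    ring
  have e2 : (b - a) * (d - c) = (c - a) * (d - b) - (c - b) * (d - a) := by ring
  rw [e1, e2]
  nlinarith

lemma schwarz_convex {F : ℝ → ℝ} (hF : ContDiff ℝ 3 F) {α β : ℝ}
    (hpos : ∀ t ∈ Ioo α β, 0 < deriv F t)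
    (hS : ∀ t ∈ Ioo α β, schwarzianDeriv F t < 0) :
    ConvexOn ℝ (Ioo α β) (fun t => (√(deriv F t))⁻¹) := by
  have hF1 : ContDiff ℝ 2 (deriv F) := by
    have : ContDiff ℝ (2 + 1) F := by norm_num; exact hF
    exact (contDiff_succ_iff_deriv.mp this).2.2
  have hF2 : ContDiff ℝ 1 (deriv (deriv F)) := by
    have : ContDiff ℝ (1 + 1) (deriv F) := by norm_num; exact hF1
    exact (contDiff_succ_iff_deriv.mp this).2.2
  have d1 : ∀ t, HasDerivAt (deriv F) (deriv (deriv F) t) t := fun t =>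
    (hF1.differentiable (by norm_num) t).hasDerivAt
  have d2 : ∀ t, DifferentiableAt ℝ (deriv (deriv F)) t := fun t =>
    hF2.differentiable (by norm_num) t
  obtain ⟨N, hN⟩ : ∃ N : ℝ → ℝ, N = fun y => deriv (deriv F) y / deriv F y := ⟨_, rfl⟩
  have hNd : ∀ t ∈ Ioo α β, HasDerivAt N (deriv N t) t := by
    intro t ht
    have : DifferentiableAt ℝ N t := by
      rw [hN]
      exact (d2 t).div (d1 t).differentiableAt (hpos t ht).ne'
    exact this.hasDerivAt
  obtain ⟨v, hv⟩ : ∃ v : ℝ → ℝ, v = fun t => (√(deriv F t))⁻¹ := ⟨_, rfl⟩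
  have hvpos : ∀ t ∈ Ioo α β, 0 < v t := by
    intro t ht; rw [hv]; exact inv_pos.mpr (Real.sqrt_pos.mpr (hpos t ht))
  have hvd : ∀ t ∈ Ioo α β, HasDerivAt v (-(1/2) * (v t * N t)) t := by
    intro t ht
    have hp := hpos t ht
    have hs := Real.sqrt_pos.mpr hp
    have := ((d1 t).sqrt hp.ne').inv hs.ne'
    rw [hv]
    refine this.congr_deriv ?_
    rw [hN]
    simp only
    rw [Real.sq_sqrt hp.le]
    field_simp
  have hvd2 : ∀ t ∈ Ioo α β, HasDerivAt (fun t => -(1/2) * (v t * N t))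
      (-(1/2) * ((-(1/2) * (v t * N t)) * N t + v t * deriv N t)) t := by
    intro t ht
    exact ((hvd t ht).mul (hNd t ht)).const_mul _
  rw [← hv]
  apply convexOn_of_hasDerivWithinAt2_nonneg (convex_Ioo α β)
    (f' := fun t => -(1/2) * (v t * N t))
    (f'' := fun t => -(1/2) * ((-(1/2) * (v t * N t)) * N t + v t * deriv N t))
    (fun t ht => (hvd t ht).continuousAt.continuousWithinAt)
    (fun t ht => (hvd t (interior_subset ht)).hasDerivWithinAt)
    (fun t ht => (hvd2 t (interior_subset ht)).hasDerivWithinAt)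
  intro t ht
  have ht := interior_subset ht
  have h1 := hS t ht
  have h2 : schwarzianDeriv F t = deriv N t - (1/2) * (N t)^2 := by
    rw [hN]; rfl
  rw [h2] at h1
  have := hvpos t ht
  nlinarith



/-! ### Local and global distortion estimates -/

lemma unif_of_local (Q : ℝ → ℝ → ℝ → Prop)
    (hmono : ∀ K K' x y, K ≤ K' → Q K x y → Q K' x y)
    (hper : ∀ K x y (k : ℤ), Q K x y → Q K (x + k) (y + k))
    (hloc : ∀ p : ℝ, ∃ K, ∃ ε > 0, ∀ x y, |x - p| < ε → |y - p| < ε → Q K x y) :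
    ∃ K, ∃ δ > 0, ∀ x y, |y - x| < δ → Q K x y := by
  have key : ∃ K, ∃ δ > 0, ∀ x ∈ Icc (0:ℝ) 1, ∀ y, |y - x| < δ → Q K x y := by
    apply (isCompact_Icc (a := (0:ℝ)) (b := 1)).induction_on
      (p := fun S => ∃ K, ∃ δ > 0, ∀ x ∈ S, ∀ y, |y - x| < δ → Q K x y)
    · exact ⟨0, 1, one_pos, by simp⟩
    · rintro s t hst ⟨K, δ, hδ, h⟩
      exact ⟨K, δ, hδ, fun x hx => h x (hst hx)⟩
    · rintro s t ⟨K, δ, hδ, h⟩ ⟨K', δ', hδ', h'⟩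
      refine ⟨max K K', min δ δ', lt_min hδ hδ', ?_⟩
      rintro x (hx | hx) y hy
      · exact hmono _ _ _ _ (le_max_left _ _) (h x hx y (hy.trans_le (min_le_left _ _)))
      · exact hmono _ _ _ _ (le_max_right _ _) (h' x hx y (hy.trans_le (min_le_right _ _)))
    · intro p _
      obtain ⟨K, ε, hε, h⟩ := hloc p
      refine ⟨Metric.ball p (ε/2), mem_nhdsWithin_of_mem_nhds (Metric.ball_mem_nhds p (by linarith)),
        K, ε/2, by linarith, ?_⟩
      intro x hx y hy
      rw [Metric.mem_ball, Real.dist_eq] at hx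
      apply h x y (by linarith)
      have := abs_sub_le y x p
      linarith
  obtain ⟨K, δ, hδ, h⟩ := key
  refine ⟨K, δ, hδ, fun x y hxy => ?_⟩
  have h1 := h (Int.fract x) ⟨Int.fract_nonneg x, (Int.fract_lt_one x).le⟩ (y - ⌊x⌋)
    (by rw [Int.fract]; ring_nf; ring_nf at hxy; exact hxy)
  have h2 := hper _ _ _ ⌊x⌋ h1
  simpa using h2

lemma deriv_periodic {g : ℝ → ℝ} {k : ℝ} {e : ℝ} (h : ∀ x, g (x + k) = g x + e) (x : ℝ) :
    deriv g (x + k) = deriv g x := by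
  have : (fun y => g (y + k)) = fun y => g y + e := funext h
  rw [← deriv_comp_add_const, this, deriv_add_const]

namespace MCM
variable (f : MCM)

lemma F_add_int (x : ℝ) (k : ℤ) : f.F (x + k) = f.F x + k :=
  CircleDeg1Lift.map_add_int ⟨⟨f.F, f.mono.monotone⟩, f.deg1⟩ x k

lemma dF_add_int (x : ℝ) (k : ℤ) : deriv f.F (x + k) = deriv f.F x :=
  deriv_periodic (e := k) (fun y => f.F_add_int y k) x

lemma schw_add_int (x : ℝ) (k : ℤ) : schwarzianDeriv f.F (x + k) = schwarzianDeriv f.F x := by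
  have h1 := fun y => f.dF_add_int y k
  have h2 : ∀ y, deriv (deriv f.F) (y + k) = deriv (deriv f.F) y := fun y =>
    deriv_periodic (e := 0) (fun z => by rw [h1, add_zero]) y
  unfold schwarzianDeriv
  rw [h1, h2, deriv_periodic (e := 0)]
  intro y
  rw [h1, h2, add_zero]

lemma hasDeriv (x : ℝ) : HasDerivAt f.F (deriv f.F x) x :=
  (f.smooth.differentiable (by norm_num) x).hasDerivAt

lemma smooth1 : ContDiff ℝ 2 (deriv f.F) := by
  have : ContDiff ℝ (2 + 1) f.F := by norm_num; exact f.smooth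
  exact (contDiff_succ_iff_deriv.mp this).2.2

lemma dF_nonneg (x : ℝ) : 0 ≤ deriv f.F x := f.mono.monotone.deriv_nonneg

lemma cont : Continuous f.F := f.smooth.continuous

lemma mvt {x y : ℝ} (h : x < y) : ∃ ξ ∈ Ioo x y, f.F y - f.F x = deriv f.F ξ * (y - x) := by
  obtain ⟨ξ, h1, h2⟩ := exists_deriv_eq_slope f.F h f.cont.continuousOn
    (fun t _ => (f.hasDeriv t).differentiableAt.differentiableWithinAt)
  refine ⟨ξ, h1, ?_⟩
  have : y - x ≠ 0 := by linarith
  rw [h2]; field_simp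

/-- Local normal form at a critical point. -/
lemma crit_local (p : ℝ) (hp : deriv f.F p = 0) : ∃ (s al be ε : ℝ), 1 < s ∧ 0 < al ∧ 0 < be ∧
    0 < ε ∧ ∀ x, |x - p| < ε →
      (al * |x - p| ^ (s - 1) ≤ deriv f.F x ∧ deriv f.F x ≤ be * |x - p| ^ (s - 1)) ∧
      (x ≠ p → schwarzianDeriv f.F x < 0 ∧ 0 < deriv f.F x) := by
  obtain ⟨i, k, rfl⟩ := f.critOnly p hp
  obtain ⟨ε, hε, hW⟩ := Metric.isOpen_iff.mp (f.W_open i) _ (f.c_mem_W i)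
  refine ⟨f.s i, f.al i, f.be i, ε, f.s_gt_one i, f.al_pos i, (f.al_pos i).trans (f.al_lt_be i),
    hε, ?_⟩
  intro x hx
  have e1 : x = (x - k) + k := by ring
  have e2 : x - (f.c i + k) = (x - k) - f.c i := by ring
  have hmem : x - k ∈ f.W i := hW (by rw [Metric.mem_ball, Real.dist_eq, ← e2]; exact hx)
  have d1 : deriv f.F x = deriv f.F (x - k) := by
    conv_lhs => rw [e1]
    exact f.dF_add_int _ _
  have d2 : schwarzianDeriv f.F x = schwarzianDeriv f.F (x - k) := by
    conv_lhs => rw [e1]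
    exact f.schw_add_int _ _
  rw [e2, d1, d2]
  by_cases hxc : x - k = f.c i
  · rw [hxc, f.isCrit]
    have : f.s i - 1 ≠ 0 := by have := f.s_gt_one i; linarith
    refine ⟨by simp [Real.zero_rpow this], fun h => absurd (by linarith) h⟩
  · have h1 := f.powerLaw i _ hmem hxc
    refine ⟨⟨h1.1.le, h1.2.le⟩, fun _ => ⟨f.negSchwarzian i _ hmem hxc, ?_⟩⟩
    refine lt_of_le_of_lt ?_ h1.1
    have := f.al_pos i
    positivity

lemma mean_local (p : ℝ) : ∃ K, ∃ ε > 0, ∀ x y, |x - p| < ε → |y - p| < ε →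
    ∀ t ∈ Icc x y, deriv f.F t * (y - x) ≤ K * (f.F y - f.F x) := by
  by_cases hp : deriv f.F p = 0
  · obtain ⟨s, al, be, ε, hs, hal, hbe, hε, h⟩ := f.crit_local p hp
    refine ⟨4 * 2^(s-1) * be / al, ε, hε, ?_⟩
    intro x y hx hy t ht
    rcases eq_or_lt_of_le (ht.1.trans ht.2) with hxy | hxy
    · subst hxy; simp
    -- lower bound for the increment
    have key : ∃ r, 0 ≤ r ∧ |t - p| ≤ r ∧ al * (r/2)^(s-1) * (y - x) ≤ 4 * (f.F y - f.F x) := by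
      rcases le_total |x - p| |y - p| with hle | hle
      · -- y is the far endpoint
        have hyp : 0 ≤ y - p := by
          by_contra hc
          rw [abs_of_neg (by linarith : y - p < 0), abs_of_neg (by linarith : x - p < 0)] at hle
          linarith
        rw [abs_of_nonneg hyp] at hle hy
        rw [abs_le] at hle
        refine ⟨y - p, hyp, abs_le.mpr ⟨by linarith [ht.1], by linarith [ht.2]⟩, ?_⟩
        have hz : (x + 3*y)/4 < y := by linarith
        obtain ⟨ξ, hξ, he⟩ := f.mvt hz
        have hξ1 : (y - p)/2 ≤ ξ - p := by linarith [hξ.1]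
        have hξp : |ξ - p| = ξ - p := abs_of_nonneg (by linarith)
        have h1 := (h ξ (by rw [hξp]; linarith [hξ.2])).1.1
        rw [hξp] at h1
        have h2 : ((y - p)/2)^(s-1) ≤ (ξ - p)^(s-1) :=
          Real.rpow_le_rpow (by linarith) hξ1 (by linarith)
        have h3 : f.F x ≤ f.F ((x + 3*y)/4) := f.mono.monotone (by linarith)
        have h4 : al * ((y - p)/2)^(s-1) ≤ deriv f.F ξ :=
          (mul_le_mul_of_nonneg_left h2 hal.le).trans h1
        have h5 := mul_le_mul_of_nonneg_right h4 (by linarith : 0 ≤ y - x)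
        have h6 : y - (x + 3*y)/4 = (y - x)/4 := by ring
        rw [h6] at he
        linarith
      · have hyp : x - p ≤ 0 := by
          by_contra hc
          rw [abs_of_pos (by linarith : 0 < y - p), abs_of_pos (by linarith : 0 < x - p)] at hle
          linarith
        rw [abs_of_nonpos hyp] at hle hx
        rw [abs_le] at hle
        refine ⟨-(x - p), by linarith, abs_le.mpr ⟨by linarith [ht.1], by linarith [ht.2]⟩, ?_⟩
        have hz : x < (3*x + y)/4 := by linarith
        obtain ⟨ξ, hξ, he⟩ := f.mvt hz
        have hξ1 : -(x - p)/2 ≤ -(ξ - p) := by linarith [hξ.2]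
        have hξp : |ξ - p| = -(ξ - p) := abs_of_nonpos (by linarith)
        have h1 := (h ξ (by rw [hξp]; linarith [hξ.1])).1.1
        rw [hξp] at h1
        have h2 : (-(x - p)/2)^(s-1) ≤ (-(ξ - p))^(s-1) :=
          Real.rpow_le_rpow (by linarith) hξ1 (by linarith)
        have h3 : f.F ((3*x + y)/4) ≤ f.F y := f.mono.monotone (by linarith)
        have h4 : al * (-(x - p)/2)^(s-1) ≤ deriv f.F ξ :=
          (mul_le_mul_of_nonneg_left h2 hal.le).trans h1
        have h5 := mul_le_mul_of_nonneg_right h4 (by linarith : 0 ≤ y - x)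
        have h6 : (3*x + y)/4 - x = (y - x)/4 := by ring
        rw [h6] at he
        linarith
    obtain ⟨r, hr0, hr1, hr2⟩ := key
    have htp : |t - p| < ε := by
      rw [abs_lt] at hx hy ⊢
      constructor
      · linarith [ht.1]
      · linarith [ht.2]
    have h1 := (h t htp).1.2
    have h2 : |t - p|^(s-1) ≤ r^(s-1) := Real.rpow_le_rpow (abs_nonneg _) hr1 (by linarith)
    have h3 : r^(s-1) = 2^(s-1) * (r/2)^(s-1) := by
      rw [← Real.mul_rpow (by norm_num) (by linarith)]; congr 1; ring
    have h4 : deriv f.F t ≤ be * (2^(s-1) * (r/2)^(s-1)) := by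
      rw [← h3]; exact h1.trans (mul_le_mul_of_nonneg_left h2 hbe.le)
    calc deriv f.F t * (y - x) ≤ be * (2^(s-1) * (r/2)^(s-1)) * (y - x) :=
          mul_le_mul_of_nonneg_right h4 (by linarith)
      _ = (2^(s-1) * be / al) * (al * (r/2)^(s-1) * (y - x)) := by field_simp
      _ ≤ (2^(s-1) * be / al) * (4 * (f.F y - f.F x)) :=
          mul_le_mul_of_nonneg_left hr2 (by positivity)
      _ = _ := by ring
  · have hpos : 0 < deriv f.F p := lt_of_le_of_ne (f.dF_nonneg p) (Ne.symm hp)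
    have hc : ContinuousAt (deriv f.F) p := f.smooth1.continuous.continuousAt
    obtain ⟨ε, hε, h⟩ := Metric.continuousAt_iff.mp hc (deriv f.F p / 2) (by linarith)
    refine ⟨3, ε, hε, ?_⟩
    intro x y hx hy t ht
    rcases eq_or_lt_of_le (ht.1.trans ht.2) with hxy | hxy
    · subst hxy; simp
    obtain ⟨ξ, hξ, he⟩ := f.mvt hxy
    have hb : ∀ z ∈ Icc x y, |deriv f.F z - deriv f.F p| < deriv f.F p / 2 := by
      intro z hz
      have : |z - p| < ε := by
        rw [abs_lt] at hx hy ⊢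
        constructor
        · linarith [hz.1]
        · linarith [hz.2]
      exact h this
    have h1 := abs_lt.mp (hb t ht)
    have h2 := abs_lt.mp (hb ξ (Ioo_subset_Icc_self hξ))
    rw [he, ← mul_assoc]
    apply mul_le_mul_of_nonneg_right _ (by linarith)
    linarith

/-- Derivative at a point of an interval is controlled by the mean of the derivative. -/
lemma mean_global : ∃ K, 1 ≤ K ∧ ∀ x y t, x ≤ t → t ≤ y →
    deriv f.F t * (y - x) ≤ K * (f.F y - f.F x) := by
  obtain ⟨K, δ, hδ, h⟩ := unif_of_local
    (fun K x y => ∀ t ∈ Icc x y, deriv f.F t * (y - x) ≤ K * (f.F y - f.F x))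
    (by
      intro K K' x y hK h t ht
      refine (h t ht).trans (mul_le_mul_of_nonneg_right hK ?_)
      have := f.mono.monotone (ht.1.trans ht.2)
      linarith)
    (by
      intro K x y k h t ht
      have h1 := h (t - k) ⟨by linarith [ht.1], by linarith [ht.2]⟩
      have h2 := f.dF_add_int (t - k) k
      rw [sub_add_cancel] at h2
      rw [f.F_add_int, f.F_add_int, h2]
      ring_nf at h1 ⊢
      linarith)
    f.mean_local
  -- upper bound for the derivative
  have hdc : Continuous (deriv f.F) := f.smooth1.continuous
  obtain ⟨x1, -, hx1⟩ := (isCompact_Icc (a := (0:ℝ)) (b := 1)).exists_isMaxOn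
    ⟨0, by simp⟩ hdc.continuousOn
  obtain ⟨M, hM⟩ : ∃ M, M = deriv f.F x1 := ⟨_, rfl⟩
  have hMb : ∀ t, deriv f.F t ≤ M := by
    intro t
    have h1 := f.dF_add_int (Int.fract t) ⌊t⌋
    rw [Int.fract_add_floor] at h1
    rw [h1, hM]
    exact hx1 ⟨Int.fract_nonneg t, (Int.fract_lt_one t).le⟩
  have hM0 : 0 ≤ M := (f.dF_nonneg 0).trans (hMb 0)
  obtain ⟨δ', hδ'⟩ : ∃ d, d = min δ 1 := ⟨_, rfl⟩
  have hδ0 : 0 < δ' := by rw [hδ']; exact lt_min hδ one_pos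
  have hg : Continuous (fun x => f.F (x + δ') - f.F x) :=
    (f.cont.comp (continuous_id.add continuous_const)).sub f.cont
  obtain ⟨x2, -, hx2⟩ := (isCompact_Icc (a := (0:ℝ)) (b := 1)).exists_isMinOn
    ⟨0, by simp⟩ hg.continuousOn
  obtain ⟨m, hm⟩ : ∃ m, m = f.F (x2 + δ') - f.F x2 := ⟨_, rfl⟩
  have hm0 : 0 < m := by rw [hm]; exact sub_pos.mpr (f.mono (by linarith))
  have hmb : ∀ x, m ≤ f.F (x + δ') - f.F x := by
    intro x
    have h1 := hx2 (show Int.fract x ∈ Icc (0:ℝ) 1 from ⟨Int.fract_nonneg x, (Int.fract_lt_one x).le⟩)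
    have h2 := f.F_add_int (Int.fract x) ⌊x⌋
    have h3 := f.F_add_int (Int.fract x + δ') ⌊x⌋
    rw [add_right_comm, Int.fract_add_floor] at h3
    rw [Int.fract_add_floor] at h2
    change f.F (x2 + δ') - f.F x2 ≤ f.F (Int.fract x + δ') - f.F (Int.fract x) at h1
    rw [← hm] at h1
    linarith
  refine ⟨max 1 (max K (max (M/m) (2*M))), le_max_left _ _, ?_⟩
  intro x y t hxt hty
  have hxy := hxt.trans hty
  have hFxy : 0 ≤ f.F y - f.F x := sub_nonneg.mpr (f.mono.monotone hxy)
  rcases lt_or_ge (y - x) δ' with h1 | h1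
  · have h2 := h x y (by
      rw [abs_of_nonneg (by linarith)]
      exact h1.trans_le (by rw [hδ']; exact min_le_left _ _)) t ⟨hxt, hty⟩
    refine h2.trans (mul_le_mul_of_nonneg_right ?_ hFxy)
    exact (le_max_left _ _).trans (le_max_right _ _)
  · rcases le_or_gt (y - x) 1 with h2 | h2
    · have h3 : m ≤ f.F y - f.F x := by
        have := f.mono.monotone (by linarith : x + δ' ≤ y)
        linarith [hmb x]
      have h4 : deriv f.F t * (y - x) ≤ M := by
        have := mul_le_mul (hMb t) h2 (by linarith) hM0
        linarith
      have h5 : M ≤ M/m * (f.F y - f.F x) := by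
        calc M = M/m * m := by field_simp
          _ ≤ _ := mul_le_mul_of_nonneg_left h3 (by positivity)
      refine (h4.trans h5).trans (mul_le_mul_of_nonneg_right ?_ hFxy)
      exact ((le_max_left _ _).trans (le_max_right _ _)).trans (le_max_right _ _)
    · have h3 : (y - x)/2 ≤ f.F y - f.F x := by
        have e := f.F_add_int x ⌊y - x⌋
        have h6 := Int.floor_le (y - x)
        have h7 := Int.lt_floor_add_one (y - x)
        have h8 := f.mono.monotone (by linarith : x + (⌊y - x⌋ : ℝ) ≤ y)
        have h9 : (1:ℝ) ≤ (⌊y - x⌋ : ℝ) := by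
          have : (1:ℤ) ≤ ⌊y - x⌋ := Int.le_floor.mpr (by push_cast; linarith)
          exact_mod_cast this
        linarith
      have h4 : deriv f.F t * (y - x) ≤ (2*M) * (f.F y - f.F x) := by
        have := mul_le_mul_of_nonneg_right (hMb t) (by linarith : 0 ≤ y - x)
        nlinarith
      refine h4.trans (mul_le_mul_of_nonneg_right ?_ hFxy)
      exact ((le_max_right _ _).trans (le_max_right _ _)).trans (le_max_right _ _)

lemma cr_dist {K : ℝ} (hK : 0 ≤ K) {a b c d : ℝ} (h1 : a < b) (h2 : b < c) (h3 : c < d)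
    (hL : (f.F b - f.F a) * (c - a) ≤ K * ((f.F c - f.F a) * (b - a)))
    (hR : (f.F d - f.F c) * (d - b) ≤ K * ((f.F d - f.F b) * (d - c))) :
    cr (f.F a) (f.F b) (f.F c) (f.F d) ≤ K^2 * cr a b c d := by
  have p1 : 0 < f.F c - f.F a := sub_pos.mpr (f.mono (by linarith))
  have p2 : 0 < f.F b - f.F a := sub_pos.mpr (f.mono (by linarith))
  have p3 : 0 < f.F d - f.F c := sub_pos.mpr (f.mono (by linarith))
  have p4 : 0 < f.F d - f.F b := sub_pos.mpr (f.mono (by linarith))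
  have q1 : 0 < c - a := by linarith
  have q2 : 0 < b - a := by linarith
  have q3 : 0 < d - c := by linarith
  have q4 : 0 < d - b := by linarith
  rw [cr_of_lt (f.mono h1) (f.mono h2) (f.mono h3), cr_of_lt h1 h2 h3, ← mul_div_assoc,
    div_le_div_iff₀ (by positivity) (by positivity)]
  have := mul_le_mul hL hR (by positivity) (by positivity)
  nlinarith

lemma cr_global : ∃ K, 1 ≤ K ∧ ∀ a b c d, a < b → b < c → c < d →
    cr (f.F a) (f.F b) (f.F c) (f.F d) ≤ K^2 * cr a b c d := by
  obtain ⟨K, hK, h⟩ := f.mean_global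
  refine ⟨K, hK, fun a b c d h1 h2 h3 => f.cr_dist (by linarith) h1 h2 h3 ?_ ?_⟩
  · obtain ⟨ξ, hξ, he⟩ := f.mvt h1
    have := h a c ξ hξ.1.le (by linarith [hξ.2])
    rw [he]
    nlinarith
  · obtain ⟨ξ, hξ, he⟩ := f.mvt h3
    have := h b d ξ (by linarith [hξ.1]) hξ.2.le
    rw [he]
    nlinarith

lemma cr_local (p : ℝ) : ∃ L, ∃ ε > 0, ∀ a d, |a - p| < ε → |d - p| < ε →
    (∀ t ∈ Icc a d, deriv f.F t ≠ 0) → ∀ b c, a < b → b < c → c < d →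
    cr (f.F a) (f.F b) (f.F c) (f.F d) ≤ Real.exp (L * (d - a)) * cr a b c d := by
  by_cases hp : deriv f.F p = 0
  · obtain ⟨s, al, be, ε, hs, hal, hbe, hε, h⟩ := f.crit_local p hp
    refine ⟨0, ε, hε, ?_⟩
    intro a d ha hd hne b c h1 h2 h3
    rw [zero_mul, Real.exp_zero, one_mul]
    rw [abs_lt] at ha hd
    have hpn : p ∉ Icc a d := fun hh => hne p hh hp
    have hside : p < a ∨ d < p := by
      by_contra hc
      push Not at hc
      exact hpn hc
    rcases hside with hlt | hlt
    · have hmem : ∀ t ∈ Ioo p (p + ε), |t - p| < ε ∧ t ≠ p := by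
        intro t ht
        exact ⟨abs_lt.mpr ⟨by linarith [ht.1], by linarith [ht.2]⟩, ht.1.ne'⟩
      have hpos : ∀ t ∈ Ioo p (p + ε), 0 < deriv f.F t := fun t ht =>
        ((h t (hmem t ht).1).2 (hmem t ht).2).2
      exact cr_contract (fun t _ => f.hasDeriv t) hpos f.mono
        (schwarz_convex f.smooth hpos (fun t ht => ((h t (hmem t ht).1).2 (hmem t ht).2).1))
        ⟨hlt, by linarith⟩ ⟨by linarith, by linarith⟩ h1 h2 h3
    · have hmem : ∀ t ∈ Ioo (p - ε) p, |t - p| < ε ∧ t ≠ p := by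
        intro t ht
        exact ⟨abs_lt.mpr ⟨by linarith [ht.1], by linarith [ht.2]⟩, ht.2.ne⟩
      have hpos : ∀ t ∈ Ioo (p - ε) p, 0 < deriv f.F t := fun t ht =>
        ((h t (hmem t ht).1).2 (hmem t ht).2).2
      exact cr_contract (fun t _ => f.hasDeriv t) hpos f.mono
        (schwarz_convex f.smooth hpos (fun t ht => ((h t (hmem t ht).1).2 (hmem t ht).2).1))
        ⟨by linarith, by linarith⟩ ⟨by linarith, hlt⟩ h1 h2 h3
  · have hC : ContDiffAt ℝ 1 (fun t => Real.log (deriv f.F t)) p := by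
      apply ContDiffAt.log _ hp
      exact (f.smooth1.of_le (by norm_num)).contDiffAt
    obtain ⟨K, t, ht, hlip⟩ := hC.exists_lipschitzOnWith
    obtain ⟨ε, hε, hball⟩ := Metric.mem_nhds_iff.mp ht
    refine ⟨2 * K, ε, hε, ?_⟩
    intro a d ha hd hne b c h1 h2 h3
    have hcomp : ∀ ξ ∈ Icc a d, ∀ η ∈ Icc a d,
        deriv f.F ξ ≤ Real.exp (K * (d - a)) * deriv f.F η := by
      intro ξ hξ η hη
      have hin : ∀ z ∈ Icc a d, z ∈ t := by
        intro z hz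
        apply hball
        rw [Metric.mem_ball, Real.dist_eq]
        rw [abs_lt] at ha hd ⊢
        constructor
        · linarith [hz.1]
        · linarith [hz.2]
      have h4 := hlip.dist_le_mul ξ (hin ξ hξ) η (hin η hη)
      rw [Real.dist_eq, Real.dist_eq] at h4
      have hξη : |ξ - η| ≤ d - a := abs_le.mpr ⟨by linarith [hξ.1, hη.2], by linarith [hξ.2, hη.1]⟩
      have h5 : Real.log (deriv f.F ξ) ≤ K * (d - a) + Real.log (deriv f.F η) := by
        have := mul_le_mul_of_nonneg_left hξη K.2
        have h6 := le_abs_self (Real.log (deriv f.F ξ) - Real.log (deriv f.F η))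
        have h7 : (K:ℝ) * |ξ - η| ≤ K * (d - a) := this
        linarith
      have p1 : 0 < deriv f.F ξ := lt_of_le_of_ne (f.dF_nonneg _) (Ne.symm (hne ξ hξ))
      have p2 : 0 < deriv f.F η := lt_of_le_of_ne (f.dF_nonneg _) (Ne.symm (hne η hη))
      have h8 := Real.exp_le_exp.mpr h5
      rwa [Real.exp_add, Real.exp_log p1, Real.exp_log p2] at h8
    have hE : Real.exp (2 * K * (d - a)) = (Real.exp (K * (d - a)))^2 := by
      rw [← Real.exp_nat_mul]; congr 1; push_cast; ring
    rw [hE]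
    have hsq : ∀ x1 y1 x2 y2, a ≤ x1 → y1 ≤ d → a ≤ x2 → y2 ≤ d → x1 < y1 → x2 < y2 →
        (f.F y1 - f.F x1) * (y2 - x2)
          ≤ Real.exp (K * (d - a)) * ((f.F y2 - f.F x2) * (y1 - x1)) := by
      intro x1 y1 x2 y2 g1 g2 g3 g4 g5 g6
      obtain ⟨ξ, hξ, he⟩ := f.mvt g5
      obtain ⟨η, hη, he2⟩ := f.mvt g6
      have := hcomp ξ ⟨by linarith [hξ.1], by linarith [hξ.2]⟩ η
        ⟨by linarith [hη.1], by linarith [hη.2]⟩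
      rw [he, he2]
      have h7 := mul_le_mul_of_nonneg_right this
        (mul_nonneg (sub_nonneg.mpr g5.le) (sub_nonneg.mpr g6.le))
      nlinarith
    apply f.cr_dist (Real.exp_pos _).le h1 h2 h3
    · apply hsq <;> linarith
    · apply hsq <;> linarith

/-- Number of translates of the critical points lying in `[a,d]`. -/
def ncr (a d : ℝ) : ℕ := ∑ i, (Finset.Icc ⌈a - f.c i⌉ ⌊d - f.c i⌋).card

lemma step_bound : ∃ κ, 0 ≤ κ ∧ ∀ a b c d, a < b → b < c → c < d →
    cr (f.F a) (f.F b) (f.F c) (f.F d)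
      ≤ Real.exp (κ * ((d - a) + f.ncr a d)) * cr a b c d := by
  obtain ⟨K, hK, hglob⟩ := f.cr_global
  obtain ⟨L, δ, hδ, hloc⟩ := unif_of_local
    (fun L a d => (∀ t ∈ Icc a d, deriv f.F t ≠ 0) → ∀ b c, a < b → b < c → c < d →
    cr (f.F a) (f.F b) (f.F c) (f.F d) ≤ Real.exp (L * (d - a)) * cr a b c d)
    (by
      intro L L' a d hL h hne b c h1 h2 h3
      refine (h hne b c h1 h2 h3).trans (mul_le_mul_of_nonneg_right ?_ (cr_nonneg _ _ _ _))
      apply Real.exp_le_exp.mpr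
      exact mul_le_mul_of_nonneg_right hL (by linarith))
    (by
      intro L a d k h hne b c h1 h2 h3
      have hh := h (by
        intro t ht
        rw [← f.dF_add_int t k]
        exact hne _ ⟨by linarith [ht.1], by linarith [ht.2]⟩) (b - k) (c - k)
        (by linarith) (by linarith) (by linarith)
      have e1 := f.F_add_int (b - k) k
      have e2 := f.F_add_int (c - k) k
      rw [sub_add_cancel] at e1 e2
      rw [f.F_add_int, f.F_add_int, e1, e2]
      unfold cr at hh ⊢
      simp only [add_sub_add_right_eq_sub]
      have e3 : b - (a + k) = b - k - a := by ring
      have e4 : d + k - c = d - (c - k) := by ring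
      have e5 : c - (a + k) = c - k - a := by ring
      have e6 : d + k - b = d - (b - k) := by ring
      rw [e3, e4, e5, e6]
      exact hh)
    f.cr_local
  set A := Real.log (K^2) with hA
  have hA0 : 0 ≤ A := Real.log_nonneg (by nlinarith)
  have hexpA : Real.exp A = K^2 := Real.exp_log (by nlinarith)
  refine ⟨A + A/δ + |L|, by positivity, ?_⟩
  intro a b c d h1 h2 h3
  have hda : 0 < d - a := by linarith
  have hn0 : (0:ℝ) ≤ f.ncr a d := Nat.cast_nonneg _
  have hmain : K^2 * cr a b c d
      ≤ Real.exp ((A + A/δ + |L|) * ((d - a) + f.ncr a d)) * cr a b c d ∨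
      (∀ t ∈ Icc a d, deriv f.F t ≠ 0) ∧ |d - a| < δ := by
    by_cases hcrit : ∃ t ∈ Icc a d, deriv f.F t = 0
    · left
      obtain ⟨t, ht, htc⟩ := hcrit
      obtain ⟨i, k, rfl⟩ := f.critOnly t htc
      have h4 : 1 ≤ f.ncr a d := by
        have h5 : 1 ≤ (Finset.Icc ⌈a - f.c i⌉ ⌊d - f.c i⌋).card := by
          apply Finset.card_pos.mpr
          refine ⟨k, Finset.mem_Icc.mpr ⟨Int.ceil_le.mpr ?_, Int.le_floor.mpr ?_⟩⟩
          · linarith [ht.1]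
          · linarith [ht.2]
        refine h5.trans ?_
        unfold ncr
        exact Finset.single_le_sum (f := fun i => (Finset.Icc ⌈a - f.c i⌉ ⌊d - f.c i⌋).card)
          (fun _ _ => Nat.zero_le _) (Finset.mem_univ i)
      have h4' : (1:ℝ) ≤ f.ncr a d := by exact_mod_cast h4
      apply mul_le_mul_of_nonneg_right _ (cr_nonneg _ _ _ _)
      rw [← hexpA]
      apply Real.exp_le_exp.mpr
      have : 0 ≤ A/δ + |L| := by positivity
      nlinarith [mul_nonneg this (by linarith : 0 ≤ (d - a) + (f.ncr a d : ℝ))]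
    · push Not at hcrit
      rcases lt_or_ge (d - a) δ with h4 | h4
      · right
        exact ⟨hcrit, by rwa [abs_of_pos hda]⟩
      · left
        apply mul_le_mul_of_nonneg_right _ (cr_nonneg _ _ _ _)
        rw [← hexpA]
        apply Real.exp_le_exp.mpr
        have h5 : A ≤ A/δ * (d - a) := by
          calc A = A/δ * δ := by field_simp
            _ ≤ _ := mul_le_mul_of_nonneg_left h4 (by positivity)
        have h6 : 0 ≤ (A + |L|) * ((d - a) + (f.ncr a d : ℝ)) := by positivity
        have h7 : 0 ≤ A/δ * (f.ncr a d : ℝ) := by positivity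
        nlinarith
  rcases hmain with h4 | ⟨h4, h5⟩
  · exact (hglob a b c d h1 h2 h3).trans h4
  · refine (hloc a d h5 h4 b c h1 h2 h3).trans
      (mul_le_mul_of_nonneg_right ?_ (cr_nonneg _ _ _ _))
    apply Real.exp_le_exp.mpr
    have h6 : L * (d - a) ≤ |L| * (d - a) := mul_le_mul_of_nonneg_right (le_abs_self L) hda.le
    have h7 : 0 ≤ (A + A/δ) * ((d - a) + (f.ncr a d : ℝ)) := by positivity
    have h8 : 0 ≤ |L| * (f.ncr a d : ℝ) := by positivity
    nlinarith

end MCM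


lemma fract_intInt (x a b : ℝ) :
    IntervalIntegrable (fun t => Int.fract (x - t)) volume a b := by
  have : IntervalIntegrable (fun _ : ℝ => (1:ℝ)) volume a b := intervalIntegrable_const
  refine this.mono_fun ?_ ?_
  · exact (measurable_fract.comp (measurable_const.sub measurable_id)).aestronglyMeasurable
  · refine Filter.Eventually.of_forall fun t => ?_
    simp only [Real.norm_eq_abs, abs_one]
    rw [abs_of_nonneg (Int.fract_nonneg _)]
    exact (Int.fract_lt_one _).le

lemma fract_int (x : ℝ) :
    ∫ t in (0:ℝ)..1, Int.fract (x - t) = ∫ t in (0:ℝ)..1, Int.fract t := by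
  have hp : Function.Periodic (Int.fract : ℝ → ℝ) 1 := fun x => by simp
  have := hp.intervalIntegral_add_eq (x-1) 0
  simp only [zero_add, sub_add_cancel] at this
  rw [← this]
  simp [intervalIntegral.integral_comp_sub_left (fun t => Int.fract t) x]

lemma sum_len (i : ℕ) (x y : ℕ → ℝ) (m : ℝ)
    (hm : ∀ t : ℝ, ∑ j ∈ Finset.range i, ((Finset.Icc ⌈x j - t⌉ ⌊y j - t⌋).card : ℝ) ≤ m) :
    ∑ j ∈ Finset.range i, (y j - x j) ≤ m := by
  have h1 : ∀ t : ℝ, ∑ j ∈ Finset.range i,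
      ((y j - x j) + (Int.fract (x j - t) - Int.fract (y j - t))) ≤ m := by
    intro t
    refine le_trans (Finset.sum_le_sum fun j _ => ?_) (hm t)
    rw [Int.card_Icc]
    have h2 : ((⌊y j - t⌋ + 1 - ⌈x j - t⌉ : ℤ) : ℝ) ≤ ((⌊y j - t⌋ + 1 - ⌈x j - t⌉).toNat : ℝ) := by
      exact_mod_cast Int.self_le_toNat _
    have h3 : (⌈x j - t⌉ : ℝ) ≤ ⌊x j - t⌋ + 1 := by
      exact_mod_cast Int.ceil_le_floor_add_one _
    have h4 := Int.floor_add_fract (x j - t)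
    have h5 := Int.floor_add_fract (y j - t)
    push_cast at h2
    linarith
  have hI : ∀ j ∈ Finset.range i, IntervalIntegrable (fun t => (y j - x j) +
      (Int.fract (x j - t) - Int.fract (y j - t))) volume 0 1 := fun j _ =>
    intervalIntegrable_const.add ((fract_intInt _ _ _).sub (fract_intInt _ _ _))
  have h2 : ∫ t in (0:ℝ)..1, (∑ j ∈ Finset.range i,
      ((y j - x j) + (Int.fract (x j - t) - Int.fract (y j - t)))) ≤ ∫ t in (0:ℝ)..1, m := by
    refine intervalIntegral.integral_mono_on zero_le_one ?_ intervalIntegrable_const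
      (fun t _ => h1 t)
    have h3 := IntervalIntegrable.sum _ hI
    have h4 : (fun t : ℝ => ∑ j ∈ Finset.range i,
      ((y j - x j) + (Int.fract (x j - t) - Int.fract (y j - t)))) =
      ∑ j ∈ Finset.range i, fun t : ℝ =>
      ((y j - x j) + (Int.fract (x j - t) - Int.fract (y j - t))) := by
      ext t; simp only [Finset.sum_apply]
    rw [h4]; exact h3
  rw [intervalIntegral.integral_finsetSum hI] at h2
  simp only [intervalIntegral.integral_const, sub_zero, one_smul] at h2
  refine le_trans (le_of_eq (Finset.sum_congr rfl fun j _ => ?_)) h2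
  rw [intervalIntegral.integral_add intervalIntegrable_const
    ((fract_intInt _ _ _).sub (fract_intInt _ _ _)),
    intervalIntegral.integral_sub (fract_intInt _ _ _) (fract_intInt _ _ _), fract_int, fract_int]
  simp

namespace MCM
variable (f : MCM)

lemma iter_lt (i : ℕ) {a b : ℝ} (h : a < b) : f.F^[i] a < f.F^[i] b := f.mono.iterate i h

lemma chain : ∃ κ, 0 ≤ κ ∧ ∀ (i : ℕ) (m : ℝ) a b c d, a < b → b < c → c < d →
    (∀ t : ℝ, ∑ j ∈ Finset.range i,
      ((Finset.Icc ⌈f.F^[j] a - t⌉ ⌊f.F^[j] d - t⌋).card : ℝ) ≤ m) →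
    cr (f.F^[i] a) (f.F^[i] b) (f.F^[i] c) (f.F^[i] d)
      ≤ Real.exp (κ * m) * cr a b c d := by
  obtain ⟨κ, hκ, hstep⟩ := f.step_bound
  refine ⟨κ * (1 + f.N), by positivity, ?_⟩
  intro i m a b c d hab hbc hcd hm
  have key : ∀ i, cr (f.F^[i] a) (f.F^[i] b) (f.F^[i] c) (f.F^[i] d)
      ≤ Real.exp (κ * ∑ j ∈ Finset.range i,
        ((f.F^[j] d - f.F^[j] a) + f.ncr (f.F^[j] a) (f.F^[j] d))) * cr a b c d := by
    intro i
    induction i with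
    | zero => simp
    | succ i ih =>
      rw [Finset.sum_range_succ, mul_add, Real.exp_add]
      simp only [Function.iterate_succ_apply']
      refine (hstep _ _ _ _ (f.iter_lt i hab) (f.iter_lt i hbc) (f.iter_lt i hcd)).trans ?_
      rw [mul_comm (Real.exp _) (Real.exp _), mul_assoc]
      exact mul_le_mul_of_nonneg_left ih (Real.exp_pos _).le
  refine (key i).trans (mul_le_mul_of_nonneg_right (Real.exp_le_exp.mpr ?_) (cr_nonneg _ _ _ _))
  rw [mul_assoc]
  refine mul_le_mul_of_nonneg_left ?_ hκ
  rw [Finset.sum_add_distrib, add_mul, one_mul]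
  refine add_le_add (sum_len i (fun j => f.F^[j] a) (fun j => f.F^[j] d) m hm) ?_
  simp only [ncr, Nat.cast_sum]
  rw [Finset.sum_comm]
  refine (Finset.sum_le_sum fun k _ => hm (f.c k)).trans ?_
  simp

lemma surj : Function.Surjective f.F := by
  have h1 : ∀ n : ℕ, f.F (n:ℝ) = f.F 0 + n := fun n => by simpa using f.F_add_int 0 n
  intro y
  obtain ⟨k, hk⟩ : ∃ k : ℤ, k = ⌊y - f.F 0⌋ := ⟨_, rfl⟩
  have ha : f.F k ≤ y := by
    have := f.F_add_int 0 k
    rw [zero_add] at this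
    rw [this, hk]; linarith [Int.floor_le (y - f.F 0)]
  have hb : y ≤ f.F ((k:ℝ)+1) := by
    rw [f.deg1]
    have := f.F_add_int 0 k
    rw [zero_add] at this
    rw [this, hk]; linarith [Int.lt_floor_add_one (y - f.F 0)]
  obtain ⟨x, -, hx⟩ := intermediate_value_Icc (by linarith : (k:ℝ) ≤ (k:ℝ)+1)
    f.cont.continuousOn ⟨ha, hb⟩
  exact ⟨x, hx⟩

/-- F as an order isomorphism -/
def E : ℝ ≃o ℝ := StrictMono.orderIsoOfSurjective f.F f.mono f.surj

@[simp] lemma E_apply (x : ℝ) : f.E x = f.F x := rfl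

lemma semiconj {ρ : ℝ} (hrot : HasRotationNumber f.F ρ) :
    ∃ h : ℝ → ℝ, Monotone h ∧ (∀ x, h (x+1) = h x + 1) ∧ ∀ x, h (f.F x) = h x + ρ := by
  let g : CircleDeg1Lift := ⟨⟨f.F, f.mono.monotone⟩, f.deg1⟩
  have hg : ∀ x, g x = f.F x := fun x => rfl
  have hτ : g.translationNumber = ρ := by
    refine tendsto_nhds_unique g.tendsto_translation_number₀ ?_
    refine Tendsto.congr (fun n => ?_) hrot
    rw [CircleDeg1Lift.coe_pow]; rfl
  have hb : Function.Bijective g := ⟨f.mono.injective, f.surj⟩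
  let tr : CircleDeg1Lift := CircleDeg1Lift.translate (Multiplicative.ofAdd ρ)
  have htr : ∀ x, tr x = ρ + x := fun x => by simp [tr]
  have hb2 : Function.Bijective tr := by
    have : (tr : ℝ → ℝ) = fun x => ρ + x := funext htr
    rw [this]; exact (Equiv.addLeft ρ).bijective
  obtain ⟨F, hF⟩ := CircleDeg1Lift.semiconj_of_bijective_of_translationNumber_eq hb hb2
    (by rw [hτ]; exact (CircleDeg1Lift.translationNumber_translate ρ).symm)
  refine ⟨F, F.monotone, F.map_add_one, fun x => ?_⟩
  have := hF x
  rw [hg, htr] at this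
  rw [this]; ring

end MCM


lemma mult_arith {ρ : ℝ} (hirr : Irrational ρ) (hmem : ρ ∈ Ioo (0:ℝ) 1) (n : ℕ)
    (i L w : ℕ) (hi : i ≤ L * qDen ρ (n+1)) (A : ℝ) (s : ℕ → Finset ℤ)
    (hs : ∀ j < i, ∀ k ∈ s j, 0 ≤ (k:ℝ) - j * ρ - A ∧ (k:ℝ) - j * ρ - A ≤ w * |thetaN ρ n|) :
    ∑ j ∈ Finset.range i, (s j).card ≤ L * (w+1) := by
  have hδ : 0 < |thetaN ρ n| := abs_pos.mpr (theta_ne hirr hmem n)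
  have hq : 0 < qDen ρ (n+1) := (qDen_pos hirr hmem (n+1)).1
  set δ := |thetaN ρ n| with hδd
  set q := qDen ρ (n+1) with hqd
  rw [← Finset.card_sigma]
  have : L * (w+1) = (Finset.range L ×ˢ Finset.range (w+1)).card := by simp
  rw [this]
  refine Finset.card_le_card_of_injOn
    (fun p : (_ : ℕ) × ℤ => (p.1 / q, ⌊((p.2:ℝ) - p.1 * ρ - A)/δ⌋.toNat)) ?_ ?_
  · rintro ⟨j, k⟩ hp
    simp only [Finset.coe_sigma, Set.mem_sigma_iff, Finset.mem_coe, Finset.mem_range] at hp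
    obtain ⟨h1, h2⟩ := hs j hp.1 k hp.2
    simp only [Finset.coe_product, Set.mem_prod, Finset.mem_coe, Finset.mem_range]
    refine ⟨Nat.div_lt_of_lt_mul (by rw [mul_comm]; exact hp.1.trans_le hi), ?_⟩
    have h3 : ⌊((k:ℝ) - j * ρ - A)/δ⌋ ≤ w := by
      have : ((k:ℝ) - j * ρ - A)/δ ≤ w := by rw [div_le_iff₀ hδ]; exact h2
      have h4 := Int.floor_le_floor this
      simpa using h4
    omega
  · rintro ⟨j, k⟩ hp ⟨j', k'⟩ hp' heq
    simp only [Finset.coe_sigma, Set.mem_sigma_iff, Finset.mem_coe, Finset.mem_range] at hp hp'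
    obtain ⟨h1, h2⟩ := hs j hp.1 k hp.2
    obtain ⟨h1', h2'⟩ := hs j' hp'.1 k' hp'.2
    simp only [Prod.mk.injEq] at heq
    obtain ⟨e1, e2⟩ := heq
    have f1 : 0 ≤ ⌊((k:ℝ) - j * ρ - A)/δ⌋ := Int.floor_nonneg.mpr (by positivity)
    have f2 : 0 ≤ ⌊((k':ℝ) - j' * ρ - A)/δ⌋ := Int.floor_nonneg.mpr (by positivity)
    have e3 : ⌊((k:ℝ) - j * ρ - A)/δ⌋ = ⌊((k':ℝ) - j' * ρ - A)/δ⌋ := by omega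
    have e4 := Int.abs_sub_lt_one_of_floor_eq_floor e3
    rw [← sub_div, abs_div, abs_of_pos hδ, div_lt_one hδ] at e4
    by_contra hne
    have hj : |(j:ℤ) - j'| < q := by
      have a1 := Nat.div_add_mod j q
      have a2 := Nat.div_add_mod j' q
      have a3 := Nat.mod_lt j hq
      have a4 := Nat.mod_lt j' hq
      rw [e1] at a1
      rw [abs_lt]
      constructor <;> omega
    have := best_approx hirr hmem n ((j:ℤ) - j') (k - k') hj (by
      by_contra hcon
      push Not at hcon
      apply hne
      obtain ⟨g1, g2⟩ := hcon
      have g3 : j = j' := by omega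
      have g4 : k = k' := by omega
      subst g3; subst g4; rfl)
    push_cast at this
    have e5 : |((j:ℝ) - j') * ρ - (k - k')| = |(k:ℝ) - j * ρ - A - (k' - j' * ρ - A)| := by
      rw [← abs_neg]; congr 1; ring
    rw [e5] at this
    linarith

/-- data of a semiconjugacy to rotation -/
structure SC (f : MCM) (ρ : ℝ) (h : ℝ → ℝ) : Prop where
  irr : Irrational ρ
  mem : ρ ∈ Ioo (0:ℝ) 1
  mono : Monotone h
  one : ∀ x, h (x+1) = h x + 1
  conj : ∀ x, h (f.F x) = h x + ρ

namespace MCM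
variable {f : MCM} {ρ : ℝ} {h : ℝ → ℝ}

lemma h_nat (H : SC f ρ h) (x : ℝ) (k : ℕ) : h (x + k) = h x + k := by
  induction k with
  | zero => simp
  | succ k ih => push_cast; rw [← add_assoc, H.one, ih]; ring

lemma h_int (H : SC f ρ h) (x : ℝ) (k : ℤ) : h (x + k) = h x + k := by
  obtain ⟨m, rfl | rfl⟩ := k.eq_nat_or_neg
  · exact_mod_cast h_nat H x m
  · have := h_nat H (x - m) m
    rw [sub_add_cancel] at this
    push_cast
    rw [← sub_eq_add_neg, this]; ring

lemma h_iter (H : SC f ρ h) (x : ℝ) (j : ℕ) : h (f.F^[j] x) = h x + j * ρ := by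
  induction j with
  | zero => simp
  | succ k ih => rw [Function.iterate_succ_apply', H.conj, ih]; push_cast; ring

lemma h_lt (H : SC f ρ h) {x y : ℝ} (hxy : h x < h y) : x < y := by
  by_contra hcon
  exact absurd (H.mono (not_lt.mp hcon)) (not_le.mpr hxy)

lemma chain_h (H : SC f ρ h) (L w : ℕ) : ∃ B, 1 ≤ B ∧ ∀ (n i : ℕ) a b c d,
    i ≤ L * qDen ρ (n+1) → ((a < b ∧ b < c ∧ c < d) ∨ (d < c ∧ c < b ∧ b < a)) →
    |h d - h a| ≤ w * |thetaN ρ n| →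
    cr (f.F^[i] a) (f.F^[i] b) (f.F^[i] c) (f.F^[i] d) ≤ B * cr a b c d := by
  obtain ⟨κ, hκ, hch⟩ := f.chain
  refine ⟨Real.exp (κ * ((L * (w+1) : ℕ) : ℝ)), Real.one_le_exp (by positivity), ?_⟩
  have main : ∀ (n i : ℕ) a b c d,
    i ≤ L * qDen ρ (n+1) → (a < b ∧ b < c ∧ c < d) →
    h d - h a ≤ w * |thetaN ρ n| →
    cr (f.F^[i] a) (f.F^[i] b) (f.F^[i] c) (f.F^[i] d)
      ≤ Real.exp (κ * ((L * (w+1) : ℕ) : ℝ)) * cr a b c d := by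
    intro n i a b c d hi ⟨h1, h2, h3⟩ hw
    refine hch i _ a b c d h1 h2 h3 fun t => ?_
    rw [← Nat.cast_sum]
    refine Nat.cast_le.mpr ?_
    refine mult_arith H.irr H.mem n i L w hi (h a - h t) _ ?_
    intro j hj k hk
    rw [Finset.mem_Icc, Int.ceil_le, Int.le_floor] at hk
    have e1 : h (f.F^[j] a) ≤ h (t + k) := H.mono (by linarith [hk.1])
    have e2 : h (t + k) ≤ h (f.F^[j] d) := H.mono (by linarith [hk.2])
    rw [h_iter H, h_int H] at e1 e2
    constructor <;> linarith
  intro n i a b c d hi ho hw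
  rcases ho with ho | ho
  · exact main n i a b c d hi ho ((le_abs_self _).trans hw)
  · rw [← cr_rev, ← cr_rev a]
    exact main n i d c b a hi ho (by rw [abs_sub_comm] at hw; exact (le_abs_self _).trans hw)

end MCM


/-- four points in monotone position -/
def Ord4 (a b c d : ℝ) : Prop := (a < b ∧ b < c ∧ c < d) ∨ (d < c ∧ c < b ∧ b < a)

lemma Ord4.abs_ad {a b c d : ℝ} (h : Ord4 a b c d) :
    |d - a| = |b - a| + |c - b| + |d - c| ∧ |c - a| = |b - a| + |c - b| ∧
    |d - b| = |c - b| + |d - c| ∧ 0 < |b - a| ∧ 0 < |c - b| ∧ 0 < |d - c| := by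
  rcases h with ⟨h1, h2, h3⟩ | ⟨h1, h2, h3⟩
  · rw [abs_of_pos (by linarith : 0 < d - a), abs_of_pos (by linarith : 0 < b - a),
      abs_of_pos (by linarith : 0 < c - b), abs_of_pos (by linarith : 0 < d - c),
      abs_of_pos (by linarith : 0 < c - a), abs_of_pos (by linarith : 0 < d - b)]
    refine ⟨?_, ?_, ?_, ?_, ?_, ?_⟩ <;> linarith
  · rw [abs_of_neg (by linarith : d - a < 0), abs_of_neg (by linarith : b - a < 0),
      abs_of_neg (by linarith : c - b < 0), abs_of_neg (by linarith : d - c < 0),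
      abs_of_neg (by linarith : c - a < 0), abs_of_neg (by linarith : d - b < 0)]
    refine ⟨?_, ?_, ?_, ?_, ?_, ?_⟩ <;> linarith

namespace MCM
variable (f : MCM) 

/-- the orbit point map `x ↦ F^m x - k` -/
def O (m k : ℤ) (x : ℝ) : ℝ := (f.E ^ m : ℝ ≃o ℝ) x - k

lemma E_sub (x : ℝ) (k : ℤ) : f.E (x - k) = f.E x - k := by
  have := f.F_add_int x (-k)
  push_cast at this
  simpa [sub_eq_add_neg] using this

lemma Epow_sub (m : ℤ) (x : ℝ) (k : ℤ) :
    (f.E ^ m : ℝ ≃o ℝ) (x - k) = (f.E ^ m : ℝ ≃o ℝ) x - k := by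
  induction m using Int.induction_on generalizing x with
  | zero => simp
  | succ m ih => rw [zpow_add_one]; simp only [RelIso.mul_apply]; rw [E_sub, ih]
  | pred m ih =>
    rw [zpow_sub_one]; simp only [RelIso.mul_apply]
    have : (f.E⁻¹ : ℝ ≃o ℝ) (x - k) = (f.E⁻¹ : ℝ ≃o ℝ) x - k := by
      apply f.E.injective
      rw [E_sub]
      simp [RelIso.apply_inv_self]
    rw [this, ih]

lemma O_O (m k m' k' : ℤ) (x : ℝ) : f.O m k (f.O m' k' x) = f.O (m+m') (k+k') x := by
  unfold O
  rw [Epow_sub, zpow_add, RelIso.mul_apply]; push_cast; ring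

lemma O_zero (x : ℝ) : f.O 0 0 x = x := by simp [O]

lemma O_nat (i : ℕ) (k : ℤ) (x : ℝ) : f.O i k x = f.F^[i] x - k := by
  unfold O
  congr 1
  rw [zpow_natCast]
  induction i generalizing x with
  | zero => simp
  | succ i ih => rw [pow_succ, RelIso.mul_apply, ih, Function.iterate_succ_apply]; rfl

lemma O_mono (m k : ℤ) : StrictMono (f.O m k) := fun x y hxy => by
  unfold O
  have := (f.E ^ m : ℝ ≃o ℝ).strictMono hxy
  linarith

lemma O_cont (m k : ℤ) : Continuous (f.O m k) :=
  (f.E ^ m : ℝ ≃o ℝ).continuous.sub continuous_const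

lemma O_add_one (m k : ℤ) (x : ℝ) : f.O m k (x+1) = f.O m k x + 1 := by
  unfold O
  have := f.Epow_sub m x (-1)
  push_cast at this
  rw [sub_neg_eq_add, sub_neg_eq_add] at this
  rw [this]; ring

lemma O_shift (m k l : ℤ) (x : ℝ) : f.O m (k + l) x = f.O m k x - l := by
  unfold O; push_cast; ring

variable {f} {ρ : ℝ} {h : ℝ → ℝ}

lemma h_O (H : SC f ρ h) (m k : ℤ) (x : ℝ) : h (f.O m k x) = h x + m * ρ - k := by
  have h1 : ∀ y, h (y - k) = h y - k := fun y => by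
    have := h_int H y (-k); push_cast at this; simpa [sub_eq_add_neg] using this
  unfold O
  rw [h1]; congr 1
  obtain ⟨j, rfl | rfl⟩ := m.eq_nat_or_neg
  · have := f.O_nat j 0 x
    simp only [O, Int.cast_zero, sub_zero] at this
    rw [this, h_iter H]; simp
  · set y := (f.E ^ (-(j:ℤ)) : ℝ ≃o ℝ) x with hy
    have h2 : (f.E ^ (j:ℤ) : ℝ ≃o ℝ) y = x := by
      rw [hy, ← RelIso.mul_apply, ← zpow_add]; simp
    have := f.O_nat j 0 y
    simp only [O, Int.cast_zero, sub_zero] at this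
    rw [this] at h2
    have h3 := h_iter H y j
    rw [h2] at h3
    push_cast; linarith

lemma ord4_h (H : SC f ρ h) {a b c d t : ℝ} (h1 : 0 < (h b - h a) * t)
    (h2 : 0 < (h c - h b) * t) (h3 : 0 < (h d - h c) * t) : Ord4 a b c d := by
  have key : ∀ {u v}, 0 < t → 0 < (h v - h u) * t → u < v := fun ht hh =>
    h_lt H (by nlinarith)
  have key2 : ∀ {u v}, t < 0 → 0 < (h v - h u) * t → v < u := fun ht hh =>
    h_lt H (by nlinarith)
  rcases lt_trichotomy t 0 with ht | ht | ht
  · exact Or.inr ⟨key2 ht h3, key2 ht h2, key2 ht h1⟩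
  · simp [ht] at h1
  · exact Or.inl ⟨key ht h1, key ht h2, key ht h3⟩

/-- Pull back of cross-ratio information. -/
lemma pull (H : SC f ρ h) (L w : ℕ) : ∃ B, 1 ≤ B ∧ ∀ (n i : ℕ) (k : ℤ) (a b c d M₁ M₂ : ℝ),
    i ≤ L * qDen ρ (n+1) → Ord4 a b c d → |h d - h a| ≤ w * |thetaN ρ n| →
    0 ≤ M₁ → 0 ≤ M₂ →
    |f.O i k c - f.O i k a| ≤ M₁ * |f.O i k b - f.O i k a| →
    |f.O i k d - f.O i k b| ≤ M₂ * |f.O i k d - f.O i k c| →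
    |c - a| ≤ M₁ * M₂ * B * |b - a| ∧ |d - b| ≤ M₁ * M₂ * B * |d - c| := by
  obtain ⟨B, hB, hch⟩ := chain_h H L w
  refine ⟨B, hB, ?_⟩
  intro n i k a b c d M₁ M₂ hi ho hw hM₁ hM₂ e1 e2
  have hc := hch n i a b c d hi ho hw
  have hO : Ord4 (f.O i k a) (f.O i k b) (f.O i k c) (f.O i k d) := by
    rcases ho with ⟨h1, h2, h3⟩ | ⟨h1, h2, h3⟩
    · exact Or.inl ⟨f.O_mono _ _ h1, f.O_mono _ _ h2, f.O_mono _ _ h3⟩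
    · exact Or.inr ⟨f.O_mono _ _ h1, f.O_mono _ _ h2, f.O_mono _ _ h3⟩
  have hcr : cr (f.O i k a) (f.O i k b) (f.O i k c) (f.O i k d)
      = cr (f.F^[i] a) (f.F^[i] b) (f.F^[i] c) (f.F^[i] d) := by
    simp only [O_nat, cr, sub_sub_sub_cancel_right]
  rw [← hcr] at hc
  obtain ⟨-, g1, g2, p1, p2, p3⟩ := hO.abs_ad
  obtain ⟨-, g1', g2', p1', p2', p3'⟩ := ho.abs_ad
  have k1 : 1 ≤ M₁ * M₂ * cr (f.O i k a) (f.O i k b) (f.O i k c) (f.O i k d) := by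
    unfold cr
    rw [mul_div_assoc', le_div_iff₀ (mul_pos (by linarith) (by linarith)), one_mul]
    calc _ ≤ _ := mul_le_mul e1 e2 (by positivity) (by positivity)
      _ = _ := by ring
  have k2 : 1 ≤ M₁ * M₂ * B * cr a b c d := by
    refine k1.trans ?_
    rw [mul_assoc (M₁ * M₂)]
    exact mul_le_mul_of_nonneg_left hc (by positivity)
  have q1 : cr a b c d ≤ |b - a| / |c - a| := by
    unfold cr
    rw [div_le_div_iff₀ (mul_pos (by linarith) (by linarith)) (by linarith)]
    have : |d - c| ≤ |d - b| := by linarith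
    have := mul_le_mul_of_nonneg_left this (by positivity : 0 ≤ |b - a| * |c - a|)
    linarith
  have q2 : cr a b c d ≤ |d - c| / |d - b| := by
    unfold cr
    rw [div_le_div_iff₀ (mul_pos (by linarith) (by linarith)) (by linarith)]
    have : |b - a| ≤ |c - a| := by linarith
    have := mul_le_mul_of_nonneg_left this (by positivity : 0 ≤ |d - c| * |d - b|)
    linarith
  have hMB : 0 ≤ M₁ * M₂ * B := by positivity
  constructor
  · have := k2.trans (mul_le_mul_of_nonneg_left q1 hMB)
    rw [mul_div_assoc', le_div_iff₀ (by linarith)] at this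
    linarith
  · have := k2.trans (mul_le_mul_of_nonneg_left q2 hMB)
    rw [mul_div_assoc', le_div_iff₀ (by linarith)] at this
    linarith

end MCM

namespace MCM

/-- iterates of the closest return `G_n` -/
def Gp (f : MCM) (ρ : ℝ) (n : ℕ) (j : ℤ) (x : ℝ) : ℝ :=
  f.O (j * qDen ρ n) (j * pNum ρ n) x

variable {f : MCM} {ρ : ℝ} {h : ℝ → ℝ}

lemma Gp_zero (n : ℕ) (x : ℝ) : f.Gp ρ n 0 x = x := by simp [Gp, O_zero]

lemma Gp_Gp (n : ℕ) (i j : ℤ) (x : ℝ) : f.Gp ρ n i (f.Gp ρ n j x) = f.Gp ρ n (i+j) x := by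
  unfold Gp; rw [O_O]; congr 1 <;> ring

lemma Gp_O (n : ℕ) (i m k : ℤ) (x : ℝ) :
    f.Gp ρ n i (f.O m k x) = f.O m k (f.Gp ρ n i x) := by
  unfold Gp; rw [O_O, O_O]; congr 1 <;> ring

lemma Gp_comm (n n' : ℕ) (i j : ℤ) (x : ℝ) :
    f.Gp ρ n i (f.Gp ρ n' j x) = f.Gp ρ n' j (f.Gp ρ n i x) := Gp_O n i _ _ x

lemma h_Gp (H : SC f ρ h) (n : ℕ) (j : ℤ) (x : ℝ) :
    h (f.Gp ρ n j x) = h x + j * thetaN ρ n := by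
  unfold Gp; rw [h_O H]; unfold thetaN; push_cast; ring

lemma exists_min (n : ℕ) : ∃ x₀, ∀ z, |f.Gp ρ n 1 x₀ - x₀| ≤ |f.Gp ρ n 1 z - z| := by
  have hc : Continuous fun z => |f.Gp ρ n 1 z - z| :=
    ((f.O_cont _ _).sub continuous_id).abs
  have hp : Function.Periodic (fun z => |f.Gp ρ n 1 z - z|) 1 := fun z => by
    simp only [Gp, O_add_one]; congr 1; ring
  obtain ⟨x₀, -, hx⟩ := isCompact_Icc.exists_isMinOn (nonempty_Icc.mpr (zero_le_one (α := ℝ)))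
    hc.continuousOn
  refine ⟨x₀, fun z => ?_⟩
  obtain ⟨y, hy, e⟩ := hp.exists_mem_Ico₀ one_pos z
  have := hx ⟨hy.1, hy.2.le⟩
  exact le_of_le_of_eq this e.symm

lemma ord4_G (H : SC f ρ h) (n : ℕ) (x : ℝ) (j : ℤ) :
    Ord4 (f.Gp ρ n j x) (f.Gp ρ n (j+1) x) (f.Gp ρ n (j+2) x) (f.Gp ρ n (j+3) x) := by
  have hθ := theta_ne H.irr H.mem n
  have := mul_self_pos.mpr hθ
  refine ord4_h H (t := thetaN ρ n) ?_ ?_ ?_ <;> simp only [h_Gp H] <;> push_cast <;> nlinarith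

lemma thmA (H : SC f ρ h) : ∃ K, 1 ≤ K ∧ ∀ n y,
    |f.Gp ρ n 2 y - y| ≤ K * |f.Gp ρ n 1 y - y| ∧
    |f.Gp ρ n 2 y - y| ≤ K * |f.Gp ρ n 2 y - f.Gp ρ n 1 y| := by
  obtain ⟨B, hB, hpull⟩ := pull H 10 3
  obtain ⟨C, hC⟩ : ∃ C, C = 4 * B := ⟨_, rfl⟩
  have hC1 : 1 ≤ C := by linarith
  obtain ⟨T, hT⟩ : ∃ T, T = 12 * C^10 := ⟨_, rfl⟩
  have hT1 : 1 ≤ T := by rw [hT]; nlinarith [one_le_pow₀ hC1 (n := 10)]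
  have main : ∀ n y, |f.Gp ρ n 2 y - y| ≤ T * T * B * |f.Gp ρ n 1 y - y| ∧
      |f.Gp ρ n 3 y - f.Gp ρ n 1 y| ≤ T * T * B * |f.Gp ρ n 3 y - f.Gp ρ n 2 y| := by
    intro n y
    have hθ := theta_ne H.irr H.mem n
    have hδ := abs_pos.mpr hθ
    obtain ⟨x₀, hx₀⟩ := exists_min (f := f) (ρ := ρ) n
    set P : ℤ → ℝ := fun j => f.Gp ρ n j x₀ with hP
    set d0 := |f.Gp ρ n 1 x₀ - x₀| with hd0
    have hmin : ∀ j z, d0 ≤ |f.Gp ρ n (j+1) z - f.Gp ρ n j z| := fun j z => by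
      have := hx₀ (f.Gp ρ n j z)
      rwa [Gp_Gp, add_comm 1 j] at this
    have hd0pos : 0 ≤ d0 := abs_nonneg _
    have hJ0 : |P 1 - P 0| = d0 := by simp only [hP, Gp_zero, hd0]
    have hJ : ∀ j : ℕ, j ≤ 10 → |P (-(j:ℤ)+1) - P (-(j:ℤ))| ≤ C * |P (-(j:ℤ)+2) - P (-(j:ℤ)+1)| := by
      intro j hj
      have ho := ord4_G H n x₀ (-(j:ℤ)-1)
      have e1 : (-(j:ℤ) - 1 + 1) = -(j:ℤ) := by ring
      have e2 : (-(j:ℤ) - 1 + 2) = -(j:ℤ) + 1 := by ring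
      have e3 : (-(j:ℤ) - 1 + 3) = -(j:ℤ) + 2 := by ring
      rw [e1, e2, e3] at ho
      have im : ∀ l : ℤ, f.O ((j * qDen ρ n : ℕ) : ℤ) (j * pNum ρ n) (P l) = P (l + j) := by
        intro l
        have := Gp_Gp (f := f) (ρ := ρ) n j l x₀
        rw [add_comm] at this
        simp only [hP]
        rw [← this]
        rw [Gp]; push_cast; rfl
      have ea : (-(j:ℤ) - 1 + j) = -1 := by ring
      have eb : (-(j:ℤ) + j) = 0 := by ring
      have ec : (-(j:ℤ) + 1 + j) = 1 := by ring
      have ed : (-(j:ℤ) + 2 + j) = 2 := by ring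
      have o1 := ord4_G H n x₀ (-1)
      obtain ⟨-, g1, g2, -, -, -⟩ := o1.abs_ad
      have m1 := hmin (-1) x₀
      have m2 := hmin 1 x₀
      have r := hpull n (j * qDen ρ n) (j * pNum ρ n) _ _ _ _ 2 2
        (Nat.mul_le_mul hj (qDen_pos H.irr H.mem n).2) ho (by
          rw [h_Gp H, h_Gp H]; push_cast
          rw [show h x₀ + (-(j:ℝ) + 2) * thetaN ρ n - (h x₀ + (-(j:ℝ) - 1) * thetaN ρ n)
            = 3 * thetaN ρ n by ring, abs_mul]; simp) (by norm_num) (by norm_num)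
        (by
          change |f.O _ _ (P _) - f.O _ _ (P _)| ≤ 2 * |f.O _ _ (P _) - f.O _ _ (P _)|
          rw [im, im, im]
          simp only [ea, eb, ec, ed]
          norm_num at g1 m1
          change |P 1 - P (-1)| = |P 0 - P (-1)| + |P 1 - P 0| at g1
          change d0 ≤ |P 0 - P (-1)| at m1
          linarith)
        (by
          change |f.O _ _ (P _) - f.O _ _ (P _)| ≤ 2 * |f.O _ _ (P _) - f.O _ _ (P _)|
          rw [im, im, im]
          simp only [ea, eb, ec, ed]
          norm_num at g2 m2
          change |P 2 - P 0| = |P 1 - P 0| + |P 2 - P 1| at g2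
          change d0 ≤ |P 2 - P 1| at m2
          linarith)
      obtain ⟨-, r2⟩ := r
      obtain ⟨-, -, g2', -, -, -⟩ := ho.abs_ad
      rw [hC]
      change |P _ - P _| ≤ 2 * 2 * B * |P _ - P _| at r2
      change |P _ - P _| = |P _ - P _| + |P _ - P _| at g2'
      linarith [abs_nonneg (P (-(j:ℤ)+2) - P (-(j:ℤ)+1))]
    have hJ2 : ∀ j : ℕ, j ≤ 10 → |P (-(j:ℤ)+1) - P (-(j:ℤ))| ≤ C^j * d0 := by
      intro j
      induction j with
      | zero => intro _; simp [hJ0]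
      | succ j ih =>
        intro hj
        have := hJ (j+1) (by omega)
        have ih := ih (by omega)
        have e : (-((j+1:ℕ):ℤ)+2) = -(j:ℤ)+1 := by push_cast; ring
        have e' : (-((j+1:ℕ):ℤ)+1) = -(j:ℤ) := by push_cast; ring
        rw [e, e'] at this
        rw [e', pow_succ]
        calc _ ≤ _ := this
          _ ≤ C * (C^j * d0) := mul_le_mul_of_nonneg_left ih (by linarith)
          _ = _ := by ring
    have hJ3 : ∀ j : ℕ, j ≤ 10 → |P 1 - P (-(j:ℤ))| ≤ (j+1) * (C^10 * d0) := by
      intro j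
      induction j with
      | zero =>
        intro _
        simp only [Nat.cast_zero, neg_zero, hJ0, zero_add, one_mul]
        nlinarith [one_le_pow₀ hC1 (n := 10)]
      | succ j ih =>
        intro hj
        have ih := ih (by omega)
        have := hJ2 (j+1) (by omega)
        have e' : (-((j+1:ℕ):ℤ)+1) = -(j:ℤ) := by push_cast; ring
        rw [e'] at this
        have h2 : C^(j+1) * d0 ≤ C^10 * d0 :=
          mul_le_mul_of_nonneg_right (pow_le_pow_right₀ hC1 hj) hd0pos
        have h3 := abs_sub_le (P 1) (P (-(j:ℤ))) (P (-((j+1:ℕ):ℤ)))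
        push_cast at *
        linarith
    have hfin := hJ3 10 le_rfl
    -- locate z
    obtain ⟨i, hi, k, hik⟩ : ∃ i : ℕ, i ≤ qDen ρ (n+1) ∧ ∃ k : ℤ,
        ∃ τ, -9 ≤ τ ∧ τ ≤ -5 ∧ h (f.O i k y) = h x₀ + τ * thetaN ρ n := by
      rcases lt_or_gt_of_ne hθ with hneg | hpos
      · obtain ⟨i, hi, k, k1, k2⟩ := coverage H.irr H.mem n (h y - h x₀ + 5 * thetaN ρ n)
        refine ⟨i, hi, k, (h y + i * ρ - k - h x₀) / thetaN ρ n, ?_, ?_, ?_⟩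
        · rw [abs_of_neg hneg] at k2
          rw [le_div_iff_of_neg hneg]; linarith
        · rw [div_le_iff_of_neg hneg]; linarith
        · rw [h_O H, div_mul_cancel₀ _ hθ]; push_cast; ring
      · obtain ⟨i, hi, k, k1, k2⟩ := coverage H.irr H.mem n (h y - h x₀ + 9 * thetaN ρ n)
        refine ⟨i, hi, k, (h y + i * ρ - k - h x₀) / thetaN ρ n, ?_, ?_, ?_⟩
        · rw [le_div_iff₀ hpos]; linarith
        · rw [abs_of_pos hpos] at k2
          rw [div_le_iff₀ hpos]; linarith
        · rw [h_O H, div_mul_cancel₀ _ hθ]; push_cast; ring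
    obtain ⟨τ, t1, t2, t3⟩ := hik
    set z := f.O i k y with hz
    have hsq := mul_self_pos.mpr hθ
    have oz : Ord4 (P (-10)) z (f.Gp ρ n 3 z) (P 1) := by
      refine ord4_h H (t := thetaN ρ n) ?_ ?_ ?_ <;> simp only [hP, h_Gp H, t3] <;>
        push_cast <;> nlinarith
    obtain ⟨g0, -, -, v1, v2, v3⟩ := oz.abs_ad
    have tot : |f.Gp ρ n 3 z - z| ≤ T * d0 := by
      push_cast at hfin
      rw [hT]
      nlinarith [one_le_pow₀ hC1 (n := 10), mul_nonneg (zero_le_one.trans (one_le_pow₀ hC1 (n := 10))) hd0pos]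
    have o1 := ord4_G H n z 0
    have o2 := ord4_G H n y 0
    simp only [zero_add, Gp_zero] at o1 o2
    obtain ⟨g1, g2, g3, v1, v2, v3⟩ := o1.abs_ad
    have m1 := hmin 0 z
    have m2 := hmin 2 z
    norm_num [Gp_zero] at m1 m2
    have r := hpull n i k _ _ _ _ T T (by omega) o2 (by
      rw [h_Gp H, add_sub_cancel_left, abs_mul]; simp) (by linarith) (by linarith)
      (by
        rw [← Gp_O, ← Gp_O, ← hz]
        have := mul_le_mul_of_nonneg_left m1 (by linarith : 0 ≤ T)
        linarith)
      (by
        rw [← Gp_O, ← Gp_O, ← Gp_O, ← hz]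
        have := mul_le_mul_of_nonneg_left m2 (by linarith : 0 ≤ T)
        linarith)
    exact r
  refine ⟨T * T * B, ?_, fun n y => ⟨(main n y).1, ?_⟩⟩
  · have : 1 ≤ T * T := by nlinarith
    nlinarith
  · have := (main n (f.Gp ρ n (-1) y)).2
    simp only [Gp_Gp] at this
    norm_num [Gp_zero] at this
    exact this

end MCM

namespace MCM

lemma crit_power (f : MCM) (p : ℝ) (hp : deriv f.F p = 0) : ∃ s α β : ℝ, 1 < s ∧ 0 < α ∧ 0 < β ∧
    ∀ x, |x - p| ≤ 2 → α * |x - p| ^ s ≤ |f.F x - f.F p| ∧ |f.F x - f.F p| ≤ β * |x - p| ^ s := by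
  obtain ⟨s, al, be, ε, hs, hal, hbe, hε, hloc⟩ := f.crit_local p hp
  have pw : ∀ u : ℝ, 0 < u → u ^ (s - 1) * u = u ^ s := fun u hu => by
    conv_lhs => rw [← Real.rpow_one u, ← Real.rpow_mul hu.le, one_mul, ← Real.rpow_add hu]
    congr 1; ring
  have up : ∀ x, |x - p| < ε → |f.F x - f.F p| ≤ be * |x - p| ^ s := by
    intro x hx
    have hb : ∀ ξ, |ξ - p| ≤ |x - p| → deriv f.F ξ ≤ be * |x - p| ^ (s-1) := fun ξ hξ =>
      ((hloc ξ (hξ.trans_lt hx)).1.2).trans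
        (mul_le_mul_of_nonneg_left (Real.rpow_le_rpow (abs_nonneg _) hξ (by linarith)) hbe.le)
    rcases lt_trichotomy x p with h | h | h
    · obtain ⟨ξ, hξ, e⟩ := f.mvt h
      have := hb ξ (by rw [abs_of_neg (by linarith [hξ.2]), abs_of_neg (by linarith)]; linarith [hξ.1])
      rw [abs_sub_comm, e, abs_of_nonneg (mul_nonneg (f.dF_nonneg _) (by linarith)),
        ← pw _ (abs_pos.mpr (by linarith)), ← mul_assoc]
      have e2 : |x - p| = p - x := by rw [abs_sub_comm, abs_of_pos (by linarith)]
      rw [e2] at this ⊢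
      exact mul_le_mul_of_nonneg_right this (by linarith)
    · subst h; simp; positivity
    · obtain ⟨ξ, hξ, e⟩ := f.mvt h
      have := hb ξ (by rw [abs_of_pos (by linarith [hξ.1]), abs_of_pos (by linarith)]; linarith [hξ.2])
      rw [e, abs_of_nonneg (mul_nonneg (f.dF_nonneg _) (by linarith)),
        ← pw _ (abs_pos.mpr (by linarith)), ← mul_assoc]
      have e2 : |x - p| = x - p := abs_of_pos (by linarith)
      rw [e2] at this ⊢
      exact mul_le_mul_of_nonneg_right this (by linarith)
  have lo : ∀ x, |x - p| < ε → al * (|x - p|/2) ^ s ≤ |f.F x - f.F p| := by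
    intro x hx
    have hb : ∀ ξ, |ξ - p| ≤ |x - p| → |x - p|/2 ≤ |ξ - p| →
        al * (|x - p|/2) ^ (s-1) ≤ deriv f.F ξ := fun ξ hξ hξ2 =>
      (mul_le_mul_of_nonneg_left (Real.rpow_le_rpow (by positivity) hξ2 (by linarith)) hal.le).trans
      (hloc ξ (hξ.trans_lt hx)).1.1
    rcases lt_trichotomy x p with h | h | h
    · obtain ⟨ξ, hξ, e⟩ := f.mvt (show x < (x+p)/2 by linarith)
      have e2 : |x - p| = p - x := by rw [abs_sub_comm, abs_of_pos (by linarith)]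
      have e3 : |ξ - p| = p - ξ := by rw [abs_sub_comm, abs_of_pos (by linarith [hξ.2])]
      have := hb ξ (by rw [e2, e3]; linarith [hξ.1]) (by rw [e2, e3]; linarith [hξ.2])
      have m := f.mono (show (x+p)/2 < p by linarith)
      have m' := f.mono h
      rw [abs_sub_comm (f.F x), abs_of_pos (by linarith : 0 < f.F p - f.F x),
        ← pw _ (by rw [e2]; linarith), ← mul_assoc]
      have := mul_le_mul_of_nonneg_right this (by positivity : 0 ≤ |x - p|/2)
      have e4 : (x + p)/2 - x = |x - p|/2 := by rw [e2]; ring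
      rw [e4] at e
      linarith
    · subst h
      simp only [sub_self, abs_zero, zero_div]
      rw [Real.zero_rpow (by linarith)]; simp
    · obtain ⟨ξ, hξ, e⟩ := f.mvt (show (x+p)/2 < x by linarith)
      have e2 : |x - p| = x - p := by rw [abs_of_pos (by linarith)]
      have e3 : |ξ - p| = ξ - p := by rw [abs_of_pos (by linarith [hξ.1])]
      have := hb ξ (by rw [e2, e3]; linarith [hξ.2]) (by rw [e2, e3]; linarith [hξ.1])
      have m := f.mono (show p < (x+p)/2 by linarith)
      have m' := f.mono h
      rw [abs_of_pos (by linarith : 0 < f.F x - f.F p),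
        ← pw _ (by rw [e2]; linarith), ← mul_assoc]
      have := mul_le_mul_of_nonneg_right this (by positivity : 0 ≤ |x - p|/2)
      have e4 : x - (x + p)/2 = |x - p|/2 := by rw [e2]; ring
      rw [e4] at e
      linarith
  have hεs : 0 < ε ^ s := Real.rpow_pos_of_pos hε s
  refine ⟨s, min (al / 2^s) (al * (ε/2/2)^s / 2^s), max be (4 / ε^s), hs, ?_, ?_, ?_⟩
  · exact lt_min (by positivity) (by positivity)
  · exact lt_max_of_lt_left hbe
  intro x hx
  have hx0 : 0 ≤ |x - p| ^ s := Real.rpow_nonneg (abs_nonneg _) s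
  have h2s : (0:ℝ) < 2 ^ s := by positivity
  by_cases hxe : |x - p| < ε
  · constructor
    · refine le_trans (mul_le_mul_of_nonneg_right (min_le_left _ _) hx0) ?_
      have := lo x hxe
      rw [Real.div_rpow (abs_nonneg _) (by norm_num)] at this
      calc _ = al * (|x - p| ^ s / 2 ^ s) := by ring
        _ ≤ _ := this
    · exact (up x hxe).trans (mul_le_mul_of_nonneg_right (le_max_left _ _) hx0)
  · push Not at hxe
    have b1 : ε ^ s ≤ |x - p| ^ s := Real.rpow_le_rpow hε.le hxe (by linarith)
    have b2 : |x - p| ^ s ≤ 2 ^ s := Real.rpow_le_rpow (abs_nonneg _) hx (by linarith)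
    constructor
    · refine le_trans (mul_le_mul_of_nonneg_right (min_le_right _ _) hx0) ?_
      have : al * (ε/2/2)^s ≤ |f.F x - f.F p| := by
        rcases le_abs'.mp hxe with h | h
        · have l := lo (p - ε/2) (by rw [sub_sub_cancel_left, abs_neg, abs_of_pos (by linarith)]; linarith)
          rw [sub_sub_cancel_left, abs_neg, abs_of_pos (by linarith : 0 < ε/2)] at l
          have m1 := f.mono (show p - ε/2 < p by linarith)
          have m2 := f.mono (show x < p - ε/2 by linarith)
          rw [abs_of_neg (by linarith)] at l
          rw [abs_of_neg (by linarith)]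
          linarith
        · have l := lo (p + ε/2) (by rw [add_sub_cancel_left, abs_of_pos (by linarith)]; linarith)
          rw [add_sub_cancel_left, abs_of_pos (by linarith : 0 < ε/2)] at l
          have m1 := f.mono (show p < p + ε/2 by linarith)
          have m2 := f.mono (show p + ε/2 < x by linarith)
          rw [abs_of_pos (by linarith)] at l
          rw [abs_of_pos (by linarith)]
          linarith
      refine le_trans ?_ this
      rw [div_mul_eq_mul_div, div_le_iff₀ h2s]
      exact mul_le_mul_of_nonneg_left b2 (by positivity)
    · have : |f.F x - f.F p| ≤ 4 := by
        have e1 := f.F_add_int p 2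
        have e2 := f.F_add_int p (-2)
        push_cast at e1 e2
        rw [abs_le] at hx
        have m1 := f.mono.monotone (show x ≤ p + 2 by linarith [hx.2])
        have m2 := f.mono.monotone (show p + -2 ≤ x by linarith [hx.1])
        rw [abs_le]; constructor <;> linarith
      refine this.trans ?_
      refine le_trans ?_ (mul_le_mul_of_nonneg_right (le_max_right _ _) hx0)
      rw [div_mul_eq_mul_div, le_div_iff₀ hεs]
      linarith

variable {f : MCM} {ρ : ℝ} {h : ℝ → ℝ}

lemma thmA2 (H : SC f ρ h) : ∃ K, 1 ≤ K ∧ ∀ n y,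
    |f.Gp ρ n 2 y - y| ≤ K * |f.Gp ρ n 1 y - y| ∧
    |f.Gp ρ n 2 y - y| ≤ K * |f.Gp ρ n 2 y - f.Gp ρ n 1 y| ∧
    |f.Gp ρ n 1 y - f.Gp ρ n (-1) y| ≤ K * |f.Gp ρ n 1 y - y| ∧
    |f.Gp ρ n 1 y - f.Gp ρ n (-1) y| ≤ K * |y - f.Gp ρ n (-1) y| ∧
    |f.Gp ρ n 2 y - f.Gp ρ n 1 y| ≤ K * |f.Gp ρ n 1 y - y| ∧
    |f.Gp ρ n 1 y - y| ≤ K * |f.Gp ρ n 2 y - f.Gp ρ n 1 y| ∧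
    |f.Gp ρ n 1 y - y| ≤ K * |y - f.Gp ρ n (-1) y| ∧
    |y - f.Gp ρ n (-1) y| ≤ K * |f.Gp ρ n 1 y - y| := by
  obtain ⟨K, hK, hA⟩ := thmA H
  refine ⟨K, hK, fun n y => ?_⟩
  have a1 := hA n y
  have a2 := hA n (f.Gp ρ n (-1) y)
  simp only [Gp_Gp] at a2
  norm_num [Gp_zero] at a2
  have o1 := (ord4_G H n y 0).abs_ad
  have o2 := (ord4_G H n y (-1)).abs_ad
  norm_num [Gp_zero] at o1 o2
  obtain ⟨-, o11, -, o12, o13, o14⟩ := o1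
  obtain ⟨-, o21, -, o22, o23, o24⟩ := o2
  have o12 := abs_nonneg (f.Gp ρ n 1 y - y)
  have o13 := abs_nonneg (f.Gp ρ n 2 y - f.Gp ρ n 1 y)
  have o14 := abs_nonneg (y - f.Gp ρ n (-1) y)
  refine ⟨a1.1, a1.2, a2.2, a2.1, ?_, ?_, ?_, ?_⟩ <;> linarith [a1.1, a1.2, a2.1, a2.2]

lemma th_signs (H : SC f ρ h) (n : ℕ) : 0 < -thetaN ρ (n+1) * thetaN ρ n ∧
    0 < (thetaN ρ n + thetaN ρ (n+1)) * thetaN ρ n ∧ 0 < thetaN ρ n * thetaN ρ n := by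
  have h1 := theta_sign H.irr H.mem n
  have h2 := theta_abs_lt H.irr H.mem n
  have h3 := mul_self_pos.mpr (theta_ne H.irr H.mem n)
  refine ⟨by linarith, ?_, h3⟩
  have h4 : |thetaN ρ (n+1)| * |thetaN ρ n| < |thetaN ρ n| * |thetaN ρ n| :=
    mul_lt_mul_of_pos_right h2 (abs_pos.mpr (theta_ne H.irr H.mem n))
  rw [← abs_mul, abs_mul_abs_self] at h4
  linarith [neg_abs_le (thetaN ρ (n+1) * thetaN ρ n)]

/-- `[Gy, gGy] ⊂ [g⁻¹y, gy]` -/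
lemma Gstep_le (H : SC f ρ h) (n : ℕ) (y : ℝ) :
    |f.Gp ρ n 1 (f.Gp ρ (n+1) 1 y) - f.Gp ρ (n+1) 1 y| ≤ |f.Gp ρ n 1 y - f.Gp ρ n (-1) y| := by
  obtain ⟨s1, s2, s3⟩ := th_signs H n
  have o : Ord4 (f.Gp ρ n (-1) y) (f.Gp ρ (n+1) 1 y) (f.Gp ρ n 1 (f.Gp ρ (n+1) 1 y))
      (f.Gp ρ n 1 y) := by
    refine ord4_h H (t := thetaN ρ n) ?_ ?_ ?_ <;> simp only [h_Gp H] <;> push_cast <;> nlinarith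
  obtain ⟨g, -, -, p1, p2, p3⟩ := o.abs_ad
  linarith

/-- `[Gy, y] ⊂ [g⁻¹y, gy]` -/
lemma G_le (H : SC f ρ h) (n : ℕ) (y : ℝ) :
    |f.Gp ρ (n+1) 1 y - y| ≤ |f.Gp ρ n 1 y - f.Gp ρ n (-1) y| := by
  obtain ⟨s1, s2, s3⟩ := th_signs H n
  have o : Ord4 (f.Gp ρ n (-1) y) (f.Gp ρ (n+1) 1 y) y (f.Gp ρ n 1 y) := by
    refine ord4_h H (t := thetaN ρ n) ?_ ?_ ?_ <;> simp only [h_Gp H] <;> push_cast <;> nlinarith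
  obtain ⟨g, -, -, p1, p2, p3⟩ := o.abs_ad
  rw [abs_sub_comm]
  linarith

lemma key_crit (H : SC f ρ h) (p : ℝ) (hp : deriv f.F p = 0) : ∃ K, 1 ≤ K ∧ ∀ n,
    |f.Gp ρ n 1 p - p| ≤ K * |f.Gp ρ (n+1) 1 p - p| := by
  obtain ⟨K, hK, hA⟩ := thmA2 H
  obtain ⟨B, hB, hpull⟩ := pull H 10 3
  obtain ⟨s, α, β, hs, hα, hβ, hpow⟩ := f.crit_power p hp
  obtain ⟨D, hD⟩ : ∃ D, D = K * K * B * β * K ^ s := ⟨_, rfl⟩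
  have hK0 : 0 < K := by linarith
  have hDpos : 0 < D := by rw [hD]; positivity
  refine ⟨max 1 ((D/α) ^ (1/(s-1))), le_max_left _ _, fun n => ?_⟩
  obtain ⟨s1, s2, s3⟩ := th_signs H n
  have o0 : Ord4 p (f.Gp ρ (n+1) (-1) p) (f.Gp ρ n 1 p) (f.Gp ρ n 2 p) := by
    refine ord4_h H (t := thetaN ρ n) ?_ ?_ ?_ <;> simp only [h_Gp H] <;> push_cast <;> nlinarith
  obtain ⟨-, u1, u2, p1, p2, p3⟩ := o0.abs_ad
  have o1 : Ord4 (f.O 1 0 p) (f.O 1 0 (f.Gp ρ (n+1) (-1) p)) (f.O 1 0 (f.Gp ρ n 1 p))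
      (f.O 1 0 (f.Gp ρ n 2 p)) := by
    rcases o0 with ⟨h1, h2, h3⟩ | ⟨h1, h2, h3⟩
    · exact Or.inl ⟨f.O_mono _ _ h1, f.O_mono _ _ h2, f.O_mono _ _ h3⟩
    · exact Or.inr ⟨f.O_mono _ _ h1, f.O_mono _ _ h2, f.O_mono _ _ h3⟩
  set q := qDen ρ (n+1) with hq
  have hq1 : 1 ≤ q := (qDen_pos H.irr H.mem (n+1)).1
  have im : ∀ x, f.O ((q-1 : ℕ):ℤ) (pNum ρ (n+1)) (f.O 1 0 x) = f.Gp ρ (n+1) 1 x := by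
    intro x
    rw [O_O, Gp]
    congr 1
    · rw [Nat.cast_sub hq1]; push_cast; ring
    · ring
  set ℓ := |f.Gp ρ n 1 p - p| with hℓ
  set ε := |f.Gp ρ (n+1) 1 p - p| with hε
  have hεpos : 0 < ε := by
    rw [hε, abs_pos, sub_ne_zero]
    intro hc
    have := congrArg h hc
    rw [h_Gp H] at this
    have := theta_ne H.irr H.mem (n+1)
    simp at *
    contradiction
  have hℓpos : 0 < ℓ := by linarith
  obtain ⟨-, -, A3, A4, -, -, A7, A8⟩ := hA n p
  obtain ⟨-, -, A3', A4', -, -, A7', A8'⟩ := hA (n+1) p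
  obtain ⟨-, B2, -, -, -, -, -, -⟩ := hA n (f.Gp ρ (n+1) 1 p)
  have ob : Ord4 (f.Gp ρ (n+1) 1 p) p (f.Gp ρ n 1 (f.Gp ρ (n+1) 1 p))
      (f.Gp ρ n 2 (f.Gp ρ (n+1) 1 p)) := by
    refine ord4_h H (t := thetaN ρ n) ?_ ?_ ?_ <;> simp only [h_Gp H] <;> push_cast <;> nlinarith
  obtain ⟨v0, v1, v2, v3, v4, v5⟩ := ob.abs_ad
  have r := (hpull n (q-1) (pNum ρ (n+1)) _ _ _ _ (K * ℓ / ε) K (by omega) o1 (by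
      rw [h_O H, h_O H, h_Gp H]
      rw [show h p + ((2:ℤ):ℝ) * thetaN ρ n + ((1:ℤ):ℝ) * ρ - ((0:ℤ):ℝ) -
        (h p + ((1:ℤ):ℝ) * ρ - ((0:ℤ):ℝ)) = 2 * thetaN ρ n by push_cast; ring, abs_mul]
      push_cast
      rw [abs_of_pos (by norm_num : (0:ℝ) < 2)]
      nlinarith [abs_nonneg (thetaN ρ n)]) (by positivity) hK0.le
    (by
      rw [im, im, im, Gp_Gp, Gp_comm]
      norm_num [Gp_zero]
      rw [abs_sub_comm p, ← hε, div_mul_cancel₀ _ hεpos.ne']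
      exact (Gstep_le H n p).trans A3)
    (by
      rw [im, im, im, Gp_Gp, Gp_comm, Gp_comm (n+1) n]
      norm_num [Gp_zero]
      linarith)).1
  have hF : ∀ x, f.O 1 0 x = f.F x := fun x => by
    have := f.O_nat 1 0 x
    simpa using this
  simp only [hF] at r
  have hℓ2 : ℓ ≤ 2 := by
    have t1 := theta_le_one H.irr H.mem n
    have e1 := h_int H p 2
    have e2 := h_int H p (-2)
    rw [abs_le] at t1
    have l1 : f.Gp ρ n 1 p < p + ((2:ℤ):ℝ) := h_lt H (by rw [e1, h_Gp H]; push_cast; linarith [t1.2])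
    have l2 : p + ((-2:ℤ):ℝ) < f.Gp ρ n 1 p := h_lt H (by rw [e2, h_Gp H]; push_cast; linarith [t1.1])
    push_cast at l1 l2
    rw [hℓ, abs_le]; constructor <;> linarith
  have w1 := (hpow _ hℓ2).1
  have w2 := (hpow (f.Gp ρ (n+1) (-1) p) (by linarith)).2
  have w3 : |f.Gp ρ (n+1) (-1) p - p| ≤ K * ε := by rw [abs_sub_comm]; exact A8'
  have w4 : |f.Gp ρ (n+1) (-1) p - p| ^ s ≤ (K * ε) ^ s :=
    Real.rpow_le_rpow (abs_nonneg _) w3 (by linarith)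
  rw [Real.mul_rpow hK0.le hεpos.le] at w4
  obtain ⟨r₀, hr₀⟩ : ∃ r₀, r₀ = ℓ / ε := ⟨_, rfl⟩
  have hr₀pos : 0 < r₀ := by rw [hr₀]; positivity
  have hℓr : ℓ = r₀ * ε := by rw [hr₀]; field_simp
  have hεs : 0 < ε ^ s := Real.rpow_pos_of_pos hεpos s
  have w5 : α * (r₀ ^ s * ε ^ s) ≤ D * r₀ * ε ^ s := by
    rw [← Real.mul_rpow hr₀pos.le hεpos.le, ← hℓr]
    refine w1.trans (r.trans ?_)
    have : |f.F (f.Gp ρ (n+1) (-1) p) - f.F p| ≤ β * (K ^ s * ε ^ s) :=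
      w2.trans (mul_le_mul_of_nonneg_left w4 hβ.le)
    refine (mul_le_mul_of_nonneg_left this (by positivity)).trans (le_of_eq ?_)
    rw [hD, mul_div_assoc, ← hr₀]; ring
  have w6 : α * r₀ ^ s ≤ D * r₀ := by
    rw [← mul_assoc] at w5
    exact le_of_mul_le_mul_right w5 hεs
  have w7 : r₀ ^ (s-1) ≤ D / α := by
    rw [Real.rpow_sub_one hr₀pos.ne', div_le_div_iff₀ hr₀pos hα]; linarith
  have w8 : r₀ ≤ (D/α) ^ (1/(s-1)) := by
    have := Real.rpow_le_rpow (by positivity) w7 (by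
      have : 0 < s - 1 := by linarith
      positivity : 0 ≤ 1/(s-1))
    rw [← Real.rpow_mul hr₀pos.le, mul_one_div_cancel (by linarith), Real.rpow_one] at this
    exact this
  rw [hℓr]
  exact mul_le_mul_of_nonneg_right (w8.trans (le_max_right _ _)) hεpos.le

end MCM

namespace MCM
variable {f : MCM} {ρ : ℝ} {h : ℝ → ℝ}

lemma spread1 (H : SC f ρ h) (p : ℝ) (hp : deriv f.F p = 0) : ∃ K, 1 ≤ K ∧ ∀ (n i : ℕ) (k : ℤ),
    i ≤ qDen ρ (n+1) →
    |f.Gp ρ n 1 (f.O i k p) - f.O i k p| ≤ K * |f.Gp ρ (n+1) 1 (f.O i k p) - f.O i k p| := by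
  obtain ⟨K, hK, hA⟩ := thmA2 H
  obtain ⟨B, hB, hpull⟩ := pull H 10 3
  obtain ⟨K', hK', hkey⟩ := key_crit H p hp
  refine ⟨(K * K' * K + 1) * K * B, ?_, ?_⟩
  · have h1 : 1 ≤ K * K' := by nlinarith
    have h2 : 1 ≤ K * K' * K := by nlinarith
    have h3 : 1 ≤ (K * K' * K + 1) * K := by nlinarith
    nlinarith
  intro n i k hi
  set y := f.O i k p with hy
  set e := f.Gp ρ (n+1) 1 p with he
  have im : f.O ((qDen ρ (n+1) - i : ℕ) : ℤ) (pNum ρ (n+1) - k) y = e := by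
    rw [hy, O_O, he, Gp, Nat.cast_sub hi]
    congr 1 <;> ring
  obtain ⟨s1, s2, s3⟩ := th_signs H n
  have o1 : Ord4 (f.Gp ρ (n+1) 1 y) y (f.Gp ρ n 1 y) (f.Gp ρ n 2 y) := by
    refine ord4_h H (t := thetaN ρ n) ?_ ?_ ?_ <;> simp only [h_Gp H] <;> push_cast <;> nlinarith
  have o2 : Ord4 (f.Gp ρ (n+1) 1 e) e (f.Gp ρ n 1 e) (f.Gp ρ n 2 e) := by
    refine ord4_h H (t := thetaN ρ n) ?_ ?_ ?_ <;> simp only [h_Gp H] <;> push_cast <;> nlinarith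
  obtain ⟨-, u1, u2, u3, u4, u5⟩ := o1.abs_ad
  obtain ⟨-, v1, v2, v3, v4, v5⟩ := o2.abs_ad
  have hK0 : 0 < K := by linarith
  have hK0' : 0 < K' := by linarith
  have r := (hpull n (qDen ρ (n+1) - i) (pNum ρ (n+1) - k) _ _ _ _ (K * K' * K + 1) K (by omega) o1
    (by
      rw [h_Gp H, h_Gp H]
      have a1 := theta_abs_lt H.irr H.mem n
      have a2 := abs_sub (2 * thetaN ρ n) (thetaN ρ (n+1))
      rw [abs_mul, abs_of_pos (by norm_num : (0:ℝ) < 2)] at a2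
      push_cast
      rw [show h y + 2 * thetaN ρ n - (h y + 1 * thetaN ρ (n+1))
        = 2 * thetaN ρ n - thetaN ρ (n+1) by ring]
      linarith) (by positivity) hK0.le
    (by
      rw [← Gp_O, ← Gp_O, im]
      have b1 := Gstep_le H n p
      have b2 := (hA n p).2.2.1
      have b3 := hkey n
      have b4 := (hA (n+1) p).2.2.2.2.2.1
      rw [← he] at b1 b3 b4
      have b5 : f.Gp ρ (n+1) 2 p = f.Gp ρ (n+1) 1 e := by rw [he, Gp_Gp]; norm_num
      rw [b5] at b4
      have b6 : |f.Gp ρ n 1 e - e| ≤ K * K' * K * |f.Gp ρ (n+1) 1 e - e| := by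
        calc _ ≤ _ := b1
          _ ≤ _ := b2
          _ ≤ K * (K' * (K * |f.Gp ρ (n+1) 1 e - e|)) := by
            refine mul_le_mul_of_nonneg_left (b3.trans ?_) hK0.le
            exact mul_le_mul_of_nonneg_left b4 hK0'.le
          _ = _ := by ring
      rw [v1, abs_sub_comm e]
      rw [abs_sub_comm e] at v1
      linarith)
    (by
      rw [← Gp_O, ← Gp_O, im]
      exact (hA n e).2.1)).1
  rw [abs_sub_comm (f.Gp ρ (n+1) 1 y)]
  linarith

lemma spread2 (H : SC f ρ h) (p : ℝ) (hp : deriv f.F p = 0) : ∃ K, 1 ≤ K ∧ ∀ (n i : ℕ) (k : ℤ),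
    i ≤ 2 * qDen ρ (n+1) →
    |f.Gp ρ n 1 (f.O i k p) - f.O i k p| ≤ K * |f.Gp ρ (n+1) 1 (f.O i k p) - f.O i k p| := by
  obtain ⟨K, hK, hA⟩ := thmA2 H
  obtain ⟨K', hK', hsp⟩ := spread1 H p hp
  have hK0 : 0 < K := by linarith
  have hK0' : 0 < K' := by linarith
  refine ⟨K * K' * K, ?_, ?_⟩
  · have h1 : 1 ≤ K * K' := by nlinarith
    nlinarith
  intro n i k hi
  by_cases hi2 : i ≤ qDen ρ (n+1)
  · refine (hsp n i k hi2).trans (mul_le_mul_of_nonneg_right ?_ (abs_nonneg _))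
    have : 1 ≤ K * K := by nlinarith
    nlinarith
  · push Not at hi2
    set y := f.O ((i - qDen ρ (n+1) : ℕ) : ℤ) (k - pNum ρ (n+1)) p with hy
    have e : f.O i k p = f.Gp ρ (n+1) 1 y := by
      rw [hy, Gp, O_O, Nat.cast_sub hi2.le]; congr 1 <;> ring
    have b0 := hsp n (i - qDen ρ (n+1)) (k - pNum ρ (n+1)) (by omega)
    rw [← hy] at b0
    rw [e]
    have b1 := Gstep_le H n y
    have b2 := (hA n y).2.2.1
    have b4 := (hA (n+1) y).2.2.2.2.2.1
    have e2 : f.Gp ρ (n+1) 1 (f.Gp ρ (n+1) 1 y) = f.Gp ρ (n+1) 2 y := by rw [Gp_Gp]; norm_num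
    rw [e2]
    calc _ ≤ _ := b1
      _ ≤ _ := b2
      _ ≤ K * (K' * (K * |f.Gp ρ (n+1) 2 y - f.Gp ρ (n+1) 1 y|)) := by
        refine mul_le_mul_of_nonneg_left (b0.trans ?_) hK0.le
        exact mul_le_mul_of_nonneg_left b4 hK0'.le
      _ = _ := by ring

lemma atomLen_eq (p : ℝ) (l j : ℕ) :
    atomLen f.F ρ p l j = |f.Gp ρ l 1 (f.O j 0 p) - f.O j 0 p| := by
  rw [Gp, O_O]
  have e1 : (1 * (qDen ρ l : ℤ) + (j:ℤ)) = ((j + qDen ρ l : ℕ) : ℤ) := by push_cast; ring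
  rw [e1, O_nat, O_nat]
  unfold atomLen
  simp

lemma idx_eq (H : SC f ρ h) (p : ℝ) {l₁ j₁ l₂ j₂ : ℕ}
    (hadj : AdjacentAtoms f.F ρ p l₁ j₁ l₂ j₂) :
    ¬(l₁ = l₂ ∧ j₁ = j₂) ∧ (j₁ = j₂ ∨ j₁ = j₂ + qDen ρ l₂ ∨ j₁ + qDen ρ l₁ = j₂ ∨
      j₁ + qDen ρ l₁ = j₂ + qDen ρ l₂) := by
  obtain ⟨hne, u, hu, w, hw, k, e⟩ := hadj
  refine ⟨fun hc => hne (by rw [hc.1, hc.2]), ?_⟩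
  have key : ∀ (a b : ℕ) (x y : ℤ), f.F^[b] p - y = f.F^[a] p - x + k → a = b := by
    intro a b x y hh
    rw [← O_nat, ← O_nat] at hh
    have := congrArg h hh
    rw [h_int H, h_O H, h_O H] at this
    by_contra hab
    refine H.irr ⟨((y + k - x : ℤ) : ℚ) / ((b - a : ℤ) : ℚ), ?_⟩
    have hba : ((b:ℝ) - a) ≠ 0 := by
      rw [sub_ne_zero]; exact fun hc => hab (Nat.cast_injective hc).symm
    push_cast at *
    rw [div_eq_iff hba]
    linarith
  simp only [atomEnds, mem_insert_iff, mem_singleton_iff] at hu hw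
  rcases hu with rfl | rfl <;> rcases hw with rfl | rfl
  · left; exact key _ _ 0 0 (by simpa using e)
  · right; left; exact key _ _ 0 (pNum ρ l₂) (by simpa using e)
  · right; right; left; exact key _ _ (pNum ρ l₁) 0 (by simpa using e)
  · right; right; right; exact key _ _ (pNum ρ l₁) (pNum ρ l₂) (by simpa using e)

lemma final_one (H : SC f ρ h) (p : ℝ) (hp : deriv f.F p = 0) : ∃ C, 1 < C ∧
    ∀ (n l₁ j₁ l₂ j₂ : ℕ), IsAtomIdx ρ n l₁ j₁ → IsAtomIdx ρ n l₂ j₂ →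
      AdjacentAtoms f.F ρ p l₁ j₁ l₂ j₂ →
      atomLen f.F ρ p l₂ j₂ ≤ C * atomLen f.F ρ p l₁ j₁ ∧
        atomLen f.F ρ p l₁ j₁ ≤ C * atomLen f.F ρ p l₂ j₂ := by
  obtain ⟨K, hK, hA⟩ := thmA2 H
  obtain ⟨K', hK', hsp⟩ := spread2 H p hp
  have hK0 : 0 < K := by linarith
  have hK0' : 0 < K' := by linarith
  obtain ⟨M, hM⟩ : ∃ M, M = K * K * K * K' := ⟨_, rfl⟩
  have hKK : 1 ≤ K * K := by nlinarith
  have hKKK : 1 ≤ K * K * K := by nlinarith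
  have c1 : K ≤ M := by
    rw [hM]; have : K ≤ K * K * K := by nlinarith
    nlinarith
  have c2 : K' ≤ M := by rw [hM]; nlinarith
  have c3 : K * K * K' ≤ M := by
    rw [hM]; have : K * K ≤ K * K * K := by nlinarith
    exact mul_le_mul_of_nonneg_right this hK0'.le
  have c4 : K * K * K ≤ M := by rw [hM]; nlinarith
  have hM1 : 1 ≤ M := by linarith
  -- same level
  have same : ∀ n j, atomLen f.F ρ p n (j + qDen ρ n) ≤ M * atomLen f.F ρ p n j ∧
      atomLen f.F ρ p n j ≤ M * atomLen f.F ρ p n (j + qDen ρ n) := by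
    intro n j
    obtain ⟨-, -, -, -, a5, a6, -, -⟩ := hA n (f.O j 0 p)
    have e : atomLen f.F ρ p n (j + qDen ρ n) =
        |f.Gp ρ n 2 (f.O j 0 p) - f.Gp ρ n 1 (f.O j 0 p)| := by
      rw [atomLen_eq]
      have e1 : f.O ((j + qDen ρ n : ℕ) : ℤ) 0 p = f.Gp ρ n 1 (f.O j 0 p) + pNum ρ n := by
        rw [Gp, O_O]
        have := f.O_shift (1 * (qDen ρ n : ℤ) + j) (1 * (pNum ρ n : ℤ) + 0) (-(pNum ρ n : ℤ)) p
        push_cast at this ⊢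
        rw [sub_neg_eq_add] at this
        rw [← this]
        congr 1 <;> ring
      have e2 : f.Gp ρ n 1 (f.O ((j + qDen ρ n : ℕ) : ℤ) 0 p)
          = f.Gp ρ n 2 (f.O j 0 p) + pNum ρ n := by
        rw [Gp, Gp, O_O, O_O]
        have := f.O_shift (2 * (qDen ρ n : ℤ) + j) (2 * (pNum ρ n : ℤ) + 0) (-(pNum ρ n : ℤ)) p
        push_cast at this ⊢
        rw [sub_neg_eq_add] at this
        rw [← this]
        congr 1 <;> ring
      rw [e1, ← e1, e2, e1, add_sub_add_right_eq_sub]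
    rw [e, atomLen_eq]
    exact ⟨a5.trans (mul_le_mul_of_nonneg_right c1 (abs_nonneg _)),
      a6.trans (mul_le_mul_of_nonneg_right c1 (abs_nonneg _))⟩
  have diff1 : ∀ n j, j ≤ 2 * qDen ρ (n+1) →
      atomLen f.F ρ p n j ≤ K' * atomLen f.F ρ p (n+1) j ∧
      atomLen f.F ρ p (n+1) j ≤ K * atomLen f.F ρ p n j := by
    intro n j hj
    rw [atomLen_eq, atomLen_eq]
    exact ⟨hsp n j 0 hj, (G_le H n _).trans (hA n _).2.2.1⟩
  have diff : ∀ n j₁ j₂, IsAtomIdx ρ n n j₁ → j₂ < qDen ρ n →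
      (j₁ = j₂ ∨ j₁ + qDen ρ n = j₂ + qDen ρ (n+1)) →
      atomLen f.F ρ p n j₁ ≤ M * M * M * atomLen f.F ρ p (n+1) j₂ ∧
      atomLen f.F ρ p (n+1) j₂ ≤ M * M * M * atomLen f.F ρ p n j₁ := by
    intro n j₁ j₂ hj₁ hj₂ hh
    have hq := (qDen_pos H.irr H.mem n).2
    have L0 : ∀ l j, 0 ≤ atomLen f.F ρ p l j := fun l j => abs_nonneg _
    have MM : M ≤ M * M * M := by nlinarith
    rcases hh with rfl | hh
    · have d := diff1 n j₁ (by omega)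
      exact ⟨d.1.trans (mul_le_mul_of_nonneg_right (c2.trans MM) (L0 _ _)),
        d.2.trans (mul_le_mul_of_nonneg_right (c1.trans MM) (L0 _ _))⟩
    · have s1 := same n j₁
      have s2 := same (n+1) j₂
      have d := diff1 n (j₁ + qDen ρ n) (by omega)
      rw [← hh] at s2
      have hM0 : 0 ≤ M := by linarith
      constructor
      · calc _ ≤ _ := s1.2
          _ ≤ M * (M * (M * atomLen f.F ρ p (n+1) j₂)) := by
            refine mul_le_mul_of_nonneg_left (d.1.trans ?_) hM0
            exact mul_le_mul c2 s2.1 (L0 _ _) hM0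
          _ = _ := by ring
      · calc _ ≤ _ := s2.2
          _ ≤ M * (M * (M * atomLen f.F ρ p n j₁)) := by
            refine mul_le_mul_of_nonneg_left (d.2.trans ?_) hM0
            exact mul_le_mul c1 s1.1 (L0 _ _) hM0
          _ = _ := by ring
  have MM : M ≤ M * M * M := by
    have : 1 ≤ M * M := by nlinarith
    nlinarith
  refine ⟨M * M * M + 1, by linarith, ?_⟩
  have L0 : ∀ l j, 0 ≤ atomLen f.F ρ p l j := fun l j => abs_nonneg _
  have fin : ∀ {l j l' j'}, atomLen f.F ρ p l j ≤ M * M * M * atomLen f.F ρ p l' j' →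
      atomLen f.F ρ p l j ≤ (M * M * M + 1) * atomLen f.F ρ p l' j' := fun hh =>
    hh.trans (mul_le_mul_of_nonneg_right (by linarith) (L0 _ _))
  have fin' : ∀ {l j l' j'}, atomLen f.F ρ p l j ≤ M * atomLen f.F ρ p l' j' →
      atomLen f.F ρ p l j ≤ (M * M * M + 1) * atomLen f.F ρ p l' j' := fun hh =>
    hh.trans (mul_le_mul_of_nonneg_right (by linarith) (L0 _ _))
  intro n l₁ j₁ l₂ j₂ h₁ h₂ hadj
  obtain ⟨hne, hidx⟩ := idx_eq H p hadj
  have hq := (qDen_pos H.irr H.mem n).2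
  rcases h₁ with ⟨rfl, h₁⟩ | ⟨rfl, h₁⟩ <;> rcases h₂ with ⟨e₂, h₂⟩ | ⟨e₂, h₂⟩ <;> subst e₂
  · rcases hidx with hh | hh | hh | hh
    · omega
    · subst hh; have := same l₂ j₂; exact ⟨fin' this.2, fin' this.1⟩
    · subst hh; have := same l₂ j₁; exact ⟨fin' this.1, fin' this.2⟩
    · omega
  · have := diff l₁ j₁ j₂ (Or.inl ⟨rfl, h₁⟩) h₂ (by omega)
    exact ⟨fin this.2, fin this.1⟩
  · have := diff l₂ j₂ j₁ (Or.inl ⟨rfl, h₂⟩) h₁ (by omega)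
    exact ⟨fin this.1, fin this.2⟩
  · omega

end MCM

/-- **Real a-priori bounds.** For a multicritical circle map `f` with
irrational rotation number `ρ`, there is `C > 1` depending only on `f` such that any
two adjacent atoms of any dynamical partition `P_n(c_k)` associated to a critical
point `c_k` have comparable lengths. -/
theorem real_a_priori_bounds
    (f : MCM) (ρ : ℝ) (hirr : Irrational ρ) (hmem : ρ ∈ Set.Ioo (0 : ℝ) 1)
    (hrot : HasRotationNumber f.F ρ) :
    ∃ C : ℝ, 1 < C ∧ ∀ (k : Fin f.N) (n ℓ₁ j₁ ℓ₂ j₂ : ℕ),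
      IsAtomIdx ρ n ℓ₁ j₁ → IsAtomIdx ρ n ℓ₂ j₂ →
      AdjacentAtoms f.F ρ (f.c k) ℓ₁ j₁ ℓ₂ j₂ →
      C⁻¹ * atomLen f.F ρ (f.c k) ℓ₂ j₂ ≤ atomLen f.F ρ (f.c k) ℓ₁ j₁ ∧
        atomLen f.F ρ (f.c k) ℓ₁ j₁ ≤ C * atomLen f.F ρ (f.c k) ℓ₂ j₂ := by
  obtain ⟨h, h1, h2, h3⟩ := f.semiconj hrot
  have H : SC f ρ h := ⟨hirr, hmem, h1, h2, h3⟩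
  choose C hC hCk using fun k : Fin f.N => MCM.final_one H (f.c k) (f.isCrit k)
  have hS : ∀ k, C k ≤ 1 + ∑ i, C i := fun k => by
    have := Finset.single_le_sum (f := C) (fun i _ => (zero_lt_one.trans (hC i)).le)
      (Finset.mem_univ k)
    linarith
  have hpos : 1 < 1 + ∑ i, C i := (hC ⟨0, f.N_pos⟩).trans_le (hS _)
  refine ⟨1 + ∑ i, C i, hpos, ?_⟩
  intro k n l₁ j₁ l₂ j₂ a b c
  obtain ⟨r1, r2⟩ := hCk k n l₁ j₁ l₂ j₂ a b c
  have L0 : ∀ l j, 0 ≤ atomLen f.F ρ (f.c k) l j := fun l j => abs_nonneg _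
  constructor
  · rw [inv_mul_le_iff₀ (by linarith)]
    exact r1.trans (mul_le_mul_of_nonneg_right (hS k) (L0 _ _))
  · exact r2.trans (mul_le_mul_of_nonneg_right (hS k) (L0 _ _))
end
end

section
/- Given a multicritical circle map f: S^1 → S^1, there exists a constant C > 1 depending only on f such that the following holds. If M_i compactly contained in T_i ⊂ S^1, with i running through a finite index set, are intervals on the circle such that the family {T_i} has multiplicity of intersection at most m (each point of S^1 belongs to at most m of the T_i), then the product over i of the cross-ratio distortions D(f; M_i, T_i) is at most C^m. -/
open Set Filter MeasureTheory

noncomputable section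

/-- The cross-ratio `b(M,T) = |L||R| / (|L ∪ M| |M ∪ R|)` of the pair of intervals
`M = [m₁, m₂] ⋐ T = [t₁, t₂]`. -/
def crossRatioB (t₁ m₁ m₂ t₂ : ℝ) : ℝ :=
  ((m₁ - t₁) * (t₂ - m₂)) / ((m₂ - t₁) * (t₂ - m₁))

/-- The cross-ratio distortion `D(f; M, T) = b(f(M), f(T)) / b(M, T)`. -/
def crDistortion (f : ℝ → ℝ) (t₁ m₁ m₂ t₂ : ℝ) : ℝ :=
  crossRatioB (f t₁) (f m₁) (f m₂) (f t₂) / crossRatioB t₁ m₁ m₂ t₂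


namespace CRI

lemma cr_of_slopes {F : ℝ → ℝ} (hF : StrictMono F) {t₁ m₁ m₂ t₂ A : ℝ}
    (h1 : t₁ < m₁) (h2 : m₁ < m₂) (h3 : m₂ < t₂) (hA : 0 ≤ A)
    (hl : (F m₁ - F t₁) * (m₂ - t₁) ≤ A * ((F m₂ - F t₁) * (m₁ - t₁)))
    (hr : (F t₂ - F m₂) * (t₂ - m₁) ≤ A * ((F t₂ - F m₁) * (t₂ - m₂))) :
    crDistortion F t₁ m₁ m₂ t₂ ≤ A * A := by
  have a1 := hF h1
  have a2 := hF h2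
  have a3 := hF h3
  have p1 : 0 < m₁ - t₁ := by linarith
  have p2 : 0 < t₂ - m₂ := by linarith
  have p3 : 0 < m₂ - t₁ := by linarith
  have p4 : 0 < t₂ - m₁ := by linarith
  have q1 : 0 < F m₁ - F t₁ := by linarith
  have q2 : 0 < F t₂ - F m₂ := by linarith
  have q3 : 0 < F m₂ - F t₁ := by linarith
  have q4 : 0 < F t₂ - F m₁ := by linarith
  unfold crDistortion crossRatioB
  rw [div_div_div_eq, div_le_iff₀ (by positivity)]
  have := mul_le_mul hl hr (by positivity) (by positivity)
  nlinarith [this]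

lemma cr_le_one {F : ℝ → ℝ} (hF : StrictMono F) {t₁ m₁ m₂ t₂ : ℝ}
    (h1 : t₁ < m₁) (h2 : m₁ < m₂) (h3 : m₂ < t₂)
    (h : (F m₁ - F t₁) * (F t₂ - F m₂) * ((m₂ - t₁) * (t₂ - m₁)) ≤
      (F m₂ - F t₁) * (F t₂ - F m₁) * ((m₁ - t₁) * (t₂ - m₂))) :
    crDistortion F t₁ m₁ m₂ t₂ ≤ 1 := by
  have a1 := hF h1
  have a2 := hF h2
  have a3 := hF h3
  have p1 : 0 < m₁ - t₁ := by linarith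
  have p2 : 0 < t₂ - m₂ := by linarith
  have q3 : 0 < F m₂ - F t₁ := by linarith
  have q4 : 0 < F t₂ - F m₁ := by linarith
  unfold crDistortion crossRatioB
  rw [div_div_div_eq, div_le_iff₀ (by positivity)]
  linarith

lemma cr_nonneg {F : ℝ → ℝ} (hF : StrictMono F) {t₁ m₁ m₂ t₂ : ℝ}
    (h1 : t₁ < m₁) (h2 : m₁ < m₂) (h3 : m₂ < t₂) :
    0 ≤ crDistortion F t₁ m₁ m₂ t₂ := by
  have a1 := hF h1
  have a2 := hF h2
  have a3 := hF h3
  have p1 : 0 < m₁ - t₁ := by linarith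
  have p2 : 0 < t₂ - m₂ := by linarith
  have p3 : 0 < m₂ - t₁ := by linarith
  have p4 : 0 < t₂ - m₁ := by linarith
  have q1 : 0 < F m₁ - F t₁ := by linarith
  have q2 : 0 < F t₂ - F m₂ := by linarith
  have q3 : 0 < F m₂ - F t₁ := by linarith
  have q4 : 0 < F t₂ - F m₁ := by linarith
  unfold crDistortion crossRatioB
  positivity

lemma F_int (f : MCM) (k : ℤ) (x : ℝ) : f.F (x + k) = f.F x + k := by
  have h : Function.Periodic (fun x => f.F x - x) 1 := by
    intro x
    simp only [f.deg1]
    ring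
  have := h.int_mul k x
  simp only [mul_one] at this
  linarith

lemma cr_shift (f : MCM) (k : ℤ) (t₁ m₁ m₂ t₂ : ℝ) :
    crDistortion f.F (t₁ + k) (m₁ + k) (m₂ + k) (t₂ + k) = crDistortion f.F t₁ m₁ m₂ t₂ := by
  simp only [crDistortion, crossRatioB, F_int, add_sub_add_right_eq_sub]

lemma deriv_int (f : MCM) (k : ℤ) (x : ℝ) : deriv f.F (x + k) = deriv f.F x := by
  rw [← deriv_comp_add_const]
  simp only [F_int]
  simp

lemma diff (f : MCM) : Differentiable ℝ f.F := f.smooth.differentiable (by norm_num)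

lemma cd1 (f : MCM) : ContDiff ℝ 2 (deriv f.F) := by
  have := f.smooth
  rw [show (3 : WithTop ℕ∞) = 2 + 1 by norm_num, contDiff_succ_iff_deriv] at this
  exact this.2.2

lemma cd2 (f : MCM) : ContDiff ℝ 1 (deriv (deriv f.F)) := by
  have := cd1 f
  rw [show (2 : WithTop ℕ∞) = 1 + 1 by norm_num, contDiff_succ_iff_deriv] at this
  exact this.2.2

lemma deriv_nonneg (f : MCM) (x : ℝ) : 0 ≤ deriv f.F x := f.mono.monotone.deriv_nonneg

/-- Compactness principle on the circle. -/
lemma leb (Q : ℝ → ℝ → ℝ → ℝ → Prop)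
    (hK : ∀ p K K' a b, K ≤ K' → a < b → Q p K a b → Q p K' a b)
    (hT : ∀ p K a b, Q p K a b → Q (p + 1) K (a + 1) (b + 1))
    (hloc : ∀ p ∈ Ico (0:ℝ) 1, ∃ ε > 0, ∃ K : ℝ, ∀ a b, a < b → p - ε < a → b < p + ε → Q p K a b) :
    ∃ (S : Finset ℝ) (δ K : ℝ), 0 < δ ∧ 0 ≤ K ∧
      ∀ a ∈ Ico (0:ℝ) 1, ∀ b, a < b → b < a + δ → ∃ p ∈ S, Q p K a b := by
  have hloc' : ∀ p ∈ Icc (0:ℝ) 1, ∃ ε > 0, ∃ K : ℝ, ∀ a b, a < b → p - ε < a → b < p + ε → Q p K a b := by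
    intro p hp
    rcases hp.2.lt_or_eq with h | h
    · exact hloc p ⟨hp.1, h⟩
    · obtain ⟨ε, he, K, h0⟩ := hloc 0 (by simp)
      refine ⟨ε, he, K, fun a b hab h1 h2 => ?_⟩
      have := hT _ _ _ _ (h0 (a - 1) (b - 1) (by linarith) (by linarith) (by linarith))
      simpa [h] using this
  choose! ε he K hQ using hloc'
  obtain ⟨S, hS, hcov⟩ := (isCompact_Icc (a := (0:ℝ)) (b := 1)).elim_nhds_subcover
    (fun p => Metric.ball p (ε p)) (fun p hp => Metric.ball_mem_nhds p (he p hp))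
  obtain ⟨δ, hδ, hleb⟩ := lebesgue_number_lemma_of_metric (ι := S) (c := fun p => Metric.ball p.1 (ε p.1))
    (isCompact_Icc (a := (0:ℝ)) (b := 1)) (fun _ => Metric.isOpen_ball)
    (by simpa [Set.iUnion_subtype] using hcov)
  refine ⟨S, δ, ∑ p ∈ S, |K p|, hδ, by positivity, fun a ha b hab hb => ?_⟩
  obtain ⟨⟨p, hp⟩, hsub⟩ := hleb a ⟨ha.1, ha.2.le⟩
  refine ⟨p, hp, hK p (K p) _ a b ?_ hab ?_⟩
  · exact (le_abs_self _).trans (Finset.single_le_sum (f := fun p => |K p|) (fun _ _ => abs_nonneg _) hp)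
  · have h1 := hsub (Metric.mem_ball_self hδ)
    have h2 := hsub (show b ∈ Metric.ball a δ by
      rw [Metric.mem_ball, Real.dist_eq, abs_lt]; constructor <;> linarith)
    simp only [Metric.mem_ball, Real.dist_eq, abs_lt] at h1 h2
    exact hQ p (hS p hp) a b hab (by linarith) (by linarith)

/-- Möbius comparison, left side. -/
lemma mob_left {F F' g : ℝ → ℝ} {a t p : ℝ} (hat : a < t) (hFat : F a < F t)
    (hF : ∀ x ∈ Icc a t, HasDerivAt F (F' x) x) (hg : ∀ x ∈ Icc a t, 0 < g x)
    (hFg : ∀ x ∈ Icc a t, F' x = (g x ^ 2)⁻¹)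
    (hl : ∀ x ∈ Icc a t, g t + p * (x - t) ≤ g x) :
    1 / (t - a) - p / g t ≤ F' t / (F t - F a) := by
  have gt := hg t ⟨hat.le, le_rfl⟩
  have hta : 0 < t - a := by linarith
  have hFt : 0 < F t - F a := by linarith
  have key : 1 / (t - a) - p / g t = (g t + p * (a - t)) / (g t * (t - a)) := by
    field_simp; ring
  rw [key, hFg t ⟨hat.le, le_rfl⟩]
  rcases le_or_gt (g t + p * (a - t)) 0 with h | h
  · exact (div_nonpos_of_nonpos_of_nonneg h (by positivity)).trans (by positivity)
  have hlpos : ∀ x ∈ Icc a t, 0 < g t + p * (x - t) := by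
    intro x hx
    rcases le_total p 0 with hp | hp
    · nlinarith [hx.2]
    · nlinarith [hx.1]
  let G : ℝ → ℝ := fun x => (x - t) / (g t * (g t + p * (x - t)))
  have hG : ∀ x ∈ Icc a t, HasDerivAt G (((g t + p * (x - t)) ^ 2)⁻¹) x := by
    intro x hx
    have h1 := (((hasDerivAt_id x).sub_const t).div
      (((((hasDerivAt_id x).sub_const t).const_mul p).const_add (g t)).const_mul (g t))
      (by have := hlpos x hx; simp only [id]; positivity))
    refine h1.congr_deriv ?_
    have := hlpos x hx
    simp only [id]
    field_simp
    ring
  have hmono : MonotoneOn (fun x => G x - F x) (Icc a t) := by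
    apply monotoneOn_of_hasDerivWithinAt_nonneg (convex_Icc a t)
      (f' := fun x => ((g t + p * (x - t)) ^ 2)⁻¹ - F' x)
    · intro x hx
      exact ((hG x hx).sub (hF x hx)).continuousAt.continuousWithinAt
    · intro x hx
      have hx := interior_subset hx
      exact ((hG x hx).sub (hF x hx)).hasDerivWithinAt
    · intro x hx
      have hx := interior_subset hx
      rw [hFg x hx, sub_nonneg]
      have := hlpos x hx
      gcongr
      exact hl x hx
  have := hmono ⟨le_rfl, hat.le⟩ ⟨hat.le, le_rfl⟩ hat.le
  simp only [G, sub_self, zero_div] at this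
  have h2 : F t - F a ≤ (t - a) / (g t * (g t + p * (a - t))) := by
    have e : (t - a) / (g t * (g t + p * (a - t))) = - ((a - t) / (g t * (g t + p * (a - t)))) := by
      rw [← neg_div]; ring_nf
    rw [e]; linarith
  rw [le_div_iff₀ (by positivity)] at h2
  rw [div_le_div_iff₀ (by positivity) hFt]
  have e2 : (g t ^ 2)⁻¹ * (g t * (t - a)) = (t - a) / g t := by field_simp
  rw [e2, le_div_iff₀ gt]
  linarith

lemma mob_right {F F' g : ℝ → ℝ} {d t p : ℝ} (hat : t < d) (hFat : F t < F d)
    (hF : ∀ x ∈ Icc t d, HasDerivAt F (F' x) x) (hg : ∀ x ∈ Icc t d, 0 < g x)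
    (hFg : ∀ x ∈ Icc t d, F' x = (g x ^ 2)⁻¹)
    (hl : ∀ x ∈ Icc t d, g t + p * (x - t) ≤ g x) :
    1 / (d - t) + p / g t ≤ F' t / (F d - F t) := by
  have := mob_left (F := fun x => - F (-x)) (F' := fun x => F' (-x)) (g := fun x => g (-x))
    (a := -d) (t := -t) (p := -p) (by linarith) (by simpa using hFat)
    (fun x hx => by
      have := ((hF (-x) ⟨by linarith [hx.2], by linarith [hx.1]⟩).scomp x (hasDerivAt_neg x)).neg
      refine this.congr_deriv ?_
      simp)
    (fun x hx => hg (-x) ⟨by linarith [hx.2], by linarith [hx.1]⟩)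
    (fun x hx => hFg (-x) ⟨by linarith [hx.2], by linarith [hx.1]⟩)
    (fun x hx => by
      have := hl (-x) ⟨by linarith [hx.2], by linarith [hx.1]⟩
      simp only [neg_neg]
      linarith)
  simp only [neg_neg] at this
  rw [show -t - -d = d - t by ring, show - F t - - F d = F d - F t by ring, neg_div] at this
  linarith

/-- Negative Schwarzian maps do not increase the cross-ratio. -/
lemma cr_schw (f : MCM) {a b c d : ℝ} (hab : a < b) (hbc : b < c) (hcd : c < d)
    (hpos : ∀ x ∈ Icc a d, 0 < deriv f.F x)
    (hS : ∀ x ∈ Icc a d, schwarzianDeriv f.F x ≤ 0) :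
    crDistortion f.F a b c d ≤ 1 := by
  set F := f.F with hFdef
  have hd0 : ∀ x, HasDerivAt F (deriv F x) x := fun x => (diff f x).hasDerivAt
  have hd1 : ∀ x, HasDerivAt (deriv F) (deriv (deriv F) x) x := fun x =>
    ((cd1 f).differentiable (by norm_num) x).hasDerivAt
  let q : ℝ → ℝ := fun y => deriv (deriv F) y / deriv F y
  have hq : ∀ x ∈ Icc a d, HasDerivAt q (deriv q x) x := fun x hx =>
    (((cd2 f).differentiable (by norm_num) x).div (hd1 x).differentiableAt (hpos x hx).ne').hasDerivAt
  let g : ℝ → ℝ := fun x => (Real.sqrt (deriv F x))⁻¹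
  have hgpos : ∀ x ∈ Icc a d, 0 < g x := fun x hx => by
    have := hpos x hx
    simp only [g]; positivity
  have hg : ∀ x ∈ Icc a d, HasDerivAt g (-(1/2) * (q x * g x)) x := by
    intro x hx
    have h0 := hpos x hx
    have h := ((hd1 x).sqrt h0.ne').inv (Real.sqrt_pos.2 h0).ne'
    refine h.congr_deriv ?_
    simp only [q, g]
    have hs := Real.sq_sqrt h0.le
    have hsp := Real.sqrt_pos.2 h0
    rw [hs]
    field_simp
  have hgm : MonotoneOn (fun x => -(1/2) * (q x * g x)) (Icc a d) := by
    have hder : ∀ x ∈ Icc a d, HasDerivAt (fun x => -(1/2) * (q x * g x))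
        (-(1/2) * (deriv q x * g x + q x * (-(1/2) * (q x * g x)))) x := fun x hx =>
      ((hq x hx).mul (hg x hx)).const_mul _
    apply monotoneOn_of_hasDerivWithinAt_nonneg (convex_Icc a d)
    · intro x hx
      exact (hder x hx).continuousAt.continuousWithinAt
    · intro x hx
      exact (hder x (interior_subset hx)).hasDerivWithinAt
    · intro x hx
      have hx := interior_subset hx
      have h1 := hS x hx
      have h2 := hgpos x hx
      have h3 : schwarzianDeriv F x = deriv q x - (1/2) * (q x) ^ 2 := rfl
      rw [h3] at h1
      nlinarith
  have htan : ∀ t ∈ Icc a d, ∀ x ∈ Icc a d, g t + (-(1/2) * (q t * g t)) * (x - t) ≤ g x := by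
    intro t ht x hx
    rcases lt_trichotomy x t with h | h | h
    · obtain ⟨ξ, hξ, he⟩ := exists_hasDerivAt_eq_slope g (fun x => -(1/2) * (q x * g x)) h
        (fun y hy => (hg y ⟨hx.1.trans hy.1, hy.2.trans ht.2⟩).continuousAt.continuousWithinAt)
        (fun y hy => (hg y ⟨hx.1.trans hy.1.le, hy.2.le.trans ht.2⟩))
      have := hgm ⟨hx.1.trans hξ.1.le, hξ.2.le.trans ht.2⟩ ht hξ.2.le
      simp only at he this
      rw [he, div_le_iff₀ (by linarith)] at this
      linarith
    · simp [h]
    · obtain ⟨ξ, hξ, he⟩ := exists_hasDerivAt_eq_slope g (fun x => -(1/2) * (q x * g x)) h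
        (fun y hy => (hg y ⟨ht.1.trans hy.1, hy.2.trans hx.2⟩).continuousAt.continuousWithinAt)
        (fun y hy => (hg y ⟨ht.1.trans hy.1.le, hy.2.le.trans hx.2⟩))
      have := hgm ht ⟨ht.1.trans hξ.1.le, hξ.2.le.trans hx.2⟩ hξ.1.le
      simp only at he this
      rw [he, le_div_iff₀ (by linarith)] at this
      linarith
  have hFg : ∀ x ∈ Icc a d, deriv F x = (g x ^ 2)⁻¹ := by
    intro x hx
    simp only [g, inv_pow, inv_inv]
    rw [Real.sq_sqrt (hpos x hx).le]
  let H : ℝ → ℝ := fun t => (Real.log (F t - F a) - Real.log (t - a)) -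
    (Real.log (F d - F t) - Real.log (d - t))
  have hH : MonotoneOn H (Icc b c) := by
    have hder : ∀ t ∈ Icc b c, HasDerivAt H ((deriv F t / (F t - F a) - 1 / (t - a)) -
        ((- deriv F t) / (F d - F t) - (-1) / (d - t))) t := by
      intro t ht
      have h1 : 0 < F t - F a := sub_pos.2 (f.mono (by linarith [ht.1]))
      have h2 : 0 < F d - F t := sub_pos.2 (f.mono (by linarith [ht.2]))
      have h3 : 0 < t - a := by linarith [ht.1]
      have h4 : 0 < d - t := by linarith [ht.2]
      exact ((((hd0 t).sub_const (F a)).log h1.ne').sub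
        (((hasDerivAt_id t).sub_const a).log h3.ne')).sub
        ((((hd0 t).const_sub (F d)).log h2.ne').sub
        (((hasDerivAt_id t).const_sub d).log h4.ne'))
    apply monotoneOn_of_hasDerivWithinAt_nonneg (convex_Icc b c)
    · intro x hx
      exact (hder x hx).continuousAt.continuousWithinAt
    · intro x hx
      exact (hder x (interior_subset hx)).hasDerivWithinAt
    · intro t ht
      have ht := interior_subset ht
      have hat : a < t := by linarith [ht.1]
      have htd : t < d := by linarith [ht.2]
      have htm : t ∈ Icc a d := ⟨hat.le, htd.le⟩
      have hL := mob_left (p := -(1/2) * (q t * g t)) hat (f.mono hat) (fun x _ => hd0 x)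
        (fun x hx => hgpos x ⟨hx.1, hx.2.trans htd.le⟩)
        (fun x hx => hFg x ⟨hx.1, hx.2.trans htd.le⟩)
        (fun x hx => htan t htm x ⟨hx.1, hx.2.trans htd.le⟩)
      have hR := mob_right (p := -(1/2) * (q t * g t)) htd (f.mono htd) (fun x _ => hd0 x)
        (fun x hx => hgpos x ⟨hat.le.trans hx.1, hx.2⟩)
        (fun x hx => hFg x ⟨hat.le.trans hx.1, hx.2⟩)
        (fun x hx => htan t htm x ⟨hat.le.trans hx.1, hx.2⟩)
      rw [neg_div, neg_div]
      simp only [← hFdef] at hL hR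
      linarith
  have := hH ⟨le_rfl, hbc.le⟩ ⟨hbc.le, le_rfl⟩ hbc.le
  have a1 : 0 < F b - F a := sub_pos.2 (f.mono hab)
  have a2 : 0 < F c - F a := sub_pos.2 (f.mono (hab.trans hbc))
  have a3 : 0 < F d - F b := sub_pos.2 (f.mono (hbc.trans hcd))
  have a4 : 0 < F d - F c := sub_pos.2 (f.mono hcd)
  have b1 : 0 < b - a := sub_pos.2 hab
  have b2 : 0 < c - a := sub_pos.2 (hab.trans hbc)
  have b3 : 0 < d - b := sub_pos.2 (hbc.trans hcd)
  have b4 : 0 < d - c := sub_pos.2 hcd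
  apply cr_le_one f.mono hab hbc hcd
  simp only [← hFdef]
  rw [← Real.log_le_log_iff (by positivity) (by positivity)]
  rw [Real.log_mul (by positivity) (by positivity), Real.log_mul (by positivity) (by positivity),
    Real.log_mul (by positivity) (by positivity), Real.log_mul (by positivity) (by positivity),
    Real.log_mul (by positivity) (by positivity), Real.log_mul (by positivity) (by positivity)]
  simp only [H] at this
  linarith

lemma mean_lb (f : MCM) {a b c : ℝ} (hab : a < b) (h : ∀ x ∈ Ioo a b, c ≤ deriv f.F x) :
    c * (b - a) ≤ f.F b - f.F a := by
  obtain ⟨ξ, hξ, he⟩ := exists_deriv_eq_slope f.F hab (diff f).continuous.continuousOn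
    (diff f).differentiableOn
  have := h ξ hξ
  rwa [he, le_div_iff₀ (by linarith)] at this

lemma crit_eq (f : MCM) {p : ℝ} (hp : p ∈ Ico (0:ℝ) 1) (h : deriv f.F p = 0) : ∃ i, p = f.c i := by
  obtain ⟨i, k, hk⟩ := f.critOnly p h
  have hc := f.c_mem i
  have h1 : (k : ℝ) < 1 := by linarith [hp.2, hc.1]
  have h2 : (-1 : ℝ) < k := by linarith [hp.1, hc.2]
  have h3 : k < 1 := by exact_mod_cast h1
  have h4 : -1 < k := by exact_mod_cast h2
  have : k = 0 := by omega
  exact ⟨i, by simpa [this] using hk⟩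

lemma locA (f : MCM) (p : ℝ) (hp : p ∈ Ico (0:ℝ) 1) : ∃ ε > 0, ∃ K : ℝ, ∀ a b, a < b → p - ε < a →
    b < p + ε → ∀ x ∈ Icc a b, deriv f.F x * (b - a) ≤ K * (f.F b - f.F a) := by
  rcases (deriv_nonneg f p).eq_or_lt with h0 | h0
  · obtain ⟨i, rfl⟩ := crit_eq f hp h0.symm
    obtain ⟨ε, he, hW⟩ := Metric.isOpen_iff.1 (f.W_open i) _ (f.c_mem_W i)
    set p := f.c i
    have hW' : ∀ x, p - ε < x → x < p + ε → x ∈ f.W i := fun x h1 h2 => hW (by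
      rw [Metric.mem_ball, Real.dist_eq, abs_lt]; constructor <;> linarith)
    have hs := f.s_gt_one i
    have hal := f.al_pos i
    have hbe : 0 < f.be i := hal.trans (f.al_lt_be i)
    set u := f.s i - 1 with hu
    have hu0 : 0 < u := by linarith
    refine ⟨ε, he, 4 * f.be i * 2 ^ u / f.al i, fun a b hab ha hb x hx => ?_⟩
    obtain ⟨r, hr0, hra, hrb, hlow⟩ : ∃ r : ℝ, 0 < r ∧ p - r ≤ a ∧ b ≤ p + r ∧
        f.al i * (r / 2) ^ u * ((b - a) / 4) ≤ f.F b - f.F a := by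
      rcases le_total (p - a) (b - p) with hc | hc
      · have hr : 0 < b - p := by linarith
        refine ⟨b - p, hr, by linarith, by linarith, ?_⟩
        have h1 := mean_lb f (a := b - (b - a) / 4) (b := b) (c := f.al i * ((b - p) / 2) ^ u)
          (by linarith) (fun y hy => by
            have hy1 : (b - p) / 2 ≤ y - p := by linarith [hy.1]
            have := (f.powerLaw i y (hW' y (by linarith [hy.1]) (by linarith [hy.2]))
              (by intro h; change y = p at h; linarith)).1
            refine le_trans ?_ this.le
            change _ ≤ f.al i * |y - p| ^ u
            rw [abs_of_nonneg (by linarith)]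
            gcongr)
        have h2 := f.mono.monotone (show a ≤ b - (b - a) / 4 by linarith)
        rw [show b - (b - (b - a) / 4) = (b - a) / 4 by ring] at h1
        linarith
      · have hr : 0 < p - a := by linarith
        refine ⟨p - a, hr, by linarith, by linarith, ?_⟩
        have h1 := mean_lb f (a := a) (b := a + (b - a) / 4) (c := f.al i * ((p - a) / 2) ^ u)
          (by linarith) (fun y hy => by
            have hy1 : (p - a) / 2 ≤ p - y := by linarith [hy.2]
            have := (f.powerLaw i y (hW' y (by linarith [hy.1]) (by linarith [hy.2]))
              (by intro h; change y = p at h; linarith)).1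
            refine le_trans ?_ this.le
            change _ ≤ f.al i * |y - p| ^ u
            rw [abs_of_nonpos (by linarith), neg_sub]
            gcongr)
        have h2 := f.mono.monotone (show a + (b - a) / 4 ≤ b by linarith)
        rw [show a + (b - a) / 4 - a = (b - a) / 4 by ring] at h1
        linarith
    have hup : deriv f.F x ≤ f.be i * r ^ u := by
      by_cases hxp : x = p
      · rw [hxp, ← h0]; positivity
      · have := (f.powerLaw i x (hW' x (by linarith [hx.1]) (by linarith [hx.2])) hxp).2
        refine this.le.trans ?_
        change f.be i * |x - p| ^ u ≤ _
        have : |x - p| ≤ r := abs_le.2 ⟨by linarith [hx.1], by linarith [hx.2]⟩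
        gcongr
    have hba : 0 < b - a := by linarith
    calc deriv f.F x * (b - a) ≤ f.be i * r ^ u * (b - a) := by gcongr
      _ = 4 * f.be i * 2 ^ u / f.al i * (f.al i * (r / 2) ^ u * ((b - a) / 4)) := by
        rw [Real.div_rpow hr0.le (by norm_num)]
        have : (0:ℝ) < 2 ^ u := by positivity
        field_simp
      _ ≤ _ := by gcongr
  · have hc : ContinuousAt (deriv f.F) p := (cd1 f).continuous.continuousAt
    obtain ⟨ε, he, hb⟩ := Metric.continuousAt_iff.1 hc (deriv f.F p / 2) (by positivity)
    have hb' : ∀ x, p - ε < x → x < p + ε → deriv f.F p / 2 ≤ deriv f.F x ∧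
        deriv f.F x ≤ 2 * deriv f.F p := by
      intro x h1 h2
      have := hb (x := x) (by rw [Real.dist_eq, abs_lt]; constructor <;> linarith)
      rw [Real.dist_eq, abs_lt] at this
      constructor <;> linarith [this.1, this.2]
    refine ⟨ε, he, 4, fun a b hab ha hb x hx => ?_⟩
    have h1 := mean_lb f hab (c := deriv f.F p / 2)
      (fun y hy => (hb' y (by linarith [hy.1]) (by linarith [hy.2])).1)
    have h2 := (hb' x (by linarith [hx.1]) (by linarith [hx.2])).2
    nlinarith

lemma reduce01 (a : ℝ) : ∃ k : ℤ, a + k ∈ Ico (0:ℝ) 1 :=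
  ⟨-⌊a⌋, by push_cast; constructor <;> linarith [Int.floor_le a, Int.lt_floor_add_one a]⟩

lemma globA (f : MCM) : ∃ K : ℝ, 0 ≤ K ∧ ∀ a b, a < b → b - a < 1 →
    ∀ x ∈ Icc a b, deriv f.F x * (b - a) ≤ K * (f.F b - f.F a) := by
  obtain ⟨S, δ, K, hδ, hK, h⟩ := leb
    (fun _ K a b => ∀ x ∈ Icc a b, deriv f.F x * (b - a) ≤ K * (f.F b - f.F a))
    (fun p K K' a b hKK hab h x hx => (h x hx).trans
      (mul_le_mul_of_nonneg_right hKK (by linarith [f.mono hab])))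
    (fun p K a b h x hx => by
      have := h (x - 1) ⟨by linarith [hx.1], by linarith [hx.2]⟩
      have e := deriv_int f 1 (x - 1)
      simp only [Int.cast_one, sub_add_cancel] at e
      rw [f.deg1, f.deg1, e]
      linarith)
    (locA f)
  -- long intervals
  obtain ⟨y, hy, hmin⟩ := (isCompact_Icc (a := (0:ℝ)) (b := 1)).exists_isMinOn ⟨0, by simp⟩
    (f := fun x => f.F (x + δ) - f.F x)
    (by have := (diff f).continuous; fun_prop)
  obtain ⟨z, hz, hmax⟩ := (isCompact_Icc (a := (0:ℝ)) (b := 1)).exists_isMaxOn ⟨0, by simp⟩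
    (f := deriv f.F) (cd1 f).continuous.continuousOn
  have hη : 0 < f.F (y + δ) - f.F y := sub_pos.2 (f.mono (by linarith))
  set η := f.F (y + δ) - f.F y
  have hB := deriv_nonneg f z
  refine ⟨K + deriv f.F z / η, by positivity, fun a b hab hlt x hx => ?_⟩
  have hFab := f.mono hab
  rcases lt_or_ge (b - a) δ with hs | hs
  · obtain ⟨k, hk⟩ := reduce01 a
    obtain ⟨p, -, hp⟩ := h (a + k) hk (b + k) (by linarith) (by linarith)
    have := hp (x + k) ⟨by linarith [hx.1], by linarith [hx.2]⟩
    rw [deriv_int, F_int, F_int] at this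
    have h2 : 0 ≤ deriv f.F z / η * (f.F b - f.F a) := mul_nonneg (by positivity) (by linarith)
    linarith
  · have h1 : η ≤ f.F b - f.F a := by
      obtain ⟨k, hk⟩ := reduce01 a
      have := isMinOn_iff.1 hmin (a + k) ⟨hk.1, hk.2.le⟩
      rw [show a + k + δ = a + δ + k by ring, F_int, F_int] at this
      have h3 := f.mono.monotone (show a + δ ≤ b by linarith)
      change η ≤ _ at this
      linarith
    have h2 : deriv f.F x ≤ deriv f.F z := by
      obtain ⟨k, hk⟩ := reduce01 x
      have := isMaxOn_iff.1 hmax (x + k) ⟨hk.1, hk.2.le⟩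
      rwa [deriv_int] at this
    have h4 : 0 ≤ K * (f.F b - f.F a) := mul_nonneg hK (by linarith)
    have h5 : deriv f.F z ≤ deriv f.F z / η * (f.F b - f.F a) := by
      rw [div_mul_eq_mul_div, le_div_iff₀ hη]
      gcongr
    have h6 : deriv f.F x * (b - a) ≤ deriv f.F z := by
      have := deriv_nonneg f x
      nlinarith
    linarith

lemma cr_of_bound (f : MCM) {A t₁ m₁ m₂ t₂ : ℝ} (hA : 0 ≤ A)
    (h1 : t₁ < m₁) (h2 : m₁ < m₂) (h3 : m₂ < t₂)
    (h : ∀ a b, t₁ ≤ a → b ≤ t₂ → a < b → ∀ x ∈ Icc a b,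
      deriv f.F x * (b - a) ≤ A * (f.F b - f.F a)) :
    crDistortion f.F t₁ m₁ m₂ t₂ ≤ A * A := by
  apply cr_of_slopes f.mono h1 h2 h3 hA
  · obtain ⟨ξ, hξ, he⟩ := exists_deriv_eq_slope f.F h1 (diff f).continuous.continuousOn
      (diff f).differentiableOn
    rw [eq_div_iff (by linarith)] at he
    have := h t₁ m₂ le_rfl h3.le (by linarith) ξ ⟨hξ.1.le, by linarith [hξ.2]⟩
    rw [← he]
    have := mul_le_mul_of_nonneg_right this (show 0 ≤ m₁ - t₁ by linarith)
    linarith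
  · obtain ⟨ξ, hξ, he⟩ := exists_deriv_eq_slope f.F h3 (diff f).continuous.continuousOn
      (diff f).differentiableOn
    rw [eq_div_iff (by linarith)] at he
    have := h m₁ t₂ h1.le le_rfl (by linarith) ξ ⟨by linarith [hξ.1], hξ.2.le⟩
    rw [← he]
    have := mul_le_mul_of_nonneg_right this (show 0 ≤ t₂ - m₂ by linarith)
    linarith

lemma locC (f : MCM) (p : ℝ) (hp : p ∈ Ico (0:ℝ) 1) : ∃ ε > 0, ∃ K : ℝ, ∀ a b, a < b → p - ε < a →
    b < p + ε → p ∉ Icc a b → ∀ m₁ m₂, a < m₁ → m₁ < m₂ → m₂ < b →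
      crDistortion f.F a m₁ m₂ b ≤ Real.exp (K * (b - a)) := by
  rcases (deriv_nonneg f p).eq_or_lt with h0 | h0
  · obtain ⟨i, rfl⟩ := crit_eq f hp h0.symm
    obtain ⟨ε, he, hW⟩ := Metric.isOpen_iff.1 (f.W_open i) _ (f.c_mem_W i)
    have hW' : ∀ x, f.c i - ε < x → x < f.c i + ε → x ∈ f.W i := fun x h1 h2 => hW (by
      rw [Metric.mem_ball, Real.dist_eq, abs_lt]; constructor <;> linarith)
    refine ⟨ε, he, 0, fun a b hab ha hb hpab m₁ m₂ h1 h2 h3 => ?_⟩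
    have hne : ∀ x ∈ Icc a b, x ≠ f.c i := fun x hx h => hpab (h ▸ hx)
    have hxW : ∀ x ∈ Icc a b, x ∈ f.W i := fun x hx =>
      hW' x (by linarith [hx.1]) (by linarith [hx.2])
    simp only [zero_mul, Real.exp_zero]
    apply cr_schw f h1 h2 h3
    · intro x hx
      refine lt_of_le_of_lt ?_ (f.powerLaw i x (hxW x hx) (hne x hx)).1
      have := f.al_pos i
      positivity
    · exact fun x hx => (f.negSchwarzian i x (hxW x hx) (hne x hx)).le
  · have hcd : ContDiffAt ℝ 1 (fun x => Real.log (deriv f.F x)) p :=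
      ((cd1 f).contDiffAt.of_le (by norm_num)).log h0.ne'
    obtain ⟨K, s, hs, hLip⟩ := hcd.exists_lipschitzOnWith
    have hev : ∀ᶠ x in nhds p, x ∈ s ∧ 0 < deriv f.F x :=
      Filter.Eventually.and hs ((cd1 f).continuous.continuousAt.eventually (lt_mem_nhds h0))
    obtain ⟨ε, he, hb⟩ := Metric.eventually_nhds_iff.1 hev
    have hb' : ∀ x, p - ε < x → x < p + ε → x ∈ s ∧ 0 < deriv f.F x := fun x h1 h2 => hb (by
      rw [Real.dist_eq, abs_lt]; constructor <;> linarith)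
    refine ⟨ε, he, 2 * K, fun a b hab ha hb _ m₁ m₂ h1 h2 h3 => ?_⟩
    rw [show 2 * (K:ℝ) * (b - a) = K * (b - a) + K * (b - a) by ring, Real.exp_add]
    apply cr_of_bound f (Real.exp_pos _).le h1 h2 h3
    intro a' b' ha' hb1 hab' x hx
    obtain ⟨ξ, hξ, heq⟩ := exists_deriv_eq_slope f.F hab' (diff f).continuous.continuousOn
      (diff f).differentiableOn
    rw [eq_div_iff (by linarith)] at heq
    rw [← heq, ← mul_assoc]
    have hba : 0 ≤ b' - a' := by linarith
    gcongr
    obtain ⟨x1, x2⟩ := hb' x (by linarith [hx.1]) (by linarith [hx.2])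
    obtain ⟨y1, y2⟩ := hb' ξ (by linarith [hξ.1]) (by linarith [hξ.2])
    have := hLip.dist_le_mul x x1 ξ y1
    rw [Real.dist_eq, Real.dist_eq] at this
    have hd : |x - ξ| ≤ b - a := abs_le.2 ⟨by linarith [hx.1, hξ.2], by linarith [hx.2, hξ.1]⟩
    have h5 : Real.log (deriv f.F x) ≤ K * (b - a) + Real.log (deriv f.F ξ) := by
      have h6 := (le_abs_self _).trans this
      have h7 : (K:ℝ) * |x - ξ| ≤ K * (b - a) := by gcongr
      linarith
    rw [Real.log_le_iff_le_exp x2, Real.exp_add, Real.exp_log y2] at h5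
    exact h5

lemma sum_len {ι : Type} [Fintype ι] (t₁ t₂ : ι → ℝ) (m : ℕ)
    (h : ∀ i, t₁ i < t₂ i ∧ t₂ i - t₁ i < 1)
    (hm : ∀ x : ℝ, {i : ι | ∃ k : ℤ, x + (k : ℝ) ∈ Set.Icc (t₁ i) (t₂ i)}.ncard ≤ m) :
    ∑ i, (t₂ i - t₁ i) ≤ m := by
  classical
  let E : ι → Set ℝ := fun i => {x | ∃ k : ℤ, x + (k : ℝ) ∈ Set.Icc (t₁ i) (t₂ i)}
  have hE : ∀ i, MeasurableSet (E i) := by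
    intro i
    have : E i = ⋃ k : ℤ, (fun x => x + (k : ℝ)) ⁻¹' Set.Icc (t₁ i) (t₂ i) := by
      ext x; simp only [E, Set.mem_ofPred_eq, Set.mem_iUnion, Set.mem_preimage]
    rw [this]
    exact MeasurableSet.iUnion fun k => (measurable_id.add_const _) measurableSet_Icc
  let φ : ι → ℝ → ℝ := fun i => (E i).indicator (fun _ => 1)
  have hφ0 : ∀ i x, 0 ≤ φ i x := fun i x => Set.indicator_nonneg (fun _ _ => zero_le_one) x
  have hint : ∀ i a b, IntervalIntegrable (φ i) volume a b := by
    intro i a b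
    have : IntervalIntegrable (fun _ => (1:ℝ)) volume a b := intervalIntegrable_const
    exact ⟨this.1.indicator (hE i), this.2.indicator (hE i)⟩
  have hper : ∀ i, Function.Periodic (φ i) 1 := by
    intro i x
    have : x + 1 ∈ E i ↔ x ∈ E i := by
      constructor
      · rintro ⟨k, hk⟩
        exact ⟨k + 1, by push_cast; rwa [show x + (k + 1 : ℝ) = x + 1 + k by ring]⟩
      · rintro ⟨k, hk⟩
        exact ⟨k - 1, by push_cast; rwa [show x + 1 + (k - 1 : ℝ) = x + k by ring]⟩
    simp only [φ, Set.indicator_apply, this]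
  have hge : ∀ i, t₂ i - t₁ i ≤ ∫ x in (0:ℝ)..1, φ i x := by
    intro i
    have e := (hper i).intervalIntegral_add_eq 0 (t₁ i)
    rw [zero_add] at e
    rw [e, ← intervalIntegral.integral_add_adjacent_intervals (hint i (t₁ i) (t₂ i)) (hint i _ _)]
    have h1 : ∫ x in (t₁ i)..(t₂ i), φ i x = ∫ x in (t₁ i)..(t₂ i), (1:ℝ) := by
      apply intervalIntegral.integral_congr
      intro x hx
      rw [Set.uIcc_of_le (h i).1.le] at hx
      exact Set.indicator_of_mem (show x ∈ E i from ⟨0, by simpa using hx⟩) _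
    have h2 : 0 ≤ ∫ x in (t₂ i)..(t₁ i + 1), φ i x :=
      intervalIntegral.integral_nonneg (by linarith [(h i).2]) (fun x _ => hφ0 i x)
    rw [h1, intervalIntegral.integral_const]
    simpa using h2
  calc ∑ i, (t₂ i - t₁ i) ≤ ∑ i, ∫ x in (0:ℝ)..1, φ i x := Finset.sum_le_sum fun i _ => hge i
    _ = ∫ x in (0:ℝ)..1, ∑ i, φ i x :=
      (intervalIntegral.integral_finsetSum fun i _ => hint i 0 1).symm
    _ ≤ ∫ x in (0:ℝ)..1, (m:ℝ) := by
      apply intervalIntegral.integral_mono_on zero_le_one _ intervalIntegrable_const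
      · intro x _
        have := hm x
        have e : ∑ i, φ i x = (({i : ι | x ∈ E i}).ncard : ℝ) := by
          simp only [φ, Set.indicator_apply, Finset.sum_boole]
          rw [Set.ncard_eq_toFinset_card']
          congr 2
          ext; simp
        rw [e]
        exact_mod_cast this
      · have := IntervalIntegrable.sum Finset.univ (fun i _ => hint i 0 1)
        have e : (fun x => ∑ i, φ i x) = ∑ i, φ i := by
          ext x
          simp
        rw [e]
        exact this
    _ = m := by simp

end CRI

/-- **Cross-Ratio Inequality.** For a multicritical circle map `f` there is
`C > 1` depending only on `f` such that for any finite family of interval pairs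
`M_i ⋐ T_i` on the circle whose `T_i` have multiplicity of intersection at most `m`,
the product of the cross-ratio distortions is at most `C ^ m`. -/
theorem cross_ratio_inequality (f : MCM) :
    ∃ C : ℝ, 1 < C ∧
      ∀ (ι : Type) [Fintype ι] (t₁ m₁ m₂ t₂ : ι → ℝ) (m : ℕ),
        (∀ i, t₁ i < m₁ i ∧ m₁ i < m₂ i ∧ m₂ i < t₂ i ∧ t₂ i - t₁ i < 1) →
        (∀ x : ℝ, {i : ι | ∃ k : ℤ, x + (k : ℝ) ∈ Set.Icc (t₁ i) (t₂ i)}.ncard ≤ m) →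
        ∏ i, crDistortion f.F (t₁ i) (m₁ i) (m₂ i) (t₂ i) ≤ C ^ m := by
  classical
  obtain ⟨K, hK, hA⟩ := CRI.globA f
  obtain ⟨S, δ, L, hδ, hL, hC⟩ := CRI.leb
    (fun p K a b => p ∉ Icc a b → ∀ m₁ m₂, a < m₁ → m₁ < m₂ → m₂ < b →
      crDistortion f.F a m₁ m₂ b ≤ Real.exp (K * (b - a)))
    (fun p K K' a b hKK hab h hp m₁ m₂ h1 h2 h3 => (h hp m₁ m₂ h1 h2 h3).trans
      (Real.exp_le_exp.2 (mul_le_mul_of_nonneg_right hKK (by linarith))))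
    (fun p K a b h hp m₁ m₂ h1 h2 h3 => by
      have := h (fun hp' => hp ⟨by linarith [hp'.1], by linarith [hp'.2]⟩) (m₁ - 1) (m₂ - 1)
        (by linarith) (by linarith) (by linarith)
      have e := CRI.cr_shift f 1 a (m₁ - 1) (m₂ - 1) b
      simp only [Int.cast_one, sub_add_cancel] at e
      rw [e]
      simpa using this)
    (CRI.locC f)
  obtain ⟨n, hn⟩ := exists_nat_gt (1 / δ)
  have hn0 : (0:ℝ) < n := lt_trans (by positivity) hn
  -- the marked points: local centres and a grid of mesh `1/n < δ`
  let G : Finset ℝ := S ∪ (Finset.range n).image (fun j : ℕ => (j : ℝ) / n)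
  let B : ℝ := K * K + 1
  have hB : 1 ≤ B := by simp only [B]; nlinarith
  let P : ℝ → Set ℝ → Prop := fun p T => ∃ k : ℤ, p + (k : ℝ) ∈ T
  have hpt : ∀ t₁ m₁ m₂ t₂ : ℝ, t₁ < m₁ → m₁ < m₂ → m₂ < t₂ → t₂ - t₁ < 1 →
      crDistortion f.F t₁ m₁ m₂ t₂ ≤ Real.exp (L * (t₂ - t₁)) *
        ∏ p ∈ G, (if P p (Icc t₁ t₂) then B else 1) := by
    intro t₁ m₁ m₂ t₂ h1 h2 h3 h4
    have hexp : 1 ≤ Real.exp (L * (t₂ - t₁)) :=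
      Real.one_le_exp (mul_nonneg hL (by linarith))
    have hone : ∀ p ∈ G, 1 ≤ (if P p (Icc t₁ t₂) then B else 1) := by
      intro p _
      split_ifs
      · exact hB
      · exact le_rfl
    by_cases hex : ∃ p ∈ G, P p (Icc t₁ t₂)
    · obtain ⟨p, hpG, hp⟩ := hex
      have hD : crDistortion f.F t₁ m₁ m₂ t₂ ≤ K * K :=
        CRI.cr_of_bound f hK h1 h2 h3 fun a b ha hb hab x hx => hA a b hab (by linarith) x hx
      have h5 : B ≤ ∏ p ∈ G, (if P p (Icc t₁ t₂) then B else 1) := by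
        rw [← Finset.mul_prod_erase _ _ hpG, if_pos hp]
        refine le_mul_of_one_le_right (by linarith) ?_
        exact Finset.prod_induction _ (fun y => (1:ℝ) ≤ y)
          (fun _ _ => one_le_mul_of_one_le_of_one_le) le_rfl
          (fun q hq => hone q (Finset.mem_of_mem_erase hq))
      have h6 : crDistortion f.F t₁ m₁ m₂ t₂ ≤ B := by simp only [B]; linarith
      nlinarith
    · push Not at hex
      rw [Finset.prod_eq_one fun p hp => if_neg (hex p hp), mul_one]
      have hshort : t₂ - t₁ < δ := by
        by_contra hlong
        push Not at hlong
        have hnd : 1 < n * (t₂ - t₁) := by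
          rw [div_lt_iff₀ hδ] at hn
          exact hn.trans_le (by gcongr)
        have hnz : (n : ℤ) ≠ 0 := by
          have : n ≠ 0 := by rintro rfl; simp at hn0
          exact_mod_cast this
        have hnp : (0 : ℤ) < n := by exact_mod_cast hn0
        let z : ℤ := ⌈n * t₁⌉
        have hz1 : n * t₁ ≤ z := Int.le_ceil _
        have hz2 : (z : ℝ) < n * t₁ + 1 := Int.ceil_lt_add_one _
        have hmod := Int.emod_nonneg z hnz
        have hmod2 := Int.emod_lt_of_pos z hnp
        have hzz := Int.emod_add_mul_ediv z n
        have hcast : (((z % n).toNat : ℕ) : ℝ) = ((z % n : ℤ) : ℝ) := by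
          exact_mod_cast Int.toNat_of_nonneg hmod
        refine hex (((z % n).toNat : ℕ) / (n : ℝ)) ?_ ⟨z / n, ?_⟩
        · refine Finset.mem_union_right _ (Finset.mem_image.2 ⟨(z % n).toNat, ?_, rfl⟩)
          rw [Finset.mem_range]
          omega
        · have e : (((z % n).toNat : ℕ) : ℝ) / n + ((z / n : ℤ) : ℝ) = z / n := by
            rw [hcast]
            have : (z : ℝ) = ((z % n : ℤ) : ℝ) + n * ((z / n : ℤ) : ℝ) := by exact_mod_cast hzz.symm
            rw [this]
            field_simp
          rw [e]
          constructor
          · rw [le_div_iff₀ hn0]; linarith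
          · rw [div_le_iff₀ hn0]; linarith
      obtain ⟨k, hk⟩ := CRI.reduce01 t₁
      obtain ⟨p, hpS, hp⟩ := hC (t₁ + k) hk (t₂ + k) (by linarith) (by linarith)
      have := hp (fun hmem => hex p (Finset.mem_union_left _ hpS)
        ⟨-k, by push_cast; constructor <;> linarith [hmem.1, hmem.2]⟩) (m₁ + k) (m₂ + k)
        (by linarith) (by linarith) (by linarith)
      rw [CRI.cr_shift] at this
      simpa using this
  refine ⟨Real.exp (L + 1) * B ^ G.card, ?_, ?_⟩
  · have h1 : 1 < Real.exp (L + 1) := Real.one_lt_exp_iff.2 (by linarith)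
    have h2 : 1 ≤ B ^ G.card := one_le_pow₀ hB
    nlinarith
  intro ι _ t₁ m₁ m₂ t₂ m hT hm
  have hlen := CRI.sum_len t₁ t₂ m
    (fun i => ⟨by linarith [(hT i).1, (hT i).2.1, (hT i).2.2.1], (hT i).2.2.2⟩) hm
  calc ∏ i, crDistortion f.F (t₁ i) (m₁ i) (m₂ i) (t₂ i)
      ≤ ∏ i, (Real.exp (L * (t₂ i - t₁ i)) *
        ∏ p ∈ G, (if P p (Icc (t₁ i) (t₂ i)) then B else 1)) :=
        Finset.prod_le_prod
          (fun i _ => CRI.cr_nonneg f.mono (hT i).1 (hT i).2.1 (hT i).2.2.1)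
          (fun i _ => hpt _ _ _ _ (hT i).1 (hT i).2.1 (hT i).2.2.1 (hT i).2.2.2)
    _ = Real.exp (L * ∑ i, (t₂ i - t₁ i)) *
        ∏ p ∈ G, ∏ i, (if P p (Icc (t₁ i) (t₂ i)) then B else 1) := by
        rw [Finset.prod_mul_distrib, Finset.prod_comm, ← Real.exp_sum, Finset.mul_sum]
    _ ≤ Real.exp ((L + 1) * m) * ∏ p ∈ G, B ^ m := by
        have hm0 : (0:ℝ) ≤ m := Nat.cast_nonneg m
        have hB0 : ∀ p, 0 ≤ ∏ i, (if P p (Icc (t₁ i) (t₂ i)) then B else 1) := fun p =>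
          Finset.prod_nonneg fun i _ => by split_ifs <;> linarith
        refine mul_le_mul (Real.exp_le_exp.2 (by nlinarith)) (Finset.prod_le_prod
          (fun p _ => hB0 p) fun p hp => ?_) (Finset.prod_nonneg fun p _ => hB0 p)
          (Real.exp_pos _).le
        · rw [Finset.prod_ite, Finset.prod_const, Finset.prod_const_one, mul_one]
          apply pow_le_pow_right₀ hB
          refine le_trans (le_of_eq ?_) (hm p)
          rw [Set.ncard_eq_toFinset_card']
          congr 1
          ext; simp [P]
    _ = (Real.exp (L + 1) * B ^ G.card) ^ m := by
        rw [Finset.prod_const, mul_pow, ← Real.exp_nat_mul, mul_comm (m:ℝ), ← pow_mul, ← pow_mul,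
          mul_comm m]
end
end
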